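/- Let j be a positive real number. Then the following are equivalent: (a) rank_ℤ E^{(D)}(ℚ) < 2j for every nonzero integer D (i.e., for every nonzero integer D there is no ℤ-linearly independent family of ⌈2j⌉ points in the abelian group E^{(D)}(ℚ)); (b) Q_E(j,k) converges for some real k ≥ 1; (c) Q_E(j,k) converges for every real k ≥ 1. -/

import Mathlib

noncomputable section

/-- `F(u,v) = v·(u³ + au²v + buv² + cv³) = v⁴ f(u/v)`. -/
def Fbin (a b c u v : ℤ) : ℤ := v * (u^3 + a*u^2*v + b*u*v^2 + c*v^3)

/-- `Ψ = {(u,v) ∈ ℤ² : gcd(u,v) = 1 and F(u,v) ≠ 0}`. -/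
def Psi (a b c : ℤ) : Set (ℤ × ℤ) := {p | Int.gcd p.1 p.2 = 1 ∧ Fbin a b c p.1 p.2 ≠ 0}

/-- `h(u/v) = max(1, log|u|, log|v|)` for coprime `u, v`. -/
def ht (u v : ℤ) : ℝ := max 1 (max (Real.log |(u : ℝ)|) (Real.log |(v : ℝ)|))

/-- the polynomial `f(x) = x³ + ax² + bx + c` has three distinct complex roots. -/
def DistinctRoots (a b c : ℤ) : Prop :=
  ∃ r₁ r₂ r₃ : ℂ, r₁ ≠ r₂ ∧ r₁ ≠ r₃ ∧ r₂ ≠ r₃ ∧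
    ∀ z : ℂ, z^3 + a*z^2 + b*z + c = (z - r₁) * (z - r₂) * (z - r₃)

/-- `sq` is a squarefree-part function: for nonzero `n`, `sq n` is squarefree and
`n = sq n · m²` for some rational `m`. -/
def IsSqfreePart (sq : ℤ → ℤ) : Prop :=
  ∀ n : ℤ, n ≠ 0 → Squarefree (sq n) ∧ ∃ m : ℚ, (n : ℚ) = sq n * m^2

/-- the general term `|s(F(u,v))|^{-k} · h(u/v)^{-j}` of `S_E(j,k)`. -/
def STerm (a b c : ℤ) (sq : ℤ → ℤ) (j k : ℝ) (p : ℤ × ℤ) : ℝ :=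
  |(sq (Fbin a b c p.1 p.2) : ℝ)| ^ (-k) * ht p.1 p.2 ^ (-j)

/-- index set of `S_E(j,k,X)`: `(u,v) ∈ Ψ` with `u/v ∈ X`. -/
def SIdx (a b c : ℤ) (X : Set ℝ) : Set (ℤ × ℤ) :=
  {p | p ∈ Psi a b c ∧ ((p.1 : ℝ) / (p.2 : ℝ)) ∈ X}

/-- `S_E(j,k,X)` converges. -/
def SConv (a b c : ℤ) (sq : ℤ → ℤ) (j k : ℝ) (X : Set ℝ) : Prop :=
  Summable fun p : SIdx a b c X => STerm a b c sq j k p.1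

/-- index set of `R_E(j,k,X)`: `t ≥ 1`, `(u,v) ∈ Ψ`, `u/v ∈ X`, `t² ∣ F(u,v)`. -/
def RIdx (a b c : ℤ) (X : Set ℝ) : Set (ℕ × ℤ × ℤ) :=
  {q | 1 ≤ q.1 ∧ q.2 ∈ Psi a b c ∧ ((q.2.1 : ℝ) / (q.2.2 : ℝ)) ∈ X ∧
    (q.1 : ℤ)^2 ∣ Fbin a b c q.2.1 q.2.2}

/-- the general term `t^{2k} · |F(u,v)|^{-k} · h(u/v)^{-j}` of `R_E(j,k)`. -/
def RTerm (a b c : ℤ) (j k : ℝ) (q : ℕ × ℤ × ℤ) : ℝ :=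
  (q.1 : ℝ) ^ (2*k) * |(Fbin a b c q.2.1 q.2.2 : ℝ)| ^ (-k) * ht q.2.1 q.2.2 ^ (-j)

/-- `R_E(j,k,X)` converges. -/
def RConv (a b c : ℤ) (j k : ℝ) (X : Set ℝ) : Prop :=
  Summable fun q : RIdx a b c X => RTerm a b c j k q.1

/-- `Ω_d = {α ∈ ℤ/d²ℤ : f(α) ≡ 0 (mod d²)}`. -/
def OmegaSet (a b c : ℤ) (d : ℕ) : Set (ZMod (d^2)) :=
  {α | α^3 + (a : ZMod (d^2))*α^2 + (b : ZMod (d^2))*α + (c : ZMod (d^2)) = 0}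

/-- the lattice `L_{α,d,d'} = {(u,v) : u ≡ αv (mod d²), v ≡ 0 (mod d'²)}`. -/
def latL (d d' : ℕ) (α : ZMod (d^2)) : Set (ℤ × ℤ) :=
  {p | ((p.1 : ZMod (d^2)) = α * (p.2 : ZMod (d^2))) ∧ ((d' : ℤ))^2 ∣ p.2}

/-- `ω` is a choice, for coprime `d, d' ≥ 1` and `α ∈ Ω_d`, of a shortest nonzero
vector `ω_{α,d,d'}` of the lattice `L_{α,d,d'}` for the Euclidean norm. -/
def IsShortestChoice (a b c : ℤ) (ω : (d d' : ℕ) → ZMod (d^2) → ℤ × ℤ) : Prop :=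
  ∀ d d' : ℕ, 0 < d → 0 < d' → Nat.Coprime d d' → ∀ α ∈ OmegaSet a b c d,
    ω d d' α ∈ latL d d' α ∧ ω d d' α ≠ 0 ∧
    ∀ p ∈ latL d d' α, p ≠ 0 →
      (ω d d' α).1^2 + (ω d d' α).2^2 ≤ p.1^2 + p.2^2

/-- index set of `Q_E(j,k)`: coprime `d, d' ≥ 1`, `α ∈ Ω_d`, `ω_{α,d,d'} ∈ Ψ`. -/
def QIdx (a b c : ℤ) (ω : (d d' : ℕ) → ZMod (d^2) → ℤ × ℤ) :
    Set (Σ d : ℕ, ℕ × ZMod (d^2)) :=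
  {x | 0 < x.1 ∧ 0 < x.2.1 ∧ Nat.Coprime x.1 x.2.1 ∧ x.2.2 ∈ OmegaSet a b c x.1 ∧
    ω x.1 x.2.1 x.2.2 ∈ Psi a b c}

/-- the general term `(dd')^{2k} · max(1, log(dd'))^{-j} · ‖ω_{α,d,d'}‖^{-4k}` of `Q_E(j,k)`. -/
def QTerm (j k : ℝ) (ω : (d d' : ℕ) → ZMod (d^2) → ℤ × ℤ)
    (x : Σ d : ℕ, ℕ × ZMod (d^2)) : ℝ :=
  ((x.1 : ℝ) * (x.2.1 : ℝ)) ^ (2*k) * max 1 (Real.log ((x.1 : ℝ) * (x.2.1 : ℝ))) ^ (-j) *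
    Real.sqrt (((ω x.1 x.2.1 x.2.2).1 : ℝ)^2 + ((ω x.1 x.2.1 x.2.2).2 : ℝ)^2) ^ (-(4*k))

/-- `Q_E(j,k)` converges. -/
def QConv (a b c : ℤ) (j k : ℝ) (ω : (d d' : ℕ) → ZMod (d^2) → ℤ × ℤ) : Prop :=
  Summable fun x : QIdx a b c ω => QTerm j k ω x.1

/-- the quadratic twist `E^{(D)} : Dy² = f(x)`, in Weierstrass form
`y² = x³ + aDx² + bD²x + cD³` (isomorphic via `(x,y) ↦ (Dx, D²y)`). -/
def twist (a b c D : ℤ) : WeierstrassCurve.Affine ℚ :=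
  { a₁ := 0, a₂ := a*D, a₃ := 0, a₄ := b*D^2, a₆ := c*D^3 }

/-- `rank_ℤ E^{(D)}(ℚ) < 2j` for every nonzero integer `D`: there is no
ℤ-linearly independent family of `⌈2j⌉` rational points on `E^{(D)}`. -/
def RankBound (a b c : ℤ) (j : ℝ) : Prop :=
  ∀ D : ℤ, D ≠ 0 →
    ¬ ∃ P : Fin ⌈2*j⌉₊ → (twist a b c D).Point, LinearIndependent ℤ P

/-- `X ⊆ ℝ` is broad: open, and meets both `(e_max, ∞)` and `(-∞, e_min)`. -/
def Broad (a b c : ℤ) (X : Set ℝ) : Prop :=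
  IsOpen X ∧ (∃ x ∈ X, ∀ r : ℝ, r^3 + a*r^2 + b*r + c = 0 → r < x) ∧
    (∃ x ∈ X, ∀ r : ℝ, r^3 + a*r^2 + b*r + c = 0 → x < r)

/-- the set of triples `(α, d, d')` with `d, d'` coprime positive integers,
`dd' = t`, and `α ∈ Ω_d`. -/
def TripSet (a b c : ℤ) (t : ℕ) : Set (Σ d : ℕ, ℕ × ZMod (d^2)) :=
  {x | 0 < x.1 ∧ 0 < x.2.1 ∧ Nat.Coprime x.1 x.2.1 ∧ x.1 * x.2.1 = t ∧
    x.2.2 ∈ OmegaSet a b c x.1}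

end


/-! abstract groups with heights -/

theorem canon_height {A : Type*} [AddCommGroup A] (h : A → ℝ) (C : ℝ) (h0 : h 0 = 0)
    (hn : ∀ P, 0 ≤ h P)
    (hq : ∀ P Q, |h (P+Q) + h (P-Q) - 2 * h P - 2 * h Q| ≤ C) :
    ∃ H : A → ℝ, (∀ P, 0 ≤ H P) ∧ (∀ P Q, H (P+Q) + H (P-Q) = 2 * H P + 2 * H Q) ∧
      ∀ P, |H P - h P| ≤ C := by
  have hC : 0 ≤ C := (abs_nonneg _).trans (hq 0 0)
  have h2 : ∀ P, |h ((2:ℕ) • P) - 4 * h P| ≤ C := by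
    intro P
    have := hq P P
    rw [sub_self, h0, ← two_nsmul] at this
    convert this using 2
    ring
  let s : A → ℕ → ℝ := fun P n => h ((2^n : ℕ) • P) / 4^n
  have hs : ∀ P n, dist (s P n) (s P (n+1)) ≤ C / 4 * (1/4:ℝ)^n := by
    intro P n
    have := h2 ((2^n : ℕ) • P)
    rw [smul_smul, ← pow_succ'] at this
    rw [dist_comm, Real.dist_eq]
    have e : s P (n+1) - s P n = (h ((2^(n+1) : ℕ) • P) - 4 * h ((2^n:ℕ) • P)) / 4^(n+1) := by
      simp only [s]; field_simp; ring
    rw [e, abs_div, abs_of_pos (by positivity : (0:ℝ) < 4^(n+1)), div_le_iff₀ (by positivity)]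
    refine this.trans (le_of_eq ?_)
    rw [pow_succ]; field_simp; rw [mul_assoc, ← mul_pow]; norm_num
  have hcs : ∀ P, CauchySeq (s P) := fun P =>
    cauchySeq_of_le_geometric (1/4:ℝ) (C/4) (by norm_num) (hs P)
  choose H hH using fun P => cauchySeq_tendsto_of_complete (hcs P)
  refine ⟨H, fun P => ge_of_tendsto' (hH P) fun n => div_nonneg (hn _) (by positivity), ?_, ?_⟩
  · intro P Q
    have t1 := ((hH (P+Q)).add (hH (P-Q))).sub (((hH P).const_mul 2).add ((hH Q).const_mul 2))
    have t2 : Filter.Tendsto (fun n : ℕ => C * (1/4:ℝ)^n) Filter.atTop (nhds 0) := by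
      have := (tendsto_pow_atTop_nhds_zero_of_lt_one (r := (1/4:ℝ)) (by norm_num) (by norm_num)).const_mul C
      simpa using this
    have := squeeze_zero_norm (fun n => ?_) t2 (f := fun n => s (P+Q) n + s (P-Q) n - (2 * s P n + 2 * s Q n))
    · have := tendsto_nhds_unique t1 this
      linarith
    · have := hq ((2^n:ℕ) • P) ((2^n:ℕ) • Q)
      rw [← nsmul_add, ← nsmul_sub] at this
      have e : s (P+Q) n + s (P-Q) n - (2 * s P n + 2 * s Q n) =
        (h ((2^n:ℕ) • (P+Q)) + h ((2^n:ℕ) • (P-Q)) - 2 * h ((2^n:ℕ) • P) - 2 * h ((2^n:ℕ) • Q)) * (1/4:ℝ)^n := by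
        simp only [s, one_div, inv_pow]; field_simp; ring
      rw [e, norm_mul, Real.norm_eq_abs, Real.norm_eq_abs, abs_of_pos (by positivity : (0:ℝ) < (1/4)^n)]
      exact mul_le_mul_of_nonneg_right this (by positivity)
  · intro P
    have := dist_le_of_le_geometric_of_tendsto₀ (1/4:ℝ) (C/4) (by norm_num) (hs P) (hH P)
    rw [dist_comm, Real.dist_eq] at this
    have e : s P 0 = h P := by simp [s]
    rw [e] at this
    refine this.trans ?_
    linarith [show C / 4 / (1 - 1/4) = C/3 by ring]

section quad
variable {A : Type*} [AddCommGroup A] {H : A → ℝ}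

/-- exact quadratic height -/
structure IsQuad {A : Type*} [AddCommGroup A] (H : A → ℝ) : Prop where
  nn : ∀ P, 0 ≤ H P
  par : ∀ P Q, H (P+Q) + H (P-Q) = 2 * H P + 2 * H Q

theorem IsQuad.zero (h : IsQuad H) : H 0 = 0 := by
  have := h.par 0 0
  simp at this; linarith

theorem IsQuad.neg (h : IsQuad H) (P : A) : H (-P) = H P := by
  have := h.par 0 P
  have := h.zero
  simp at *; linarith

theorem IsQuad.nsmul (h : IsQuad H) (P : A) (n : ℕ) : H (n • P) = n^2 * H P := by
  induction n using Nat.strong_induction_on with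
  | _ n ih =>
    match n with
    | 0 => simp [h.zero]
    | 1 => simp
    | n+2 =>
      have := h.par ((n+1) • P) P
      rw [ih (n+1) (by omega)] at this
      have e : (n+1) • P - P = n • P := by rw [succ_nsmul]; abel
      have e2 : (n+1) • P + P = (n+2) • P := by rw [← succ_nsmul]
      rw [e, e2, ih n (by omega)] at this
      push_cast at *
      linarith

theorem IsQuad.zsmul (h : IsQuad H) (P : A) (n : ℤ) : H (n • P) = n^2 * H P := by
  obtain ⟨m, rfl | rfl⟩ := n.eq_nat_or_neg
  · rw [natCast_zsmul, h.nsmul]; simp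
  · rw [neg_smul, h.neg, natCast_zsmul, h.nsmul]; simp

theorem IsQuad.add_le (h : IsQuad H) (P Q : A) : H (P+Q) ≤ 2 * H P + 2 * H Q := by
  have := h.par P Q
  linarith [h.nn (P-Q)]

theorem IsQuad.sub_le (h : IsQuad H) (P Q : A) : H (P-Q) ≤ 2 * H P + 2 * H Q := by
  have := h.par P Q
  linarith [h.nn (P+Q)]

theorem IsQuad.tors (h : IsQuad H) {T : A} (hT : IsOfFinAddOrder T) : H T = 0 := by
  obtain ⟨n, hn, hT⟩ := isOfFinAddOrder_iff_nsmul_eq_zero.1 hT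
  have := h.nsmul T n
  rw [hT, h.zero] at this
  have hn' : (n:ℝ)^2 ≠ 0 := by positivity
  simpa [hn'] using this.symm

theorem IsQuad.add_tors (h : IsQuad H) (P : A) {T : A} (hT : IsOfFinAddOrder T) : H (P + T) = H P := by
  obtain ⟨n, hn, hT⟩ := isOfFinAddOrder_iff_nsmul_eq_zero.1 hT
  have := h.nsmul (P+T) n
  rw [nsmul_add, hT, add_zero, h.nsmul] at this
  have hn' : (n:ℝ)^2 ≠ 0 := by positivity
  exact (mul_left_cancel₀ hn' this).symm

theorem IsQuad.of_sub_tors (h : IsQuad H) {P Q : A} (hT : IsOfFinAddOrder (P - Q)) : H P = H Q := by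
  have := h.add_tors Q hT
  rwa [add_sub_cancel] at this

theorem IsQuad.sum_le (h : IsQuad H) {r : ℕ} (P : Fin r → A) : H (∑ i, P i) ≤ 2^r * ∑ i, H (P i) := by
  induction r with
  | zero => simp [h.zero]
  | succ r ih =>
    rw [Fin.sum_univ_succ, Fin.sum_univ_succ, pow_succ]
    have h1 := h.add_le (P 0) (∑ i : Fin r, P i.succ)
    have h2 := ih (fun i => P i.succ)
    have h3 : (1:ℝ) ≤ 2^r := one_le_pow₀ (by norm_num)
    have := h.nn (P 0)
    nlinarith

end quad

theorem exists_gens {A : Type*} [AddCommGroup A] {r : ℕ}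
    (hr : ¬ ∃ P : Fin (r+1) → A, LinearIndependent ℤ P) (S : Finset A) :
    ∃ s ≤ r, ∃ e : Fin s → A, ∀ P ∈ S, ∃ z : Fin s → ℤ, IsOfFinAddOrder (P - ∑ i, z i • e i) := by
  classical
  let G : Submodule ℤ A := Submodule.span ℤ (S : Set A)
  have : Module.Finite ℤ G := Module.Finite.span_finset ℤ S
  let T := Submodule.torsion ℤ G
  let M := G ⧸ T
  have : Module.Free ℤ M := Module.free_of_finite_type_torsion_free'
  let b := Module.finBasis ℤ M
  choose e he using fun i => Submodule.mkQ_surjective T (b i)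
  have hli : LinearIndependent ℤ e := by
    apply LinearIndependent.of_comp T.mkQ
    have : (T.mkQ ∘ e) = b := funext he
    rw [this]; exact b.linearIndependent
  have hli2 : LinearIndependent ℤ (fun i => (e i : A)) := hli.map' G.subtype (by simp)
  refine ⟨Module.finrank ℤ M, ?_, fun i => e i, ?_⟩
  · by_contra hlt
    push Not at hlt
    exact hr ⟨_, hli2.comp (Fin.castLE hlt) (Fin.castLE_injective hlt)⟩
  · intro P hP
    let P' : G := ⟨P, Submodule.subset_span hP⟩
    refine ⟨fun i => b.repr (T.mkQ P') i, ?_⟩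
    have h1 : T.mkQ (P' - ∑ i, (b.repr (T.mkQ P') i) • e i) = 0 := by
      rw [map_sub, map_sum]
      simp only [map_smul, he]
      rw [b.sum_repr, sub_self]
    rw [Submodule.mkQ_apply, Submodule.Quotient.mk_eq_zero] at h1
    obtain ⟨n, hn⟩ := h1
    rw [isOfFinAddOrder_iff_zsmul_eq_zero]
    refine ⟨n, nonZeroDivisors.ne_zero n.2, ?_⟩
    have := congrArg (Subtype.val) hn
    simpa [P', Submonoid.smul_def] using this

theorem count_le {A : Type*} [AddCommGroup A] {H : A → ℝ} (hH : IsQuad H) {r : ℕ}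
    (hr : ¬ ∃ P : Fin (r+1) → A, LinearIndependent ℤ P) {m : ℝ}
    (hm : ∀ P, H P < m → IsOfFinAddOrder P) {K : ℕ}
    (hK : ∀ S : Finset A, (∀ P ∈ S, IsOfFinAddOrder P) → S.card ≤ K)
    {B : ℝ} {N : ℕ} (hN : 4 * B < N^2 * m) (hN0 : 1 ≤ N) (S : Finset A) (hS : ∀ P ∈ S, H P ≤ B) :
    S.card ≤ K * N^r := by
  classical
  have : NeZero N := ⟨by omega⟩
  obtain ⟨s, hs, e, he⟩ := exists_gens hr S
  choose! z hz using he
  let φ : A → (Fin s → ZMod N) := fun P i => (z P i : ZMod N)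
  have h1 : S.card ≤ K * (Finset.univ : Finset (Fin s → ZMod N)).card := by
    refine Finset.card_le_mul_card_image_of_maps_to (f := φ) (fun _ _ => Finset.mem_univ _) K ?_
    intro y _
    set S' := S.filter (fun P => φ P = y)
    rcases S'.eq_empty_or_nonempty with h | ⟨Q, hQ⟩
    · rw [h]; simp
    · have hQ' := Finset.mem_filter.1 hQ
      have := hK (S'.image (fun P => P - Q)) ?_
      · rwa [Finset.card_image_of_injective _ (fun a b h => by simpa using h)] at this
      intro P hP
      obtain ⟨P, hP₂, rfl⟩ := Finset.mem_image.1 hP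
      have hP' := Finset.mem_filter.1 hP₂
      have hd : ∀ i, ∃ w : ℤ, z P i - z Q i = N * w := by
        intro i
        have := congrFun (hP'.2.trans hQ'.2.symm) i
        exact (ZMod.intCast_eq_intCast_iff_dvd_sub _ _ _).1 this.symm
      choose w hw using hd
      have e1 : (P - Q) - (N:ℤ) • (∑ i, w i • e i) =
          (P - ∑ i, z P i • e i) - (Q - ∑ i, z Q i • e i) := by
        have : (N:ℤ) • (∑ i, w i • e i) = ∑ i, z P i • e i - ∑ i, z Q i • e i := by
          rw [Finset.smul_sum, ← Finset.sum_sub_distrib]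
          refine Finset.sum_congr rfl fun i _ => ?_
          rw [smul_smul, ← hw i, sub_smul]
        rw [this]; abel
      have t1 : IsOfFinAddOrder ((P - Q) - (N:ℤ) • (∑ i, w i • e i)) := by
        rw [e1, sub_eq_add_neg]
        exact (hz P hP'.1).add (hz Q hQ'.1).neg
      have h2 := hH.of_sub_tors t1
      rw [hH.zsmul] at h2
      have h3 := hH.sub_le P Q
      have h4 := hS P hP'.1
      have h5 := hS Q hQ'.1
      have h6 : IsOfFinAddOrder (∑ i, w i • e i) := by
        apply hm
        have hNp : (0:ℝ) < (N:ℝ)^2 := by positivity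
        have : (N:ℝ)^2 * H (∑ i, w i • e i) < N^2 * m := by
          have : (((N:ℤ):ℝ))^2 * H (∑ i, w i • e i) ≤ 4 * B := by rw [← h2]; linarith
          push_cast at this; linarith
        exact lt_of_mul_lt_mul_left this hNp.le
      have := t1.add (h6.zsmul (i := (N:ℤ)))
      simpa using this
  refine h1.trans (Nat.mul_le_mul_left _ ?_)
  rw [Finset.card_univ, Fintype.card_fun, ZMod.card, Fintype.card_fin]
  exact Nat.pow_le_pow_right hN0 hs


/-! twist API -/

theorem disc_ne {a b c : ℤ} (hf : DistinctRoots a b c) :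
    a^2*b^2 - 4*b^3 - 4*a^3*c - 27*c^2 + 18*a*b*c ≠ 0 := by
  obtain ⟨r, s, t, h1, h2, h3, h⟩ := hf
  have e0 := h 0
  have e1 := h 1
  have e2 := h (-1)
  have ha : (a:ℂ) = -(r+s+t) := by linear_combination (1/2) * e1 + (1/2)*e2 - e0
  have hb : (b:ℂ) = r*s+r*t+s*t := by linear_combination (1/2) * e1 - (1/2)*e2
  have hc : (c:ℂ) = -(r*s*t) := by linear_combination e0
  intro h0
  have : ((a^2*b^2 - 4*b^3 - 4*a^3*c - 27*c^2 + 18*a*b*c : ℤ):ℂ) = 0 := by rw [h0]; simp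
  push_cast at this
  rw [ha, hb, hc] at this
  have e : ((r-s)*(r-t)*(s-t))^2 = 0 := by linear_combination this
  have := pow_eq_zero_iff (two_ne_zero) |>.1 e
  simp [sub_eq_zero, h1, h2, h3] at this

theorem twist_elliptic {a b c : ℤ} (hf : DistinctRoots a b c) {D : ℤ} (hD : D ≠ 0) :
    (twist a b c D).IsElliptic := by
  constructor
  rw [isUnit_iff_ne_zero]
  have h := disc_ne hf
  have e : (twist a b c D).Δ = ((16 * D^6 * (a^2*b^2 - 4*b^3 - 4*a^3*c - 27*c^2 + 18*a*b*c) : ℤ) : ℚ) := by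
    simp only [WeierstrassCurve.Δ, WeierstrassCurve.b₂, WeierstrassCurve.b₄, WeierstrassCurve.b₆, WeierstrassCurve.b₈, twist]
    push_cast
    ring
  rw [e]
  norm_cast
  simp [hD, h]

section tw
variable {a b c D : ℤ}

theorem tw_eq_iff {X Y : ℚ} : (twist a b c D).Equation X Y ↔ Y^2 = X^3 + a*D*X^2 + b*D^2*X + c*D^3 := by
  rw [WeierstrassCurve.Affine.equation_iff]
  simp [twist]

theorem tw_ns (hf : DistinctRoots a b c) (hD : D ≠ 0) {X Y : ℚ}
    (h : Y^2 = X^3 + a*D*X^2 + b*D^2*X + c*D^3) : (twist a b c D).Nonsingular X Y := by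
  have := twist_elliptic hf hD
  exact WeierstrassCurve.Affine.equation_iff_nonsingular.1 (tw_eq_iff.2 h)

theorem tw_eq {X Y : ℚ} (h : (twist a b c D).Nonsingular X Y) :
    Y^2 = X^3 + a*D*X^2 + b*D^2*X + c*D^3 := tw_eq_iff.1 h.1

theorem tw_negY (X Y : ℚ) : (twist a b c D).negY X Y = -Y := by
  simp [WeierstrassCurve.Affine.negY, twist]

theorem tw_neg {X Y : ℚ} (h : (twist a b c D).Nonsingular X Y) :
    ∃ h', -(WeierstrassCurve.Affine.Point.some X Y h) = .some X (-Y) h' := by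
  have h' : (twist a b c D).Nonsingular X (-Y) := by
    have := (WeierstrassCurve.Affine.nonsingular_neg X Y).2 h
    rwa [tw_negY] at this
  refine ⟨h', ?_⟩
  rw [WeierstrassCurve.Affine.Point.neg_some]
  simp [twist]

theorem tw_add {X₁ Y₁ X₂ Y₂ : ℚ} (h₁ : (twist a b c D).Nonsingular X₁ Y₁)
    (h₂ : (twist a b c D).Nonsingular X₂ Y₂) (hX : X₁ ≠ X₂) :
    ∃ Y h, (WeierstrassCurve.Affine.Point.some X₁ Y₁ h₁) + .some X₂ Y₂ h₂ =
      .some (((Y₁ - Y₂)/(X₁ - X₂))^2 - a*D - X₁ - X₂) Y h := by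
  have e := WeierstrassCurve.Affine.Point.add_of_X_ne (h₁ := h₁) (h₂ := h₂) hX
  have e2 : (twist a b c D).addX X₁ X₂ ((twist a b c D).slope X₁ X₂ Y₁ Y₂) =
      ((Y₁ - Y₂)/(X₁ - X₂))^2 - a*D - X₁ - X₂ := by
    rw [WeierstrassCurve.Affine.slope_of_X_ne hX, WeierstrassCurve.Affine.addX]
    simp [twist]
  rw [e, ← e2]
  exact ⟨_, _, rfl⟩

theorem tw_dbl {X Y : ℚ} (h : (twist a b c D).Nonsingular X Y) (hY : Y ≠ 0) :
    ∃ Y' h', (WeierstrassCurve.Affine.Point.some X Y h) + .some X Y h =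
      .some (((3*X^2+2*a*D*X+b*D^2)/(2*Y))^2 - a*D - X - X) Y' h' := by
  have hy : Y ≠ (twist a b c D).negY X Y := by
    rw [tw_negY]; intro h; apply hY; linarith
  have e := WeierstrassCurve.Affine.Point.add_self_of_Y_ne (h₁ := h) hy
  have e2 : (twist a b c D).addX X X ((twist a b c D).slope X X Y Y) =
      ((3*X^2+2*a*D*X+b*D^2)/(2*Y))^2 - a*D - X - X := by
    rw [WeierstrassCurve.Affine.slope_of_Y_ne rfl hy, WeierstrassCurve.Affine.addX, tw_negY]
    simp only [twist]; ring
  rw [e, ← e2]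
  exact ⟨_, _, rfl⟩

theorem tw_dbl0 {X : ℚ} (h : (twist a b c D).Nonsingular X 0) :
    (WeierstrassCurve.Affine.Point.some X 0 h) + .some X 0 h = 0 :=
  WeierstrassCurve.Affine.Point.add_self_of_Y_eq (h₁ := h) (by rw [tw_negY]; simp)

theorem tw_cases (P : (twist a b c D).Point) : P = 0 ∨ ∃ X Y h, P = .some X Y h := by
  rcases P with _ | ⟨X, Y, h⟩
  · left; rfl
  · right; exact ⟨X, Y, h, rfl⟩

/-- homogeneous x-coordinate -/
def xr : (twist a b c D).Point → Fin 2 → ℚ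
  | .zero => ![1, 0]
  | .some X _ _ => ![X, D]

theorem xr_zero : xr (0 : (twist a b c D).Point) = ![1, 0] := rfl
theorem xr_some {X Y : ℚ} (h : (twist a b c D).Nonsingular X Y) :
  xr (.some X Y h) = ![X, (D:ℚ)] := rfl

/-- x coordinate -/
def xx : (twist a b c D).Point → ℚ
  | .zero => 0
  | .some X _ _ => X / D

theorem xx_zero : xx (0 : (twist a b c D).Point) = 0 := rfl
theorem xx_some {X Y : ℚ} (h : (twist a b c D).Nonsingular X Y) : xx (.some X Y h) = X / D := rfl

/-- naive height -/
noncomputable def nh (P : (twist a b c D).Point) : ℝ := Height.logHeight₁ (xx P)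

theorem nh_zero : nh (0 : (twist a b c D).Point) = 0 := by simp [nh, xx_zero]

theorem nh_eq (P : (twist a b c D).Point) : nh P = Height.logHeight (xr P) := by
  rcases tw_cases P with rfl | ⟨X, Y, h, rfl⟩
  · have := Height.logHeight₁_div_eq_logHeight (1:ℚ) 0
    rw [xr_zero, ← this]; simp [nh_zero]
  · rw [nh, xx_some, xr_some, Height.logHeight₁_div_eq_logHeight]

theorem xr_ne (hD : D ≠ 0) (P : (twist a b c D).Point) : xr P ≠ 0 := by
  rcases tw_cases P with rfl | ⟨X, Y, h, rfl⟩
  · rw [xr_zero]; simp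
  · rw [xr_some]; simp [hD]

theorem xr_eta (P : (twist a b c D).Point) : xr P = ![xr P 0, xr P 1] := by
  ext i; fin_cases i <;> rfl

/-- symmetric square -/
def sy (p q : Fin 2 → ℚ) : Fin 3 → ℚ := ![p 0 * q 0, p 0 * q 1 + p 1 * q 0, p 1 * q 1]

/-- add-sub map explicit -/
def asm (a b c : ℤ) (x : Fin 3 → ℚ) : Fin 3 → ℚ :=
  ![x 0^2 - 2*b*x 0*x 2 - 4*c*x 1*x 2 - (4*a*c-b^2)*x 2^2,
    2*x 1*x 0+4*a*x 0*x 2+2*b*x 1*x 2+4*c*x 2^2, x 1^2-4*x 0*x 2]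

theorem asm_eq (x : Fin 3 → ℚ) : (fun i => (WeierstrassCurve.addSubMap (twist a b c 1) i).eval x) = asm a b c x := by
  ext i
  fin_cases i <;> simp [WeierstrassCurve.addSubMap, asm, twist, WeierstrassCurve.b₂, WeierstrassCurve.b₄, WeierstrassCurve.b₆, WeierstrassCurve.b₈]

theorem sym2_rel (hf : DistinctRoots a b c) (hD : D ≠ 0) (P Q : (twist a b c D).Point) :
    ∃ κ : ℚ, κ ≠ 0 ∧ asm a b c (sy (xr P) (xr Q)) = κ • sy (xr (P+Q)) (xr (P-Q)) := by
  have hDq : (D:ℚ) ≠ 0 := by exact_mod_cast hD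
  rcases tw_cases P with rfl | ⟨X₁, Y₁, h₁, rfl⟩
  · rcases tw_cases Q with rfl | ⟨X₂, Y₂, h₂, rfl⟩
    · refine ⟨1, one_ne_zero, ?_⟩
      rw [add_zero, sub_zero, xr_zero]
      ext i; fin_cases i <;> simp [asm, sy]
    · refine ⟨1, one_ne_zero, ?_⟩
      obtain ⟨h', e⟩ := tw_neg h₂
      rw [zero_add, zero_sub, e, xr_zero, xr_some, xr_some]
      ext i; fin_cases i <;> simp [asm, sy] <;> ring
  rcases tw_cases Q with rfl | ⟨X₂, Y₂, h₂, rfl⟩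
  · refine ⟨1, one_ne_zero, ?_⟩
    rw [add_zero, sub_zero, xr_zero, xr_some]
    ext i; fin_cases i <;> simp [asm, sy] <;> ring
  have e1 := tw_eq h₁
  have e2 := tw_eq h₂
  obtain ⟨h', e⟩ := tw_neg h₂
  by_cases hX : X₁ = X₂
  · subst hX
    have key : ∀ (Y:ℚ) (h : (twist a b c D).Nonsingular X₁ Y) (P Q : (twist a b c D).Point),
        P = .some X₁ Y h + .some X₁ Y h → Q = 0 →
        ∃ κ : ℚ, κ ≠ 0 ∧ asm a b c (sy ![X₁, (D:ℚ)] ![X₁, (D:ℚ)]) = κ • sy (xr P) (xr Q) ∧ 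
            asm a b c (sy ![X₁, (D:ℚ)] ![X₁, (D:ℚ)]) = κ • sy (xr Q) (xr P) := by
      rintro Y h P Q rfl rfl
      have eq := tw_eq h
      by_cases hY : Y = 0
      · subst hY
        have hW := twist_elliptic hf (one_ne_zero)
        have hne := WeierstrassCurve.addSubMap_ne_zero (twist a b c 1) (x := sy ![X₁, (D:ℚ)] ![X₁, (D:ℚ)])
          (fun h0 => by have := congrFun h0 2; simp [sy, hD] at this)
        rw [asm_eq] at hne
        have z1 : asm a b c (sy ![X₁, (D:ℚ)] ![X₁, (D:ℚ)]) 1 = 0 := by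
          simp [asm, sy]
          linear_combination -4 * D * eq
        have z2 : asm a b c (sy ![X₁, (D:ℚ)] ![X₁, (D:ℚ)]) 2 = 0 := by
          simp [asm, sy]
          ring
        refine ⟨asm a b c (sy ![X₁, (D:ℚ)] ![X₁, (D:ℚ)]) 0, ?_, ?_⟩
        · intro h0
          apply hne
          ext i; fin_cases i
          · exact h0
          · exact z1
          · exact z2
        · rw [tw_dbl0, xr_zero]
          have : asm a b c (sy ![X₁, (D:ℚ)] ![X₁, (D:ℚ)]) = asm a b c (sy ![X₁, (D:ℚ)] ![X₁, (D:ℚ)]) 0 • sy ![1,0] ![1,0] := by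
            ext i; fin_cases i
            · simp [sy]
            · refine z1.trans ?_; simp [sy]
            · refine z2.trans ?_; simp [sy]
          exact ⟨this, this⟩
      · obtain ⟨Y', h'', e⟩ := tw_dbl h hY
        rw [e, xr_zero, xr_some]
        have k1 : X₁^4 - 2*b*D^2*X₁^2 - 8*c*D^3*X₁ - (4*a*c-b^2)*D^4 = 4*Y^2 * (((3*X₁^2+2*a*D*X₁+b*D^2)/(2*Y))^2 - a*D - X₁ - X₁) := by
          field_simp
          linear_combination (16*a*D+32*X₁)*eq
        refine ⟨4*Y^2, by positivity, ?_, ?_⟩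
        · ext i; fin_cases i
          · simp [asm, sy]
            linear_combination k1
          · simp [asm, sy]; linear_combination -4*D*eq
          · simp [asm, sy]; ring
        · ext i; fin_cases i
          · simp [asm, sy]
            linear_combination k1
          · simp [asm, sy]; linear_combination -4*D*eq
          · simp [asm, sy]; ring
    have hy : (Y₁ - Y₂) * (Y₁+Y₂) = 0 := by linear_combination e1 - e2
    rw [xr_some, xr_some]
    rcases mul_eq_zero.1 hy with hy | hy
    · have hy : Y₁ = Y₂ := by linarith
      subst hy
      obtain ⟨κ, hκ, h, _⟩ := key Y₁ h₁ _ _ rfl (sub_self (WeierstrassCurve.Affine.Point.some X₁ Y₁ h₁))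
      exact ⟨κ, hκ, h⟩
    · have hy : Y₁ = -Y₂ := by linarith
      subst hy
      obtain ⟨κ, hκ, _, h⟩ := key (-Y₂) h₁ _ _ rfl (sub_self (WeierstrassCurve.Affine.Point.some X₁ (-Y₂) h₁))
      refine ⟨κ, hκ, ?_⟩
      have e3 : WeierstrassCurve.Affine.Point.some X₁ Y₂ h₂ = -(.some X₁ (-Y₂) h₁) := by
        rw [← e, neg_neg]
      rw [e3, sub_neg_eq_add, ← sub_eq_add_neg]
      exact h
  · obtain ⟨Y, h, e3⟩ := tw_add h₁ h₂ hX
    obtain ⟨Y', h4, e4⟩ := tw_add h₁ h' hX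
    have hX' : X₁ - X₂ ≠ 0 := sub_ne_zero.2 hX
    refine ⟨(X₁ - X₂)^2, by positivity, ?_⟩
    rw [sub_eq_add_neg (WeierstrassCurve.Affine.Point.some X₁ Y₁ h₁), e, e3, e4, xr_some, xr_some, xr_some, xr_some]
    ext i; fin_cases i
    · simp [asm, sy]
      field_simp
      have e5 : Y₁^4 = (X₁^3 + a*D*X₁^2 + b*D^2*X₁ + c*D^3)^2 := by rw [← e1]; ring
      have e6 : Y₂^4 = (X₂^3 + a*D*X₂^2 + b*D^2*X₂ + c*D^3)^2 := by rw [← e2]; ring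
      ring_nf
      rw [e5, e6, e1, e2]
      ring
    · simp [asm, sy]
      field_simp
      ring_nf
      rw [e1, e2]
      ring
    · simp [asm, sy]
      ring

end tw


theorem nh_par {a b c : ℤ} (hf : DistinctRoots a b c) : ∃ C : ℝ, ∀ D : ℤ, D ≠ 0 →
    ∀ P Q : (twist a b c D).Point, |nh (P+Q) + nh (P-Q) - 2 * nh P - 2 * nh Q| ≤ C := by
  have hW := twist_elliptic hf (one_ne_zero)
  obtain ⟨C₁, h1⟩ := WeierstrassCurve.abs_logHeight_addSubMap_sub_two_mul_logHeight_le (twist a b c 1)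
  obtain ⟨C₂, h2⟩ := Height.abs_logHeight_sym2_sub_le (K := ℚ)
  have h2' : ∀ p q : Fin 2 → ℚ, p ≠ 0 → q ≠ 0 → |Height.logHeight (sy p q) - (Height.logHeight p + Height.logHeight q)| ≤ C₂ := by
    intro p q hp hq
    have ep : p = ![p 0, p 1] := by ext i; fin_cases i <;> rfl
    have eq : q = ![q 0, q 1] := by ext i; fin_cases i <;> rfl
    have := h2 (a := p 0) (b := p 1) (c := q 0) (d := q 1) (by rwa [← ep]) (by rwa [← eq])
    rwa [← ep, ← eq] at this
  refine ⟨C₁ + 3 * C₂, fun D hD P Q => ?_⟩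
  obtain ⟨κ, hκ, h⟩ := sym2_rel hf hD P Q
  have h3 := h1 (sy (xr P) (xr Q))
  rw [asm_eq, h, Height.logHeight_smul_eq_logHeight _ hκ] at h3
  have h4 := h2' _ _ (xr_ne hD P) (xr_ne hD Q)
  have h5 := h2' _ _ (xr_ne hD (P+Q)) (xr_ne hD (P-Q))
  simp only [← nh_eq] at h3 h4 h5
  rw [abs_le] at *
  constructor <;> linarith

theorem nh_nonneg {a b c D : ℤ} (P : (twist a b c D).Point) : 0 ≤ nh P := by
  rw [nh]; positivity

theorem exists_H {a b c : ℤ} (hf : DistinctRoots a b c) : ∃ C : ℝ, 0 ≤ C ∧ ∀ D : ℤ, D ≠ 0 →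
    ∃ H : (twist a b c D).Point → ℝ, IsQuad H ∧ ∀ P, |H P - nh P| ≤ C := by
  obtain ⟨C, hC⟩ := nh_par hf
  refine ⟨C, (abs_nonneg _).trans (hC 1 one_ne_zero 0 0), fun D hD => ?_⟩
  obtain ⟨H, h1, h2, h3⟩ := canon_height (nh (a := a) (b := b) (c := c) (D := D)) C nh_zero nh_nonneg (hC D hD)
  exact ⟨H, ⟨h1, h2⟩, h3⟩

theorem northcott_tw (a b c : ℤ) (B : ℝ) : ∃ K : ℕ, ∀ D : ℤ, D ≠ 0 →
    ∀ S : Finset (twist a b c D).Point, (∀ P ∈ S, nh P ≤ B) → S.card ≤ K := by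
  classical
  have hfin : {x : ℚ | Height.logHeight₁ x ≤ B}.Finite := NumberField.finite_setOfPred_logHeight₁_le ℚ B
  let T : Finset (ℚ × SignType × Bool) := hfin.toFinset ×ˢ (Finset.univ ×ˢ Finset.univ)
  refine ⟨T.card, fun D hD S hS => ?_⟩
  have hDq : (D:ℚ) ≠ 0 := by exact_mod_cast hD
  let φ : (twist a b c D).Point → ℚ × SignType × Bool := fun P => (xx P, match P with
    | .zero => (0, false)
    | .some _ Y _ => (SignType.sign Y, true))
  refine Finset.card_le_card_of_injOn φ ?_ ?_
  · intro P hP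
    simp only [T, φ, Finset.coe_product, Set.mem_prod, Finset.mem_coe, Finset.mem_univ, Set.Finite.mem_toFinset, Set.mem_ofPred_eq, and_true]
    exact hS P hP
  · intro P _ Q _ h
    rcases tw_cases P with rfl | ⟨X₁, Y₁, h₁, rfl⟩ <;> rcases tw_cases Q with rfl | ⟨X₂, Y₂, h₂, rfl⟩
    · rfl
    · have := congrArg (fun p => p.2.2) h
      exact absurd this (by simp [φ, WeierstrassCurve.Affine.Point.zero_def])
    · have := congrArg (fun p => p.2.2) h
      exact absurd this (by simp [φ, WeierstrassCurve.Affine.Point.zero_def])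
    · have e1 : X₁ / D = X₂ / D := congrArg (fun p => p.1) h
      have e2 : SignType.sign Y₁ = SignType.sign Y₂ := congrArg (fun p => p.2.1) h
      have e1 : X₁ = X₂ := by field_simp at e1; exact e1
      subst e1
      have q1 := tw_eq h₁
      have q2 := tw_eq h₂
      have : Y₁ = Y₂ := by
        rcases sq_eq_sq_iff_eq_or_eq_neg.1 (q1.trans q2.symm) with h | h
        · exact h
        · rw [h, Left.sign_neg] at e2
          have : Y₂ = 0 := by
            rcases lt_trichotomy Y₂ 0 with h | h | h
            · rw [sign_neg h] at e2; exact absurd e2 (by decide)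
            · exact h
            · rw [sign_pos h] at e2; exact absurd e2 (by decide)
          rw [h, this]; simp
      subst this; rfl

theorem sqfree_int {D F : ℤ} (hD : Squarefree D) {t : ℚ} (h : (F:ℚ) = D * t^2) : ∃ n : ℤ, (n:ℚ) = t ∧ F = D * n^2 := by
  have h1 : F * (t.den:ℤ)^2 = D * t.num^2 := by
    have e : t = t.num / t.den := (Rat.num_div_den t).symm
    have hd : (t.den:ℚ) ≠ 0 := by exact_mod_cast t.den_nz
    rw [e] at h
    field_simp at h
    exact_mod_cast h
  have h2 : (t.den:ℤ)^2 ∣ D := by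
    have : (t.den:ℤ)^2 ∣ D * t.num^2 := ⟨F, by rw [← h1]; ring⟩
    refine IsCoprime.dvd_of_dvd_mul_right ?_ this
    apply IsCoprime.pow
    rw [Int.isCoprime_iff_gcd_eq_one]
    have := t.reduced
    rw [Int.gcd_comm]; exact this
  have h3 : IsUnit (t.den:ℤ) := hD _ (by rwa [← sq])
  have h4 : t.den = 1 := by
    rw [Int.isUnit_iff] at h3; omega
  refine ⟨t.num, ?_, ?_⟩
  · rw [Rat.den_eq_one_iff] at h4; exact h4
  · rw [h4] at h1; simpa using h1

theorem Fbin_cast (a b c u v : ℤ) (hv : v ≠ 0) : (Fbin a b c u v : ℚ) = v^4 * (((u:ℚ)/v)^3 + a * ((u:ℚ)/v)^2 + b*((u:ℚ)/v) + c) := by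
  have : (v:ℚ) ≠ 0 := by exact_mod_cast hv
  rw [Fbin]; push_cast; field_simp

theorem abs_Fbin_le (a b c u v : ℤ) {M : ℝ} (hu : |(u:ℝ)| ≤ M) (hv : |(v:ℝ)| ≤ M) :
    |(Fbin a b c u v : ℝ)| ≤ (1 + |(a:ℝ)| + |(b:ℝ)| + |(c:ℝ)|) * M^4 := by
  have hM : 0 ≤ M := (abs_nonneg _).trans hu
  have : (Fbin a b c u v : ℝ) = v * u^3 + a * (v^2*u^2) + b * (v^3*u) + c * v^4 := by
    rw [Fbin]; push_cast; ring
  rw [this]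
  have k : ∀ (i l : ℕ), i + l = 4 → |(v:ℝ)|^i * |(u:ℝ)|^l ≤ M^4 := by
    intro i l h
    rw [← h, pow_add]
    gcongr
  calc |(v * u^3 + a * (v^2*u^2) + b * (v^3*u) + c * v^4:ℝ)|
      ≤ |(v * u^3:ℝ)| + |a * (v^2*u^2:ℝ)| + |b * (v^3*u:ℝ)| + |(c * v^4:ℝ)| := by
        refine (abs_add_le _ _).trans ?_
        gcongr
        refine (abs_add_le _ _).trans ?_
        gcongr
        exact abs_add_le _ _
    _ ≤ M^4 + |(a:ℝ)| * M^4 + |(b:ℝ)| * M^4 + |(c:ℝ)| * M^4 := by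
        simp only [abs_mul, abs_pow]
        have k1 := k 1 3 rfl
        have k2 := k 2 2 rfl
        have k3 := k 3 1 rfl
        have k4 := k 4 0 rfl
        simp only [pow_one, pow_zero, mul_one] at *
        gcongr
    _ = _ := by ring

theorem nh_num_den {a b c D : ℤ} (P : (twist a b c D).Point) :
    nh P = Real.log (max (xx P).num.natAbs (xx P).den : ℕ) := Rat.logHeight₁_eq_log_max _

theorem nh_bounds {a b c D : ℤ} (P : (twist a b c D).Point) :
    |((xx P).num:ℝ)| ≤ Real.exp (nh P) ∧ |(((xx P).den:ℤ):ℝ)| ≤ Real.exp (nh P) := by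
  have h0 : 0 < (max (xx P).num.natAbs (xx P).den : ℕ) := lt_max_of_lt_right (xx P).den_pos
  rw [nh_num_den, Real.exp_log (by exact_mod_cast h0)]
  constructor
  · have : |((xx P).num:ℝ)| = (((xx P).num.natAbs : ℕ) : ℝ) := by
      rw [Nat.cast_natAbs]; simp
    rw [this]; exact_mod_cast le_max_left _ _
  · push_cast; simp

/-- D y^2 = f(x) in terms of coprime coordinates -/
theorem Fbin_of_pt {a b c D : ℤ} (hD : D ≠ 0) {X Y : ℚ} (h : (twist a b c D).Nonsingular X Y) :
    ((Fbin a b c (X / D).num (X/D).den : ℤ) : ℚ) = D * ((X/D).den^2 * Y / D^2)^2 := by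
  have hDq : (D:ℚ) ≠ 0 := by exact_mod_cast hD
  rw [Fbin_cast _ _ _ _ _ (by exact_mod_cast (X/D).den_nz)]
  have : ((X/D).num:ℚ) / ((X/D).den:ℤ) = X / D := Rat.num_div_den _
  rw [this]
  have := tw_eq h
  push_cast
  generalize ((X/D).den:ℚ) = n
  field_simp
  rw [this]; ring

theorem log_D_le {a b c : ℤ} : ∃ C : ℝ, 0 ≤ C ∧ ∀ D : ℤ, Squarefree D → ∀ {X Y : ℚ} (h : (twist a b c D).Nonsingular X Y),
    Y ≠ 0 → Real.log |(D:ℝ)| ≤ 4 * nh (.some X Y h) + C := by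
  refine ⟨Real.log (1 + |(a:ℝ)| + |(b:ℝ)| + |(c:ℝ)|), Real.log_nonneg (by linarith [abs_nonneg (a:ℝ), abs_nonneg (b:ℝ), abs_nonneg (c:ℝ)]), fun D hsq X Y h hY => ?_⟩
  have hD : D ≠ 0 := hsq.ne_zero
  have hDq : (D:ℚ) ≠ 0 := by exact_mod_cast hD
  obtain ⟨n, hn, hF⟩ := sqfree_int hsq (Fbin_of_pt hD h)
  have hn0 : n ≠ 0 := by
    intro h0
    rw [h0] at hn
    have hd : ((X/D).den:ℚ) ≠ 0 := by exact_mod_cast (X/D).den_nz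
    have : ((X/D).den^2 * Y / D^2 : ℚ) ≠ 0 := by positivity
    exact this (by rw [← hn]; simp)
  obtain ⟨b1, b2⟩ := nh_bounds (WeierstrassCurve.Affine.Point.some X Y h)
  have := abs_Fbin_le a b c _ _ b1 b2
  rw [xx_some] at this
  rw [hF] at this
  have h1 : |(D:ℝ)| ≤ |((D * n^2 : ℤ):ℝ)| := by
    push_cast
    rw [abs_mul]
    have : (1:ℝ) ≤ |(n:ℝ)^2| := by
      rw [abs_pow]
      have : (1:ℝ) ≤ |(n:ℝ)| := by exact_mod_cast Int.one_le_abs hn0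
      exact one_le_pow₀ this
    nlinarith [abs_nonneg (D:ℝ)]
  have h2 := h1.trans this
  have hDp : 0 < |(D:ℝ)| := by positivity
  have h3 := Real.log_le_log hDp h2
  rw [Real.log_mul (by positivity) (by positivity), Real.log_pow, Real.log_exp] at h3
  push_cast at h3
  linarith

theorem tors_of_Y0 {a b c D : ℤ} {X : ℚ} (h : (twist a b c D).Nonsingular X 0) : IsOfFinAddOrder (WeierstrassCurve.Affine.Point.some X 0 h) := by
  rw [isOfFinAddOrder_iff_nsmul_eq_zero]
  exact ⟨2, by norm_num, by rw [two_nsmul, tw_dbl0]⟩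

theorem heights {a b c : ℤ} (hf : DistinctRoots a b c) : ∃ (C c0 : ℝ) (K : ℕ), 0 ≤ C ∧ 0 < c0 ∧ ∀ D : ℤ, D ≠ 0 →
    ∃ H : (twist a b c D).Point → ℝ, IsQuad H ∧ (∀ P, |H P - nh P| ≤ C) ∧
      (Squarefree D → ∀ P, H P < c0 * max 1 (Real.log |(D:ℝ)|) → IsOfFinAddOrder P) ∧
      (∀ S : Finset (twist a b c D).Point, (∀ P ∈ S, IsOfFinAddOrder P) → S.card ≤ K) := by
  classical
  obtain ⟨C, hC, hH⟩ := exists_H hf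
  obtain ⟨K, hK⟩ := northcott_tw a b c (1 + C)
  obtain ⟨C', hC', hD'⟩ := log_D_le (a := a) (b := b) (c := c)
  set L := 1 + 2 * C' + 8 * C
  have hL : 1 ≤ L := by simp only [L]; linarith
  refine ⟨C, min (1/8) (1 / (L * (K+1)^2)), K, hC, by positivity, fun D hD => ?_⟩
  obtain ⟨H, hq, hb⟩ := hH D hD
  refine ⟨H, hq, hb, ?_, ?_⟩
  · intro hsq P hP
    by_contra hnt
    have k1 : 1 ≤ (K+1)^2 * H P := by
      by_contra! hlt
      have := hK D hD ((Finset.Icc 1 (K+1)).image (fun n : ℕ => n • P)) ?_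
      · rw [Finset.card_image_of_injective] at this
        · simp at this
        · intro m n h
          by_contra hne
          apply hnt
          rw [isOfFinAddOrder_iff_zsmul_eq_zero]
          refine ⟨(m:ℤ) - n, by omega, ?_⟩
          rw [sub_smul, natCast_zsmul, natCast_zsmul]
          exact sub_eq_zero.2 h
      · intro Q hQ
        obtain ⟨n, hn, rfl⟩ := Finset.mem_image.1 hQ
        have h1 := hq.nsmul P n
        have h2 := abs_le.1 (hb (n • P))
        have h3 : (n:ℝ)^2 * H P ≤ (K+1)^2 * H P := by
          have := hq.nn P
          have : (n:ℝ) ≤ K + 1 := by exact_mod_cast (Finset.mem_Icc.1 hn).2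
          gcongr
        linarith
    by_cases hl : L ≤ Real.log |(D:ℝ)|
    · rcases tw_cases P with rfl | ⟨X, Y, h, rfl⟩
      · exact hnt IsOfFinAddOrder.zero
      · by_cases hY : Y = 0
        · subst hY; exact hnt (tors_of_Y0 h)
        · have h1 := hD' D hsq h hY
          have h2 := abs_le.1 (hb (.some X Y h))
          rw [max_eq_right (by linarith)] at hP
          have h3 : H (.some X Y h) < (1/8) * Real.log |(D:ℝ)| := hP.trans_le (by
            have : 0 ≤ Real.log |(D:ℝ)| := by linarith
            gcongr; exact min_le_left _ _)
          linarith
    · push Not at hl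
      have h3 : H P < 1 / (L * (K+1)^2) * L := hP.trans_le (by
        gcongr
        · exact min_le_right _ _
        · exact max_le hL hl.le)
      have h4 : 1 / (L * ((K:ℝ)+1)^2) * L = 1/((K:ℝ)+1)^2 := by field_simp
      rw [h4, lt_div_iff₀ (by positivity)] at h3
      linarith
  · intro S hS
    apply hK D hD
    intro P hP
    have := hq.tors (hS P hP)
    have := abs_le.1 (hb P)
    linarith


theorem layer {σ j : ℝ} (hσ : 0 ≤ σ) (hj : σ < j) : ∃ M : ℝ, 0 ≤ M ∧ ∀ {ι : Type} (T : Finset ι) (g : ι → ℝ) (A : ℝ), 0 ≤ A →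
    (∀ x ∈ T, 1 ≤ g x) → (∀ B : ℝ, 1 ≤ B → ∀ T' ⊆ T, (∀ x ∈ T', g x ≤ B) → (T'.card : ℝ) ≤ A * B^σ) →
    ∑ x ∈ T, (g x)^(-j) ≤ A * M := by
  classical
  have hr : (2:ℝ)^(σ - j) < 1 := Real.rpow_lt_one_of_one_lt_of_neg (by norm_num) (by linarith)
  have hr0 : 0 ≤ (2:ℝ)^(σ - j) := by positivity
  have hs := summable_geometric_of_lt_one hr0 hr
  refine ⟨2^σ * ∑' n : ℕ, ((2:ℝ)^(σ - j))^n, by positivity, ?_⟩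
  intro ι T g A hA hg hc
  let n : ι → ℕ := fun x => Nat.log 2 ⌊g x⌋₊
  have hn1 : ∀ x ∈ T, (2:ℝ)^(n x) ≤ g x := by
    intro x hx
    have h1 : 1 ≤ ⌊g x⌋₊ := Nat.one_le_floor_iff _ |>.2 (hg x hx)
    have h2 : 2^(n x) ≤ ⌊g x⌋₊ := Nat.pow_log_le_self 2 (by omega)
    have h3 : ((2^(n x) : ℕ):ℝ) ≤ ⌊g x⌋₊ := by exact_mod_cast h2
    push_cast at h3
    exact h3.trans (Nat.floor_le (by linarith [hg x hx]))
  have hn2 : ∀ x ∈ T, g x ≤ (2:ℝ)^(n x + 1) := by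
    intro x hx
    have h2 : ⌊g x⌋₊ < 2^(n x + 1) := Nat.lt_pow_succ_log_self (by norm_num) _
    have h3 : ((⌊g x⌋₊ + 1 : ℕ) : ℝ) ≤ ((2^(n x + 1) : ℕ):ℝ) := by exact_mod_cast h2
    push_cast at h3
    exact (Nat.lt_floor_add_one (g x)).le.trans h3
  rw [← Finset.sum_fiberwise_of_maps_to (s := T) (t := T.image n) (g := n) (fun x hx => Finset.mem_image_of_mem _ hx)]
  have key : ∀ m ∈ T.image n, ∑ x ∈ T.filter (fun x => n x = m), (g x)^(-j) ≤ A * 2^σ * ((2:ℝ)^(σ - j))^m := by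
    intro m _
    have h1 : ∑ x ∈ T.filter (fun x => n x = m), (g x)^(-j) ≤ ∑ x ∈ T.filter (fun x => n x = m), ((2:ℝ)^m)^(-j) := by
      refine Finset.sum_le_sum fun x hx => ?_
      obtain ⟨hx', rfl⟩ := Finset.mem_filter.1 hx
      exact Real.rpow_le_rpow_of_nonpos (by positivity) (hn1 x hx') (by linarith)
    refine h1.trans ?_
    rw [Finset.sum_const, nsmul_eq_mul]
    have h2 := hc (2^(m+1)) (one_le_pow₀ (by norm_num)) (T.filter (fun x => n x = m)) (Finset.filter_subset _ _) (by
      intro x hx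
      obtain ⟨hx', rfl⟩ := Finset.mem_filter.1 hx
      exact hn2 x hx')
    calc _ ≤ (A * ((2:ℝ)^(m+1))^σ) * ((2:ℝ)^m)^(-j) := by gcongr
      _ = _ := by
        rw [pow_succ, Real.mul_rpow (by positivity) (by norm_num), ← Real.rpow_natCast, ← Real.rpow_natCast,
          ← Real.rpow_mul (by norm_num), ← Real.rpow_mul (by norm_num), ← Real.rpow_mul (by norm_num),
          show (σ - j) * (m:ℝ) = m * σ + m * (-j) by ring, Real.rpow_add (by norm_num)]
        ring
  refine (Finset.sum_le_sum key).trans ?_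
  rw [← Finset.mul_sum, mul_assoc]
  gcongr
  exact hs.sum_le_tsum _ (fun _ _ => by positivity)

/-- pairs lying on the twist D -/
def PsiD (a b c D : ℤ) : Set (ℤ × ℤ) := {p | p ∈ Psi a b c ∧ ∃ n : ℤ, Fbin a b c p.1 p.2 = D * n^2}

theorem psi_v_ne {a b c : ℤ} {p : ℤ × ℤ} (h : p ∈ Psi a b c) : p.2 ≠ 0 := by
  intro h0
  apply h.2
  rw [Fbin, h0]; simp

theorem ratdiv {u v : ℤ} (hv : v ≠ 0) (h : Int.gcd u v = 1) :
    ((u:ℚ)/v).num.natAbs = u.natAbs ∧ ((u:ℚ)/v).den = v.natAbs := by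
  have h1 := Rat.num_div_eq_of_coprime (a := u) (b := |v|) (by positivity) (by rw [Int.natAbs_abs]; exact h)
  have h2 := Rat.den_div_eq_of_coprime (a := u) (b := |v|) (by positivity) (by rw [Int.natAbs_abs]; exact h)
  rcases abs_choice v with hc | hc
  · rw [hc] at h1 h2
    constructor
    · rw [h1]
    · omega
  · rw [hc] at h1 h2
    have e : ((u:ℚ) / ((-v : ℤ):ℚ)) = -((u:ℚ)/v) := by push_cast; rw [div_neg]
    rw [e] at h1 h2
    rw [Rat.num_neg_eq_neg_num] at h1
    rw [Rat.den_neg_eq_den] at h2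
    constructor <;> omega

theorem ht_eq {u v : ℤ} (h : Int.gcd u v = 1) (hv : v ≠ 0) : ht u v = max 1 (Height.logHeight₁ ((u:ℚ)/v)) := by
  rw [Rat.logHeight₁_eq_log_max, (ratdiv hv h).1, (ratdiv hv h).2, ht]
  have e : ∀ n : ℤ, |(n:ℝ)| = ((n.natAbs : ℕ):ℝ) := fun n => by rw [Nat.cast_natAbs]; simp
  rw [e, e]
  have hv' : 0 < v.natAbs := by omega
  rcases Nat.eq_zero_or_pos u.natAbs with h0 | h0
  · rw [h0]
    have : 0 ≤ Real.log (v.natAbs:ℝ) := Real.log_nonneg (by exact_mod_cast hv')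
    rw [Nat.cast_zero, Real.log_zero, max_eq_right this, max_eq_right (Nat.zero_le _)]
  · congr 1
    push_cast
    rcases le_total u.natAbs v.natAbs with hl | hl
    · have : (u.natAbs:ℝ) ≤ v.natAbs := by exact_mod_cast hl
      rw [max_eq_right this, max_eq_right]
      exact Real.log_le_log (by exact_mod_cast h0) this
    · have : (v.natAbs:ℝ) ≤ u.natAbs := by exact_mod_cast hl
      rw [max_eq_left this, max_eq_left]
      exact Real.log_le_log (by exact_mod_cast hv') this

/-- a point from a pair -/
theorem psiD_pt {a b c : ℤ} (hf : DistinctRoots a b c) {D : ℤ} (hD : D ≠ 0) {p : ℤ × ℤ} (hp : p ∈ PsiD a b c D) :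
    ∃ (Y : ℚ) (h : (twist a b c D).Nonsingular (D * (p.1 / p.2)) Y), Y ≠ 0 := by
  obtain ⟨hp, n, hn⟩ := hp
  have hv := psi_v_ne hp
  have hvq : (p.2:ℚ) ≠ 0 := by exact_mod_cast hv
  have hDq : (D:ℚ) ≠ 0 := by exact_mod_cast hD
  have hn0 : n ≠ 0 := by
    rintro rfl
    apply hp.2; rw [hn]; simp
  have hnq : (n:ℚ) ≠ 0 := by exact_mod_cast hn0
  refine ⟨D^2 * n / p.2^2, tw_ns hf hD ?_, by positivity⟩
  have h1 := Fbin_cast a b c p.1 p.2 hv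
  rw [hn] at h1
  push_cast at h1
  have : (D^2 * n / p.2^2 : ℚ)^2 = D^3 * (D * n^2) / p.2^4 := by field_simp
  rw [this, h1]
  field_simp

theorem count_D {a b c : ℤ} (hf : DistinctRoots a b c) {r : ℕ}
    (hr : ∀ D : ℤ, D ≠ 0 → ¬ ∃ P : Fin (r+1) → (twist a b c D).Point, LinearIndependent ℤ P) :
    ∃ C1 c1 : ℝ, 0 ≤ C1 ∧ 0 < c1 ∧ c1 ≤ 1 ∧ ∀ D : ℤ, Squarefree D → ∀ T : Finset (ℤ × ℤ), (∀ p ∈ T, p ∈ PsiD a b c D) →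
     (∀ p ∈ T, c1 * max 1 (Real.log |(D:ℝ)|) ≤ ht p.1 p.2) ∧
     ∀ B : ℝ, 1 ≤ B → (∀ p ∈ T, ht p.1 p.2 ≤ B * max 1 (Real.log |(D:ℝ)|)) → (T.card : ℝ) ≤ C1 * B^((r:ℝ)/2) := by
  classical
  obtain ⟨C, c0, K, hC, hc0, hH⟩ := heights hf
  obtain ⟨C', hC', hlog⟩ := log_D_le (a := a) (b := b) (c := c)
  set A := Real.sqrt (4 * (1+C) / c0)
  refine ⟨2 * (K * (A + 2)^r), 1 / (4 + C'), by positivity, by positivity, ?_, ?_⟩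
  · rw [div_le_one (by positivity)]; linarith
  intro D hsq T hT
  have hD : D ≠ 0 := hsq.ne_zero
  have hDq : (D:ℚ) ≠ 0 := by exact_mod_cast hD
  choose! Y hY hY0 using fun p (hp : p ∈ T) => psiD_pt hf hD (hT p hp)
  let pt : ℤ × ℤ → (twist a b c D).Point := fun p => if hp : p ∈ T then .some _ _ (hY p hp) else 0
  have hxx : ∀ p ∈ T, xx (pt p) = (p.1:ℚ)/p.2 := by
    intro p hp
    simp only [pt, dif_pos hp]
    rw [xx_some]; field_simp
  have hht : ∀ p ∈ T, ht p.1 p.2 = max 1 (nh (pt p)) := by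
    intro p hp
    rw [nh, hxx p hp]
    exact ht_eq (hT p hp).1.1 (psi_v_ne (hT p hp).1)
  set L := max 1 (Real.log |(D:ℝ)|)
  have hL : 1 ≤ L := le_max_left _ _
  constructor
  · intro p hp
    rw [hht p hp, div_mul_eq_mul_div, one_mul, div_le_iff₀ (by positivity)]
    have h1 := hlog D hsq (hY p hp) (hY0 p hp)
    have h2 : nh (WeierstrassCurve.Affine.Point.some _ _ (hY p hp)) = nh (pt p) := by
      simp only [pt, dif_pos hp]
    rw [h2] at h1
    have h3 : (1:ℝ) ≤ max 1 (nh (pt p)) := le_max_left _ _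
    have h4 : nh (pt p) ≤ max 1 (nh (pt p)) := le_max_right _ _
    refine max_le ?_ ?_ <;> nlinarith
  · intro B hB hTB
    obtain ⟨H, hq, hb, hlow, hK⟩ := hH D hD
    set N := ⌈A * Real.sqrt B⌉₊ + 1
    have hN : 4 * ((1 + C) * (B * L)) < (N:ℝ)^2 * (c0 * L) := by
      have h1 : A * Real.sqrt B < N := by
        have := Nat.le_ceil (A * Real.sqrt B)
        simp only [N]; push_cast; linarith
      have h2 : (A * Real.sqrt B)^2 < (N:ℝ)^2 := by gcongr
      rw [mul_pow, Real.sq_sqrt (by positivity), Real.sq_sqrt (by positivity)] at h2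
      have h3 : 4 * ((1 + C) * (B * L)) = (4 * (1+C) / c0 * B) * (c0 * L) := by field_simp
      rw [h3]
      gcongr
    have h1 := count_le hq (hr D hD) (hlow hsq) hK hN (by omega) (T.image pt) (by
      intro P hP
      obtain ⟨p, hp, rfl⟩ := Finset.mem_image.1 hP
      have e1 := hTB p hp
      rw [hht p hp] at e1
      have e2 := abs_le.1 (hb (pt p))
      have e3 : nh (pt p) ≤ B * L := (le_max_right _ _).trans e1
      have e4 : 1 ≤ B * L := by nlinarith
      nlinarith)
    have h2 : T.card ≤ 2 * (T.image pt).card := by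
      refine Finset.card_le_mul_card_image T 2 ?_
      intro P hP
      obtain ⟨q, hq, rfl⟩ := Finset.mem_image.1 hP
      have : T.filter (fun p => pt p = pt q) ⊆ {q, (-q.1, -q.2)} := by
        intro p hp
        obtain ⟨hp, he⟩ := Finset.mem_filter.1 hp
        have e := congrArg xx he
        rw [hxx p hp, hxx q hq] at e
        have hp1 := (hT p hp).1
        have hq1 := (hT q hq).1
        have r1 := ratdiv (psi_v_ne hp1) hp1.1
        have r2 := ratdiv (psi_v_ne hq1) hq1.1
        rw [e] at r1
        have n1 : p.1.natAbs = q.1.natAbs := r1.1.symm.trans r2.1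
        have n2 : p.2.natAbs = q.2.natAbs := r1.2.symm.trans r2.2
        have v1 : (p.2:ℚ) ≠ 0 := by exact_mod_cast psi_v_ne hp1
        have v2 : (q.2:ℚ) ≠ 0 := by exact_mod_cast psi_v_ne hq1
        have v3 := psi_v_ne hp1
        rw [div_eq_div_iff v1 v2] at e
        have e' : p.1 * q.2 = q.1 * p.2 := by exact_mod_cast e
        simp only [Finset.mem_insert, Finset.mem_singleton, Prod.ext_iff]
        rcases Int.natAbs_eq_natAbs_iff.1 n2 with h | h
        · left; refine ⟨?_, h⟩
          rw [← h] at e'; exact mul_right_cancel₀ v3 e'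
        · right; refine ⟨?_, h⟩
          have : q.2 = -p.2 := by omega
          rw [this] at e'
          have : (p.1 + q.1) * p.2 = 0 := by linarith
          rcases mul_eq_zero.1 this with h | h
          · omega
          · exact absurd h v3
      exact (Finset.card_le_card this).trans Finset.card_le_two
    have h3 : (T.card:ℝ) ≤ 2 * (K * (N:ℝ)^r) := by exact_mod_cast h2.trans (Nat.mul_le_mul_left 2 h1)
    have h4 : (N:ℝ) ≤ (A + 2) * Real.sqrt B := by
      have h1 : (1:ℝ) ≤ Real.sqrt B := Real.one_le_sqrt.2 hB
      have := (Nat.ceil_lt_add_one (by positivity : 0 ≤ A * Real.sqrt B)).le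
      simp only [N]; push_cast; linarith
    have h5 : (Real.sqrt B)^r = B^((r:ℝ)/2) := by
      rw [Real.sqrt_eq_rpow, ← Real.rpow_natCast, ← Real.rpow_mul (by linarith)]
      congr 1; ring
    calc (T.card:ℝ) ≤ 2 * (K * (N:ℝ)^r) := h3
      _ ≤ 2 * (K * ((A + 2) * Real.sqrt B)^r) := by gcongr
      _ = _ := by rw [mul_pow, h5]; ring

theorem sum_D {a b c : ℤ} (hf : DistinctRoots a b c) {r : ℕ}
    (hr : ∀ D : ℤ, D ≠ 0 → ¬ ∃ P : Fin (r+1) → (twist a b c D).Point, LinearIndependent ℤ P)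
    {j : ℝ} (hj : (r:ℝ)/2 < j) :
    ∃ C2 : ℝ, 0 ≤ C2 ∧ ∀ D : ℤ, Squarefree D → ∀ T : Finset (ℤ × ℤ), (∀ p ∈ T, p ∈ PsiD a b c D) →
      ∑ p ∈ T, (ht p.1 p.2)^(-j) ≤ C2 * (max 1 (Real.log |(D:ℝ)|))^(-j) := by
  obtain ⟨C1, c1, hC1, hc1, hc1', h⟩ := count_D hf hr
  obtain ⟨M, hM, hl⟩ := layer (by positivity : 0 ≤ (r:ℝ)/2) hj
  refine ⟨C1 * M * c1^(-j), by positivity, fun D hsq T hT => ?_⟩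
  set L := max 1 (Real.log |(D:ℝ)|)
  have hL : 1 ≤ L := le_max_left _ _
  have hcL : 0 < c1 * L := by positivity
  have := hl T (fun p => ht p.1 p.2 / (c1 * L)) C1 hC1 (by
    intro p hp
    rw [le_div_iff₀ hcL, one_mul]
    exact (h D hsq T hT).1 p hp) (by
    intro B hB T' hT' hB'
    refine (h D hsq T' (fun p hp => hT p (hT' hp))).2 B hB ?_
    intro p hp
    have := hB' p hp
    rw [div_le_iff₀ hcL] at this
    refine this.trans ?_
    have : c1 * L ≤ L := by nlinarith
    gcongr)
  have e : ∀ p ∈ T, (ht p.1 p.2)^(-j) = (c1*L)^(-j) * (ht p.1 p.2 / (c1 * L))^(-j) := by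
    intro p hp
    have h1 := (h D hsq T hT).1 p hp
    rw [← Real.mul_rpow hcL.le (div_nonneg (by linarith) hcL.le)]
    congr 1; field_simp
  rw [Finset.sum_congr rfl e, ← Finset.mul_sum]
  calc _ ≤ (c1*L)^(-j) * (C1 * M) := by gcongr
    _ = _ := by rw [Real.mul_rpow hc1.le (by linarith)]; ring


theorem summable_logs {j : ℝ} (hj : 1 < j) : Summable (fun D : ℤ => |(D:ℝ)|⁻¹ * (max 1 (Real.log |(D:ℝ)|))^(-j)) := by
  have hn : Summable (fun n : ℕ => (n:ℝ)⁻¹ * (max 1 (Real.log n))^(-j)) := by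
    rw [← summable_condensed_iff_of_nonneg]
    · have hs : Summable (fun n : ℕ => (Real.log 2)^(-j) * (n:ℝ)^(-j)) :=
        (Real.summable_nat_rpow.2 (by linarith)).mul_left _
      rw [← summable_nat_add_iff 1] at hs ⊢
      refine Summable.of_nonneg_of_le (fun n => by positivity) (fun n => ?_) hs
      have h2 : (0:ℝ) < Real.log 2 := Real.log_pos (by norm_num)
      push_cast
      rw [← mul_assoc, mul_inv_cancel₀ (by positivity), one_mul, Real.log_pow, ← Real.mul_rpow h2.le (by positivity)]
      refine Real.rpow_le_rpow_of_nonpos (by positivity) ?_ (by linarith)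
      push_cast
      rw [mul_comm]
      exact le_max_right _ _
    · intro n; positivity
    · intro m n hm hmn
      have h1 : (m:ℝ) ≤ n := by exact_mod_cast hmn
      have h0 : (0:ℝ) < m := by exact_mod_cast hm
      have h2 : (max 1 (Real.log n))^(-j) ≤ (max 1 (Real.log m))^(-j) := by
        refine Real.rpow_le_rpow_of_nonpos (by positivity) ?_ (by linarith)
        exact max_le_max le_rfl (Real.log_le_log h0 h1)
      have : (0:ℝ) < n := h0.trans_le h1
      gcongr
  refine Summable.of_nat_of_neg ?_ ?_ <;> simpa using hn

theorem thue {a b c : ℤ} {ω : (d d' : ℕ) → ZMod (d^2) → ℤ × ℤ} (hω : IsShortestChoice a b c ω)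
    {d d' : ℕ} (hd : 0 < d) (hd' : 0 < d') (hc : Nat.Coprime d d') {α : ZMod (d^2)} (hα : α ∈ OmegaSet a b c d) :
    (ω d d' α).1^2 + (ω d d' α).2^2 ≤ 2 * (d*d':ℤ)^2 := by
  classical
  have : NeZero (d^2) := ⟨by positivity⟩
  let s : Finset (ℕ × ℕ) := Finset.range (d*d'+1) ×ˢ Finset.range (d/d'+1)
  let φ : ℕ × ℕ → ZMod (d^2) := fun p => (p.1 : ZMod (d^2)) - α * ((d':ZMod (d^2))^2 * p.2)
  have hcard : (Finset.univ : Finset (ZMod (d^2))).card < s.card := by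
    rw [Finset.card_univ, ZMod.card, Finset.card_product, Finset.card_range, Finset.card_range]
    have h1 : d < d' * (d/d' + 1) := Nat.lt_mul_div_succ d hd'
    have h2 : d * d < d * (d' * (d/d'+1)) := Nat.mul_lt_mul_of_pos_left h1 hd
    calc d^2 = d * d := sq d
      _ < d * (d' * (d/d'+1)) := h2
      _ = (d * d') * (d/d'+1) := by ring
      _ ≤ _ := Nat.mul_le_mul_right _ (Nat.le_succ _)
  obtain ⟨p, hp, q, hq, hne, he⟩ := Finset.exists_ne_map_eq_of_card_lt_of_maps_to hcard (f := φ) (fun _ _ => Finset.mem_univ _)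
  have hmem : (((p.1:ℤ) - q.1, (d':ℤ)^2 * ((p.2:ℤ) - q.2)) : ℤ × ℤ) ∈ latL d d' α := by
    refine ⟨?_, Dvd.intro _ rfl⟩
    push_cast
    simp only [φ] at he
    linear_combination he
  have hne0 : (((p.1:ℤ) - q.1, (d':ℤ)^2 * ((p.2:ℤ) - q.2)) : ℤ × ℤ) ≠ 0 := by
    intro h0
    rw [Prod.ext_iff] at h0
    obtain ⟨h1, h2⟩ := h0
    simp only [Prod.fst_zero, Prod.snd_zero] at h1 h2
    have h3 : ((d':ℤ)^2) ≠ 0 := by positivity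
    have h2 := (mul_eq_zero.1 h2).resolve_left h3
    apply hne
    ext <;> omega
  have h := (hω d d' hd hd' hc α hα).2.2 _ hmem hne0
  refine h.trans ?_
  simp only [s, Finset.mem_product, Finset.mem_range] at hp hq
  have b1 : |(p.1:ℤ) - q.1| ≤ d * d' := by
    rw [abs_le, ← Nat.cast_mul]; constructor <;> omega
  have b2 : |(p.2:ℤ) - q.2| ≤ (d/d':ℕ) := by
    rw [abs_le]; constructor <;> omega
  have b3 : |(d':ℤ)^2 * ((p.2:ℤ) - q.2)| ≤ d * d' := by
    rw [abs_mul, abs_of_nonneg (by positivity : (0:ℤ) ≤ (d':ℤ)^2)]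
    have : (d':ℤ) * ((d/d':ℕ):ℤ) ≤ d := by exact_mod_cast Nat.mul_div_le d d'
    have hd'0 : (0:ℤ) ≤ d' := by positivity
    calc (d':ℤ)^2 * |(p.2:ℤ) - q.2| ≤ (d':ℤ)^2 * ((d/d':ℕ):ℤ) := by gcongr
      _ = (d':ℤ) * ((d':ℤ) * ((d/d':ℕ):ℤ)) := by ring
      _ ≤ (d':ℤ) * d := by gcongr
      _ = _ := by ring
  have s1 := sq_le_sq' (abs_le.1 b1).1 (abs_le.1 b1).2
  have s2 := sq_le_sq' (abs_le.1 b3).1 (abs_le.1 b3).2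
  simp only
  linarith

theorem idx_facts {a b c : ℤ} {ω : (d d' : ℕ) → ZMod (d^2) → ℤ × ℤ} (hω : IsShortestChoice a b c ω)
    {d d' : ℕ} {α : ZMod (d^2)} (hx : (⟨d, d', α⟩ : Σ d : ℕ, ℕ × ZMod (d^2)) ∈ QIdx a b c ω) :
    IsCoprime (d:ℤ) (ω d d' α).2 ∧ (d' : ℤ) ∣ (ω d d' α).2 ∧ ((d*d' : ℕ):ℤ)^2 ∣ Fbin a b c (ω d d' α).1 (ω d d' α).2 := by
  obtain ⟨hd, hd', hc, hα, hΨ⟩ := hx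
  simp only at hd hd' hc hα hΨ
  obtain ⟨⟨h1, h2⟩, -, -⟩ := hω d d' hd hd' hc α hα
  set u := (ω d d' α).1
  set v := (ω d d' α).2
  have hf3 : ((d:ℤ)^2) ∣ u^3 + a*u^2*v + b*u*v^2 + c*v^3 := by
    have : (((u^3 + a*u^2*v + b*u*v^2 + c*v^3 : ℤ)) : ZMod (d^2)) = 0 := by
      push_cast
      rw [h1]
      have hα : α^3 + (a : ZMod (d^2))*α^2 + (b : ZMod (d^2))*α + (c : ZMod (d^2)) = 0 := hα
      linear_combination (v:ZMod (d^2))^3 * hα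
    rw [ZMod.intCast_zmod_eq_zero_iff_dvd] at this
    exact_mod_cast this
  have hg : IsCoprime u v := Int.isCoprime_iff_gcd_eq_one.2 hΨ.1
  refine ⟨?_, (dvd_pow_self _ two_ne_zero).trans h2, ?_⟩
  · have h3 : IsCoprime (u^3 + a*u^2*v + b*u*v^2 + c*v^3) v := by
      have h4 : IsCoprime (u^3) v := hg.pow_left
      have := h4.add_mul_right_left (a*u^2 + b*u*v+c*v^2)
      have e : u^3 + a*u^2*v + b*u*v^2 + c*v^3 = u^3 + (a*u^2 + b*u*v+c*v^2)*v := by ring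
      rw [e]; exact this
    exact (h3.of_isCoprime_of_dvd_left hf3).of_isCoprime_of_dvd_left (dvd_pow_self _ two_ne_zero)
  · rw [Fbin]
    push_cast
    rw [mul_pow, mul_comm]
    exact mul_dvd_mul h2 hf3

/-- decomposition of nonzero integers -/
theorem sqdec (m : ℤ) (hm : m ≠ 0) : ∃ (D : ℤ) (s : ℕ), Squarefree D ∧ 0 < s ∧ m = D * (s:ℤ)^2 := by
  obtain ⟨A, B, h1, h2⟩ := Nat.sq_mul_squarefree m.natAbs
  have hB : B ≠ 0 := by
    rintro rfl
    simp at h1; omega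
  have h3 : m = m.sign * ((B:ℤ)^2 * A) := by
    have := Int.sign_mul_natAbs m
    rw [← h1] at this
    push_cast at this
    exact this.symm
  refine ⟨m.sign * A, B, ?_, by omega, by linear_combination h3⟩
  have hA : Squarefree (A:ℤ) := Int.squarefree_natCast.2 h2
  rcases lt_or_gt_of_ne hm with h | h
  · rw [Int.sign_eq_neg_one_of_neg h]; rw [neg_one_mul, ← Int.squarefree_natAbs, Int.natAbs_neg, Int.squarefree_natAbs]; exact hA
  · rw [Int.sign_eq_one_of_pos h, one_mul]; exact hA


theorem idx_inj {a b c : ℤ} {ω : (d d' : ℕ) → ZMod (d^2) → ℤ × ℤ} (hω : IsShortestChoice a b c ω)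
    {x y : Σ d : ℕ, ℕ × ZMod (d^2)} (hx : x ∈ QIdx a b c ω) (hy : y ∈ QIdx a b c ω)
    (hp : ω x.1 x.2.1 x.2.2 = ω y.1 y.2.1 y.2.2) (ht : x.1 * x.2.1 = y.1 * y.2.1) : x = y := by
  obtain ⟨d, d', α⟩ := x
  obtain ⟨e, e', β⟩ := y
  obtain ⟨h1, h2, -⟩ := idx_facts hω hx
  obtain ⟨k1, k2, -⟩ := idx_facts hω hy
  simp only at hp ht
  rw [← hp] at k1 k2
  have hd0 : 0 < d := hx.1
  have g1 : Nat.gcd (d * d') (ω d d' α).2.natAbs = d' := by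
    rw [Nat.Coprime.gcd_mul_left_cancel]
    · exact Nat.gcd_eq_left (Int.natCast_dvd.1 h2)
    · rw [Int.isCoprime_iff_gcd_eq_one] at h1; exact h1
  have g2 : Nat.gcd (e * e') (ω d d' α).2.natAbs = e' := by
    rw [Nat.Coprime.gcd_mul_left_cancel]
    · exact Nat.gcd_eq_left (Int.natCast_dvd.1 k2)
    · rw [Int.isCoprime_iff_gcd_eq_one] at k1; exact k1
  have e1 : d' = e' := by rw [← g1, ← g2, ht]
  subst e1
  have e2 : d = e := Nat.eq_of_mul_eq_mul_right hx.2.1 ht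
  subst e2
  have q1 := (hω d d' hx.1 hx.2.1 hx.2.2.1 α hx.2.2.2.1).1.1
  have q2 := (hω d d' hx.1 hx.2.1 hx.2.2.1 β hy.2.2.2.1).1.1
  rw [← hp, q1] at q2
  have hu : IsUnit (((ω d d' α).2 : ℤ) : ZMod (d^2)) := by
    have h3 : IsCoprime ((d:ℤ)^2) (ω d d' α).2 := h1.pow_left
    obtain ⟨s, t, hst⟩ := h3
    have := congrArg (fun z : ℤ => (z : ZMod (d^2))) hst
    push_cast at this
    have h0 : ((d:ZMod (d^2)))^2 = 0 := by
      have := ZMod.natCast_self (d^2)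
      push_cast at this; exact this
    rw [h0, mul_zero, zero_add] at this
    exact IsUnit.of_mul_eq_one_right _ this
  have := hu.mul_right_cancel q2
  subst this
  rfl

theorem QTerm_nonneg (j k : ℝ) (ω : (d d' : ℕ) → ZMod (d^2) → ℤ × ℤ) (x : Σ d : ℕ, ℕ × ZMod (d^2)) : 0 ≤ QTerm j k ω x := by
  rw [QTerm]; positivity

theorem QTerm_le {a b c : ℤ} {ω : (d d' : ℕ) → ZMod (d^2) → ℤ × ℤ} (hω : IsShortestChoice a b c ω) {j k : ℝ} (hj : 0 < j) (hk : 1 ≤ k) :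
   ∃ C : ℝ, 0 ≤ C ∧ ∀ x ∈ QIdx a b c ω, ∀ (D : ℤ) (s : ℕ), D ≠ 0 → 0 < s →
    Fbin a b c (ω x.1 x.2.1 x.2.2).1 (ω x.1 x.2.1 x.2.2).2 = ((x.1 * x.2.1 : ℕ):ℤ)^2 * (D * (s:ℤ)^2) →
    QTerm j k ω x ≤ C * (|(D:ℝ)|⁻¹ * ((s:ℝ)^2)⁻¹ * (ht (ω x.1 x.2.1 x.2.2).1 (ω x.1 x.2.1 x.2.2).2)^(-j)) := by
  set A := 1 + |(a:ℝ)| + |(b:ℝ)| + |(c:ℝ)|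
  have hA : 0 < A := by positivity
  refine ⟨A^k * 2^j, by positivity, ?_⟩
  rintro ⟨d, d', α⟩ hx D s hD hs hF
  simp only at hF
  have hd : 0 < d := hx.1
  have hd' : 0 < d' := hx.2.1
  have hΨ : ω d d' α ∈ Psi a b c := hx.2.2.2.2
  have hth := thue hω hd hd' hx.2.2.1 hx.2.2.2.1
  rw [QTerm]
  simp only
  set u := (ω d d' α).1
  set v := (ω d d' α).2
  set t : ℝ := (d:ℝ) * d'
  have ht1 : 1 ≤ t := by
    have : 1 ≤ d * d' := Nat.mul_pos hd hd'
    simp only [t]; exact_mod_cast this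
  set n := Real.sqrt ((u:ℝ)^2 + (v:ℝ)^2)
  have hun : |(u:ℝ)| ≤ n := Real.abs_le_sqrt (by linarith [sq_nonneg (v:ℝ)])
  have hvn : |(v:ℝ)| ≤ n := Real.abs_le_sqrt (by linarith [sq_nonneg (u:ℝ)])
  have hFn := abs_Fbin_le a b c u v hun hvn
  rw [hF] at hFn
  push_cast at hFn
  have hDp : (1:ℝ) ≤ |(D:ℝ)| := by exact_mod_cast Int.one_le_abs hD
  have hsp : (1:ℝ) ≤ s := by exact_mod_cast hs
  rw [abs_mul, abs_mul, abs_of_nonneg (by positivity : (0:ℝ) ≤ ((d:ℝ)*d')^2), abs_of_nonneg (by positivity : (0:ℝ) ≤ (s:ℝ)^2)] at hFn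
  change t^2 * (|(D:ℝ)| * (s:ℝ)^2) ≤ A * n^4 at hFn
  have hv1 : (1:ℝ) ≤ |(v:ℝ)| := by exact_mod_cast Int.one_le_abs (psi_v_ne hΨ)
  have hn1 : 1 ≤ n := hv1.trans hvn
  have hntr : n ≤ Real.exp 1 * t := by
    apply Real.sqrt_le_iff.2
    refine ⟨by positivity, ?_⟩
    have h1 : ((u:ℝ)^2 + (v:ℝ)^2) ≤ 2 * t^2 := by simp only [t]; exact_mod_cast hth
    have h2 : 2 ≤ Real.exp 1 := by linarith [Real.add_one_le_exp (1:ℝ)]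
    have h3 : 2 * t ≤ Real.exp 1 * t := by gcongr
    have h4 := pow_le_pow_left₀ (by positivity) h3 2
    nlinarith [sq_nonneg t]
  have hlog : ∀ w : ℤ, |(w:ℝ)| ≤ n → Real.log |(w:ℝ)| ≤ 2 * max 1 (Real.log t) := by
    intro w hw
    rcases eq_or_ne w 0 with rfl | hw0
    · simp
    · have := Real.log_le_log (by positivity) (hw.trans hntr)
      rw [Real.log_mul (Real.exp_pos 1).ne' (by positivity), Real.log_exp] at this
      linarith [le_max_left 1 (Real.log t), le_max_right 1 (Real.log t)]
  have hht : ht u v ≤ 2 * max 1 (Real.log t) := by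
    rw [ht]
    refine max_le (by linarith [le_max_left 1 (Real.log t)]) (max_le (hlog u hun) (hlog v hvn))
  have hht1 : 1 ≤ ht u v := le_max_left _ _
  have e1 : max 1 (Real.log t)^(-j) ≤ 2^j * ht u v ^(-j) := by
    have : ht u v / 2 ≤ max 1 (Real.log t) := by linarith
    have h2 := Real.rpow_le_rpow_of_nonpos (by positivity : 0 < ht u v / 2) this (by linarith : -j ≤ 0)
    refine h2.trans (le_of_eq ?_)
    rw [Real.div_rpow (by linarith) (by norm_num), Real.rpow_neg (by norm_num : (0:ℝ) ≤ 2), div_inv_eq_mul, mul_comm]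
  have e2 : t^(2*k) * n^(-(4*k)) ≤ A^k * (|(D:ℝ)|⁻¹ * ((s:ℝ)^2)⁻¹) := by
    have h1 : (t^2 * (|(D:ℝ)| * (s:ℝ)^2))^k ≤ (A * n^4)^k := Real.rpow_le_rpow (by positivity) hFn (by linarith)
    rw [Real.mul_rpow (by positivity : (0:ℝ) ≤ t^2) (by positivity : (0:ℝ) ≤ |(D:ℝ)| * (s:ℝ)^2), Real.mul_rpow hA.le (by positivity : (0:ℝ) ≤ n^4)] at h1
    have h2 : (t^2:ℝ)^k = t^(2*k) := by
      rw [← Real.rpow_natCast, ← Real.rpow_mul (by positivity)]; norm_num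
    have h3 : (n^4:ℝ)^k = n^(4*k) := by
      rw [← Real.rpow_natCast, ← Real.rpow_mul (by positivity)]; norm_num
    rw [h2, h3] at h1
    have h4 : |(D:ℝ)| * (s:ℝ)^2 ≤ (|(D:ℝ)| * (s:ℝ)^2)^k := by
      have : 1 ≤ |(D:ℝ)| * (s:ℝ)^2 := by nlinarith
      conv_lhs => rw [← Real.rpow_one (|(D:ℝ)| * (s:ℝ)^2)]
      exact Real.rpow_le_rpow_of_exponent_le this hk
    rw [Real.rpow_neg (by positivity), ← div_eq_mul_inv, div_le_iff₀ (by positivity), ← mul_inv, mul_comm (A^k), mul_assoc, ← div_eq_inv_mul, le_div_iff₀ (by positivity)]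
    refine le_trans ?_ h1
    gcongr
  calc t^(2*k) * max 1 (Real.log t)^(-j) * n^(-(4*k)) = (t^(2*k) * n^(-(4*k))) * max 1 (Real.log t)^(-j) := by ring
    _ ≤ (A^k * (|(D:ℝ)|⁻¹ * ((s:ℝ)^2)⁻¹)) * (2^j * ht u v ^(-j)) := by gcongr
    _ = _ := by ring

theorem conv_of_rank {a b c : ℤ} (hf : DistinctRoots a b c) {ω : (d d' : ℕ) → ZMod (d^2) → ℤ × ℤ} (hω : IsShortestChoice a b c ω)
    {r : ℕ} (hr : ∀ D : ℤ, D ≠ 0 → ¬ ∃ P : Fin (r+1) → (twist a b c D).Point, LinearIndependent ℤ P)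
    {j : ℝ} (hj : (r:ℝ)/2 < j) (hj1 : 1 < j) {k : ℝ} (hk : 1 ≤ k) : QConv a b c j k ω := by
  classical
  obtain ⟨C2, hC2, hsum⟩ := sum_D hf hr hj
  obtain ⟨C, hC, hQ⟩ := QTerm_le hω (by linarith : 0 < j) hk
  have hex : ∀ x : QIdx a b c ω, ∃ (D : ℤ) (s : ℕ), Squarefree D ∧ 0 < s ∧
      Fbin a b c (ω x.1.1 x.1.2.1 x.1.2.2).1 (ω x.1.1 x.1.2.1 x.1.2.2).2 = ((x.1.1 * x.1.2.1 : ℕ):ℤ)^2 * (D * (s:ℤ)^2) := by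
    rintro ⟨⟨d, d', α⟩, hx⟩
    obtain ⟨-, -, m, hm⟩ := idx_facts hω hx
    have hΨ : ω d d' α ∈ Psi a b c := hx.2.2.2.2
    have hm0 : m ≠ 0 := by
      rintro rfl
      exact hΨ.2 (by rw [hm]; simp)
    obtain ⟨D, s, h1, h2, h3⟩ := sqdec m hm0
    exact ⟨D, s, h1, h2, by rw [← h3]; exact hm⟩
  choose Df sf hsq hs hF using hex
  let w : QIdx a b c ω → ℤ × ℤ := fun x => ω x.1.1 x.1.2.1 x.1.2.2
  have hS : Summable (fun q : ℤ × ℕ => (|(q.1:ℝ)|⁻¹ * (max 1 (Real.log |(q.1:ℝ)|))^(-j)) * ((q.2:ℝ)^2)⁻¹) := by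
    refine Summable.mul_of_nonneg (summable_logs hj1) (Real.summable_nat_pow_inv.2 (by norm_num)) ?_ ?_
    · intro D; positivity
    · intro D; positivity
  set M := ∑' q : ℤ × ℕ, (|(q.1:ℝ)|⁻¹ * (max 1 (Real.log |(q.1:ℝ)|))^(-j)) * ((q.2:ℝ)^2)⁻¹
  refine summable_of_sum_le (c := C * (C2 * M)) (fun x => QTerm_nonneg _ _ _ _) (fun S => ?_)
  have h1 : ∑ x ∈ S, QTerm j k ω x.1 ≤ ∑ x ∈ S, C * (|(Df x:ℝ)|⁻¹ * ((sf x:ℝ)^2)⁻¹ * (ht (w x).1 (w x).2)^(-j)) := by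
    refine Finset.sum_le_sum fun x _ => ?_
    exact hQ x.1 x.2 (Df x) (sf x) (hsq x).ne_zero (hs x) (hF x)
  refine h1.trans ?_
  rw [← Finset.mul_sum]
  gcongr
  let g : QIdx a b c ω → ℤ × ℕ := fun x => (Df x, sf x)
  rw [← Finset.sum_fiberwise_of_maps_to (s := S) (t := S.image g) (g := g) (fun x hx => Finset.mem_image_of_mem _ hx)]
  have h2 : ∀ q ∈ S.image g, ∑ x ∈ S.filter (fun x => g x = q), (|(Df x:ℝ)|⁻¹ * ((sf x:ℝ)^2)⁻¹ * (ht (w x).1 (w x).2)^(-j)) ≤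
      C2 * ((|(q.1:ℝ)|⁻¹ * (max 1 (Real.log |(q.1:ℝ)|))^(-j)) * ((q.2:ℝ)^2)⁻¹) := by
    intro q hq
    obtain ⟨x0, hx0, rfl⟩ := Finset.mem_image.1 hq
    have e : ∑ x ∈ S.filter (fun x => g x = g x0), (|(Df x:ℝ)|⁻¹ * ((sf x:ℝ)^2)⁻¹ * (ht (w x).1 (w x).2)^(-j)) =
       (|(Df x0:ℝ)|⁻¹ * ((sf x0:ℝ)^2)⁻¹) * ∑ p ∈ (S.filter (fun x => g x = g x0)).image w, (ht p.1 p.2)^(-j) := by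
      rw [Finset.sum_image, Finset.mul_sum]
      · refine Finset.sum_congr rfl fun x hx => ?_
        obtain ⟨-, hx⟩ := Finset.mem_filter.1 hx
        have := Prod.ext_iff.1 hx
        simp only [g] at this
        rw [this.1, this.2]
      · intro x hx y hy hxy
        obtain ⟨-, hx⟩ := Finset.mem_filter.1 hx
        obtain ⟨-, hy⟩ := Finset.mem_filter.1 hy
        have hg := Prod.ext_iff.1 (hx.trans hy.symm)
        simp only [g] at hg
        apply Subtype.ext
        refine idx_inj hω x.2 y.2 hxy ?_
        have f1 := hF x
        have f2 := hF y
        have hxy' : ω x.1.1 x.1.2.1 x.1.2.2 = ω y.1.1 y.1.2.1 y.1.2.2 := hxy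
        rw [hxy', f2, hg.1, hg.2] at f1
        have hne : Df y * (sf y:ℤ)^2 ≠ 0 := mul_ne_zero (hsq y).ne_zero (pow_ne_zero _ (by exact_mod_cast (hs y).ne'))
        have := mul_right_cancel₀ hne f1
        have this : ((y.1.1 * y.1.2.1 : ℕ))^2 = ((x.1.1 * x.1.2.1 : ℕ))^2 := by exact_mod_cast this
        exact (Nat.pow_left_injective two_ne_zero this).symm
    rw [e]
    have h3 := hsum (Df x0) (hsq x0) ((S.filter (fun x => g x = g x0)).image w) (by
      intro p hp
      obtain ⟨x, hx, rfl⟩ := Finset.mem_image.1 hp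
      obtain ⟨-, hx⟩ := Finset.mem_filter.1 hx
      have hg := Prod.ext_iff.1 hx
      simp only [g] at hg
      refine ⟨x.2.2.2.2.2, ((x.1.1 * x.1.2.1 : ℕ):ℤ) * sf x, ?_⟩
      have := hF x
      rw [← hg.1]
      simp only [w]
      rw [this]; ring)
    calc _ ≤ (|(Df x0:ℝ)|⁻¹ * ((sf x0:ℝ)^2)⁻¹) * (C2 * (max 1 (Real.log |(Df x0:ℝ)|))^(-j)) := by gcongr
      _ = _ := by simp only [g]; ring
  refine (Finset.sum_le_sum h2).trans ?_
  rw [← Finset.mul_sum]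
  gcongr
  exact hS.sum_le_tsum _ (fun q _ => by positivity)


theorem fg_bound {a b c : ℤ} (hf : DistinctRoots a b c) : ∃ C : ℝ, 0 < C ∧ ∀ x : ℝ,
    (max 1 |x|)^4 ≤ C * (|x^3 + a*x^2 + b*x + c| + |x^4 - 2*b*x^2 - 8*c*x + b^2 - 4*a*c|) := by
  set N : ℝ := 1 + 2*|(b:ℝ)| + 8*|(c:ℝ)| + |(b:ℝ)^2 - 4*a*c|
  have hN : 1 ≤ N := by have := abs_nonneg (b:ℝ); have := abs_nonneg (c:ℝ); have := abs_nonneg ((b:ℝ)^2 - 4*a*c); simp only [N]; linarith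
  have hcont : Continuous (fun x : ℝ => |x^3 + a*x^2 + b*x + c| + |x^4 - 2*b*x^2 - 8*c*x + b^2 - 4*a*c|) := by fun_prop
  obtain ⟨x0, hx0, hmin⟩ := (isCompact_Icc (a := -(2*N)) (b := 2*N)).exists_isMinOn ⟨0, by constructor <;> linarith⟩ hcont.continuousOn
  set m := |x0^3 + a*x0^2 + b*x0 + c| + |x0^4 - 2*b*x0^2 - 8*c*x0 + b^2 - 4*a*c|
  have hm : 0 < m := by
    rcases lt_or_eq_of_le (by positivity : 0 ≤ m) with h | h
    · exact h
    exfalso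
    have h1 : x0^3 + a*x0^2 + b*x0 + c = 0 := by
      rw [← abs_eq_zero]; linarith [abs_nonneg (x0^3 + a*x0^2 + b*x0 + c), abs_nonneg (x0^4 - 2*b*x0^2 - 8*c*x0 + b^2 - 4*a*c)]
    have h2 : x0^4 - 2*b*x0^2 - 8*c*x0 + b^2 - 4*a*c = 0 := by
      rw [← abs_eq_zero]; linarith [abs_nonneg (x0^3 + a*x0^2 + b*x0 + c), abs_nonneg (x0^4 - 2*b*x0^2 - 8*c*x0 + b^2 - 4*a*c)]
    have h3 : (3*x0^2+2*a*x0+b)^2 = 0 := by linear_combination h2 + (8*x0+4*a)*h1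
    have h3 : (3*x0^2+2*a*x0+b) = 0 := by simpa using h3
    obtain ⟨r, s, t, h12, h13, h23, h⟩ := hf
    have e0 := h 0
    have e1 := h 1
    have e2 := h (-1)
    have ec : (c:ℂ) = -(r*s*t) := by linear_combination e0
    have ea : (a:ℂ) = -(r+s+t) := by linear_combination (e1+e2)/2 - e0
    have eb : (b:ℂ) = r*s+r*t+s*t := by linear_combination (e1-e2)/2
    have h1' : ((x0:ℂ)-r)*(x0-s)*(x0-t) = 0 := by
      rw [← h]; exact_mod_cast congrArg (fun z : ℝ => (z:ℂ)) h1
    have h3' : (3*(x0:ℂ)^2+2*a*x0+b) = 0 := by exact_mod_cast congrArg (fun z : ℝ => (z:ℂ)) h3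
    rw [ea, eb] at h3'
    rcases mul_eq_zero.1 h1' with h4 | h4
    · rcases mul_eq_zero.1 h4 with h5 | h5
      · rw [sub_eq_zero.1 h5] at h3'
        have : (r-s)*(r-t) = 0 := by linear_combination h3'
        rcases mul_eq_zero.1 this with h | h
        · exact h12 (sub_eq_zero.1 h)
        · exact h13 (sub_eq_zero.1 h)
      · rw [sub_eq_zero.1 h5] at h3'
        have : (s-r)*(s-t) = 0 := by linear_combination h3'
        rcases mul_eq_zero.1 this with h | h
        · exact h12 (sub_eq_zero.1 h).symm
        · exact h23 (sub_eq_zero.1 h)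
    · rw [sub_eq_zero.1 h4] at h3'
      have : (t-r)*(t-s) = 0 := by linear_combination h3'
      rcases mul_eq_zero.1 this with h | h
      · exact h13 (sub_eq_zero.1 h).symm
      · exact h23 (sub_eq_zero.1 h).symm
  refine ⟨2 + (2*N)^4/m, by positivity, fun x => ?_⟩
  by_cases hx : |x| ≤ 2*N
  · have h1 : m ≤ |x^3 + a*x^2 + b*x + c| + |x^4 - 2*b*x^2 - 8*c*x + b^2 - 4*a*c| := hmin (abs_le.1 hx)
    have h2 : (max 1 |x|)^4 ≤ (2*N)^4 := by gcongr; exact max_le (by linarith) hx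
    calc (max 1 |x|)^4 ≤ (2*N)^4 / m * m := by rw [div_mul_cancel₀ _ hm.ne']; exact h2
      _ ≤ (2 + (2*N)^4/m) * (|x^3 + a*x^2 + b*x + c| + |x^4 - 2*b*x^2 - 8*c*x + b^2 - 4*a*c|) := by gcongr; linarith
  · push Not at hx
    have hx1 : 1 ≤ |x| := by linarith
    rw [max_eq_right hx1]
    have h1 : |2*b*x^2 + 8*c*x - (b^2 - 4*a*c)| ≤ N * |x|^3 := by
      have hx2 : |x|^2 ≤ |x|^3 := pow_le_pow_right₀ hx1 (by norm_num)
      have hx3 : |x|^1 ≤ |x|^3 := pow_le_pow_right₀ hx1 (by norm_num)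
      have hx4 : 1 ≤ |x|^3 := one_le_pow₀ hx1
      rw [pow_one] at hx3
      calc |2*b*x^2 + 8*c*x - (b^2 - 4*a*c)| ≤ |2*b*x^2| + |8*c*x| + |(b:ℝ)^2 - 4*a*c| := (abs_sub _ _).trans (by gcongr; exact abs_add_le _ _)
        _ = 2*|(b:ℝ)| * |x|^2 + 8*|(c:ℝ)| * |x| + |(b:ℝ)^2 - 4*a*c| * 1 := by simp [abs_mul]
        _ ≤ 2*|(b:ℝ)| * |x|^3 + 8*|(c:ℝ)| * |x|^3 + |(b:ℝ)^2 - 4*a*c| * |x|^3 := by gcongr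
        _ ≤ N * |x|^3 := by simp only [N]; nlinarith
    have h2 : |x|^4 - N * |x|^3 ≤ |x^4 - 2*b*x^2 - 8*c*x + b^2 - 4*a*c| := by
      have : x^4 - 2*b*x^2 - 8*c*x + b^2 - 4*a*c = x^4 - (2*b*x^2 + 8*c*x - (b^2 - 4*a*c)) := by ring
      rw [this]
      have h5 := abs_sub_abs_le_abs_sub (x^4) (2*b*x^2 + 8*c*x - (b^2 - 4*a*c))
      rw [abs_pow] at h5
      linarith
    have h3 : N * |x|^3 ≤ |x|^4 / 2 := by
      have : |x|^4 = |x| * |x|^3 := by ring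
      rw [this]
      have : 0 ≤ |x|^3 := by positivity
      nlinarith
    have h6 : 0 ≤ (2*N)^4/m * (|x^3 + a*x^2 + b*x + c| + |x^4 - 2*b*x^2 - 8*c*x + b^2 - 4*a*c|) := by positivity
    nlinarith [abs_nonneg (x^3 + a*x^2 + b*x + c)]

/-- bounded shift -/
theorem shift_bdd {a b c D : ℤ} (S : (twist a b c D).Point) (hS : S ≠ 0) :
    ∃ K : ℝ, ∀ A : (twist a b c D).Point, (A ≠ 0 ∧ |((xx A : ℚ):ℝ)| ≤ K) ∨ (A + S ≠ 0 ∧ |((xx (A+S) : ℚ):ℝ)| ≤ K) := by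
  obtain ⟨X₂, Y₂, h₂, rfl⟩ := (tw_cases S).resolve_left hS
  set p : ℚ := a*D
  set q : ℚ := b*D^2
  set s : ℚ := c*D^3
  set B : ℚ := 1 + 2*|X₂|
  set M : ℚ := 1 + |p| + |q| + |s|
  set K' : ℚ := 4 * (2*(M+1)*|Y₂| + Y₂^2 + |X₂| + |q + X₂^2 + 2*p*X₂| + |s - X₂^3 - p*X₂^2|) 
  have hK' : 0 ≤ K' := by positivity
  have hB : 1 ≤ B := by simp only [B]; linarith [abs_nonneg X₂]
  have hM : 1 ≤ M := by simp only [M]; linarith [abs_nonneg p, abs_nonneg q, abs_nonneg s]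
  have hB2 : |X₂| ≤ B := by simp only [B]; linarith [abs_nonneg X₂]
  have red : ∀ X : ℚ, |X| ≤ B + K' → |((X / D : ℚ) : ℝ)| ≤ (((B + K')/|(D:ℚ)| : ℚ) : ℝ) := by
    intro X hX
    rw [← Rat.cast_abs, Rat.cast_le, abs_div]
    gcongr
  refine ⟨(((B + K')/|(D:ℚ)| : ℚ) : ℝ), fun A => ?_⟩
  rcases tw_cases A with rfl | ⟨X₁, Y₁, h₁, rfl⟩
  · right
    rw [zero_add]
    exact ⟨hS, by rw [xx_some]; exact red _ (by linarith)⟩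
  by_cases hX : |X₁| ≤ B
  · left
    exact ⟨by simp, by rw [xx_some]; exact red _ (by linarith)⟩
  · right
    push Not at hX
    have hne : X₁ ≠ X₂ := by rintro rfl; linarith
    obtain ⟨Y, h, e⟩ := tw_add h₁ h₂ hne
    rw [e]
    refine ⟨by simp, ?_⟩
    rw [xx_some]
    apply red
    have e1 := tw_eq h₁
    have hx1 : 1 ≤ |X₁| := by linarith
    have hY : |Y₁| ≤ (M+1) * |X₁|^2 := by
      refine abs_le_of_sq_le_sq ?_ (by positivity)
      have h34 : |X₁|^3 ≤ |X₁|^4 := pow_le_pow_right₀ hx1 (by norm_num)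
      have h24 : |X₁|^2 ≤ |X₁|^4 := pow_le_pow_right₀ hx1 (by norm_num)
      have h14 : |X₁|^1 ≤ |X₁|^4 := pow_le_pow_right₀ hx1 (by norm_num)
      have h04 : 1 ≤ |X₁|^4 := one_le_pow₀ hx1
      rw [pow_one] at h14
      calc Y₁^2 = X₁^3 + p*X₁^2 + q*X₁ + s := e1
        _ ≤ |X₁|^3 + |p| * |X₁|^2 + |q| * |X₁| + |s| *1 := by
          rw [← abs_pow, ← abs_pow, ← abs_mul, ← abs_mul, mul_one]
          gcongr <;> exact le_abs_self _
        _ ≤ |X₁|^4 + |p| * |X₁|^4 + |q| * |X₁|^4 + |s| * |X₁|^4 := by gcongr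
        _ = M * |X₁|^4 := by simp only [M]; ring
        _ ≤ (M+1)^2 * |X₁|^4 := by gcongr; nlinarith
        _ = _ := by ring
    have hd : |X₁|^2 / 4 ≤ (X₁-X₂)^2 := by
      have h5 := abs_sub_abs_le_abs_sub X₁ X₂
      have h6 : |X₁|/2 ≤ |X₁ - X₂| := by simp only [B] at hX; linarith
      rw [← sq_abs (X₁-X₂)]
      calc |X₁|^2/4 = (|X₁|/2)^2 := by ring
        _ ≤ _ := by gcongr
    have hpos : 0 < (X₁-X₂)^2 := by have := sub_ne_zero.2 hne; positivity
    have e2 : ((Y₁-Y₂)/(X₁-X₂))^2 - p - X₁ - X₂ =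
       (-(2*Y₂*Y₁) + Y₂^2 + X₂*X₁^2 + (q + X₂^2 + 2*p*X₂)*X₁ + (s - X₂^3 - p*X₂^2)) / (X₁-X₂)^2 := by
      have := sub_ne_zero.2 hne
      rw [eq_div_iff hpos.ne']
      field_simp
      change Y₁^2 = X₁^3 + p*X₁^2 + q*X₁ + s at e1
      linear_combination e1
    change |((Y₁-Y₂)/(X₁-X₂))^2 - p - X₁ - X₂| ≤ B + K'
    rw [e2, abs_div, abs_of_pos hpos, div_le_iff₀ hpos]
    have h02 : 1 ≤ |X₁|^2 := one_le_pow₀ hx1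
    have h12 : |X₁|^1 ≤ |X₁|^2 := pow_le_pow_right₀ hx1 (by norm_num)
    rw [pow_one] at h12
    calc _ ≤ |-(2*Y₂*Y₁)| + |Y₂^2| + |X₂*X₁^2| + |(q + X₂^2 + 2*p*X₂)*X₁| + |s - X₂^3 - p*X₂^2| := by
          refine (abs_add_le _ _).trans ?_
          gcongr
          refine (abs_add_le _ _).trans ?_
          gcongr
          refine (abs_add_le _ _).trans ?_
          gcongr
          exact abs_add_le _ _
      _ = 2*|Y₂| * |Y₁| + Y₂^2 * 1 + |X₂| * |X₁|^2 + |q + X₂^2 + 2*p*X₂| * |X₁| + |s - X₂^3 - p*X₂^2| * 1 := by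
          simp [abs_mul]
      _ ≤ 2*|Y₂| *((M+1) * |X₁|^2) + Y₂^2 * |X₁|^2 + |X₂| * |X₁|^2 + |q + X₂^2 + 2*p*X₂| * |X₁|^2 + |s - X₂^3 - p*X₂^2| * |X₁|^2 := by gcongr
      _ = K' * (|X₁|^2/4) := by simp only [K']; ring
      _ ≤ (B + K') * (X₁-X₂)^2 := by gcongr; linarith


/-- points away from two-torsion and infinity -/
def GoodP {a b c D : ℤ} (c1 : ℝ) (Q : (twist a b c D).Point) : Prop :=
  ∃ X Y h, Q = .some X Y h ∧ Y ≠ 0 ∧ c1 * Real.exp (nh Q)^4 ≤ |(Fbin a b c (xx Q).num (xx Q).den : ℝ)|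

theorem exp_nh {a b c D : ℤ} (Q : (twist a b c D).Point) :
    Real.exp (nh Q) = (xx Q).den * max 1 |((xx Q : ℚ) : ℝ)| := by
  have h0 : 0 < (max (xx Q).num.natAbs (xx Q).den : ℕ) := lt_max_of_lt_right (xx Q).den_pos
  rw [nh_num_den, Real.exp_log (by exact_mod_cast h0)]
  set q := xx Q
  have hd : (0:ℝ) < q.den := by exact_mod_cast q.den_pos
  have e : (q:ℝ) = q.num / q.den := by exact_mod_cast (Rat.num_div_den q).symm
  rw [e, abs_div, abs_of_pos hd, mul_max_of_nonneg _ _ hd.le, mul_div_cancel₀ _ hd.ne', mul_one, max_comm]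
  rw [Nat.cast_max, Nat.cast_natAbs, Int.cast_abs]

theorem good_of_dbl {a b c : ℤ} (hf : DistinctRoots a b c) {D : ℤ} (hD : D ≠ 0) (K : ℝ) :
    ∃ c1 : ℝ, 0 < c1 ∧ ∀ P : (twist a b c D).Point, P + P ≠ 0 → |((xx (P+P) : ℚ) : ℝ)| ≤ K → GoodP c1 P := by
  obtain ⟨C, hC, hb⟩ := fg_bound hf
  refine ⟨(C * (1 + 4 * |K|))⁻¹, by positivity, fun P hP hK => ?_⟩
  have hDq : (D:ℚ) ≠ 0 := by exact_mod_cast hD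
  rcases tw_cases P with rfl | ⟨X, Y, h, rfl⟩
  · simp at hP
  have hY : Y ≠ 0 := by
    rintro rfl
    exact hP (tw_dbl0 h)
  refine ⟨X, Y, h, rfl, hY, ?_⟩
  obtain ⟨Y', h', e⟩ := tw_dbl h hY
  rw [e, xx_some] at hK
  have he := tw_eq h
  rw [exp_nh]
  have hF := Fbin_cast a b c (xx (.some X Y h : (twist a b c D).Point)).num (xx (.some X Y h : (twist a b c D).Point)).den (by exact_mod_cast (xx _).den_nz)
  set q := xx (.some X Y h : (twist a b c D).Point) with hq
  rw [Int.cast_natCast, Rat.num_div_den] at hF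
  have hF' : (Fbin a b c q.num q.den : ℝ) = (q.den:ℝ)^4 * ((q:ℝ)^3 + a*(q:ℝ)^2 + b*q + c) := by exact_mod_cast hF
  rw [hF', abs_mul, abs_of_nonneg (by positivity : (0:ℝ) ≤ (q.den:ℝ)^4), mul_pow]
  have hX : X = D * q := by rw [hq, xx_some]; field_simp
  have hfe : Y^2 = D^3 * (q^3 + a*q^2+b*q+c) := by rw [he, hX]; ring
  have hg : (((3*X^2+2*a*D*X+b*D^2)/(2*Y))^2 - a*D - X - X)/D * (4 * (q^3 + a*q^2+b*q+c)) = q^4 - 2*b*q^2 - 8*c*q + b^2 - 4*a*c := by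
    have : (q^3 + a*q^2+b*q+c) = Y^2 / D^3 := by rw [hfe]; field_simp
    have h1 : q^4 - 2*b*q^2 - 8*c*q + b^2 - 4*a*c = (3*q^2+2*a*q+b)^2 - (8*q+4*a)*(q^3 + a*q^2+b*q+c) := by ring
    rw [h1, this, hX]
    field_simp
    ring
  have hg' : (((((3*X^2+2*a*D*X+b*D^2)/(2*Y))^2 - a*D - X - X)/D : ℚ):ℝ) * (4 * ((q:ℝ)^3 + a*(q:ℝ)^2+b*q+c)) = (q:ℝ)^4 - 2*b*(q:ℝ)^2 - 8*c*q + b^2 - 4*a*c := by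
    exact_mod_cast congrArg (fun z : ℚ => (z:ℝ)) hg
  have h2 := hb q
  rw [← hg', abs_mul, abs_mul] at h2
  have h3 : (max 1 |(q:ℝ)|)^4 ≤ C * (1 + 4 * |K|) * |(q:ℝ)^3 + a*(q:ℝ)^2+b*q+c| := by
    refine h2.trans ?_
    rw [mul_assoc C]
    refine mul_le_mul_of_nonneg_left ?_ hC.le
    have := mul_le_mul_of_nonneg_right (hK.trans (le_abs_self K)) (abs_nonneg ((q:ℝ)^3 + a*(q:ℝ)^2+b*q+c))
    rw [abs_of_pos (by norm_num : (0:ℝ) < 4)]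
    nlinarith
  have hd : (0:ℝ) ≤ (q.den:ℝ)^4 := by positivity
  have hc : (0:ℝ) < C * (1 + 4 * |K|) := by positivity
  calc (C * (1 + 4 * |K|))⁻¹ * ((q.den:ℝ)^4 * (max 1 |(q:ℝ)|)^4) = (q.den:ℝ)^4 * ((C * (1 + 4 * |K|))⁻¹ * (max 1 |(q:ℝ)|)^4) := by ring
    _ ≤ _ := by
      gcongr
      rw [inv_mul_le_iff₀ hc]; exact h3

theorem good_pt {a b c : ℤ} (hf : DistinctRoots a b c) {D : ℤ} (hD : D ≠ 0) {R : (twist a b c D).Point} (hR : R + R ≠ 0) :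
    ∃ c1 : ℝ, 0 < c1 ∧ ∀ P : (twist a b c D).Point, GoodP c1 P ∨ GoodP c1 (P + R) := by
  obtain ⟨K, hK⟩ := shift_bdd (R+R) hR
  obtain ⟨c1, hc, h⟩ := good_of_dbl hf hD K
  refine ⟨c1, hc, fun P => ?_⟩
  rcases hK (P+P) with h1 | h1
  · left; exact h _ h1.1 h1.2
  · right
    have e : P + P + (R + R) = (P+R) + (P+R) := by abel
    rw [e] at h1
    exact h _ h1.1 h1.2

/-- analysis lemma -/
theorem not_summable_box {ρ : ℕ} (hρ : 0 < ρ) (g : (Fin ρ → ℕ) → ℝ) (c : ℝ) (hc : 0 < c)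
    (bad : Finset (Fin ρ → ℕ))
    (h : ∀ N : ℕ, 0 < N → ∀ n : Fin ρ → ℕ, (∀ i, n i < N) → n ∉ bad → c * ((N:ℝ)^ρ)⁻¹ ≤ g n) : ¬ Summable g := by
  classical
  intro hs
  obtain ⟨s0, hs0⟩ := hs.vanishing (Iio_mem_nhds (by positivity : (0:ℝ) < c/2))
  set N := 2 * (s0.card + bad.card + 1)
  have hN : 0 < N := by positivity
  set box : Finset (Fin ρ → ℕ) := Fintype.piFinset (fun _ => Finset.range N)
  have hbox : box.card = N^ρ := by simp [box]
  set t := box \ (s0 ∪ bad)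
  have ht : Disjoint t s0 := by
    rw [Finset.disjoint_left]; intro x hx hx2
    simp [t] at hx; exact hx.2.1 hx2
  have h1 := hs0 t ht
  rw [Set.mem_Iio] at h1
  have h2 : (t.card:ℝ) * (c * ((N:ℝ)^ρ)⁻¹) ≤ ∑ n ∈ t, g n := by
    rw [← nsmul_eq_mul]
    apply Finset.card_nsmul_le_sum
    intro n hn
    simp only [t, Finset.mem_sdiff, Finset.mem_union, not_or] at hn
    refine h N hN n (fun i => ?_) hn.2.2
    have := Fintype.mem_piFinset.1 hn.1 i
    simpa using this
  have h3 : N^ρ ≤ 2 * t.card := by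
    have h4 : box.card ≤ t.card + (s0 ∪ bad).card := by
      have := Finset.le_card_sdiff (s0 ∪ bad) box
      simp only [t]; omega
    have h5 := Finset.card_union_le s0 bad
    have h6 : N ≤ N^ρ := Nat.le_self_pow hρ.ne' N
    have h7 : N = 2 * (s0.card + bad.card + 1) := rfl
    omega
  have h3' : (N:ℝ)^ρ ≤ 2 * t.card := by exact_mod_cast h3
  have hp : (0:ℝ) < (N:ℝ)^ρ := by positivity
  have h8 : c/2 ≤ (t.card:ℝ) * (c * ((N:ℝ)^ρ)⁻¹) := by
    rw [← mul_assoc, ← div_eq_mul_inv, le_div_iff₀ hp]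
    nlinarith
  linarith


theorem idx_exists {a b c : ℤ} {u v D : ℤ} (hcop : IsCoprime u v) (hD : D ≠ 0) {t : ℚ} (hF : (Fbin a b c u v : ℚ) = D * t^2)
    (hF0 : Fbin a b c u v ≠ 0) : ∃ (d d' : ℕ) (α : ZMod (d^2)), 0 < d ∧ 0 < d' ∧ Nat.Coprime d d' ∧ α ∈ OmegaSet a b c d ∧
      (u, v) ∈ latL d d' α ∧ |Fbin a b c u v| ≤ |D| * ((d:ℤ)*d')^2 ∧ ((d:ℤ)*d')^2 ≤ |Fbin a b c u v| := by
  set w := u^3 + a*u^2*v + b*u*v^2 + c*v^3 with hw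
  have hFw : Fbin a b c u v = v * w := rfl
  have hv0 : v ≠ 0 := by intro h; rw [hFw, h, zero_mul] at hF0; exact hF0 rfl
  have hw0 : w ≠ 0 := by intro h; rw [hFw, h, mul_zero] at hF0; exact hF0 rfl
  have hvw : IsCoprime v w := by
    have h1 : IsCoprime v (u^3) := hcop.symm.pow_right
    have h2 := h1.add_mul_left_right (a*u^2+b*u*v+c*v^2)
    have : w = u^3 + v * (a*u^2+b*u*v+c*v^2) := by rw [hw]; ring
    rw [this]; exact h2
  obtain ⟨e1, d', hs1, hd', he1⟩ := sqdec v hv0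
  obtain ⟨e2, d, hs2, hd, he2⟩ := sqdec w hw0
  have hdv : IsCoprime (d:ℤ) v := by
    refine hvw.symm.of_isCoprime_of_dvd_left ⟨e2 * d, by rw [he2]; ring⟩
  have hdd : IsCoprime (d:ℤ) d' := hdv.of_isCoprime_of_dvd_right ⟨e1 * d', by rw [he1]; ring⟩
  have hee : IsCoprime e1 e2 := by
    refine (hvw.of_isCoprime_of_dvd_left ⟨(d':ℤ)^2, he1⟩).of_isCoprime_of_dvd_right ⟨(d:ℤ)^2, he2⟩
  have hsq : Squarefree (e1*e2) := (Int.squarefree_natAbs.1 (by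
    rw [Int.natAbs_mul, Nat.squarefree_mul]
    · exact ⟨Int.squarefree_natAbs.2 hs1, Int.squarefree_natAbs.2 hs2⟩
    · exact Int.isCoprime_iff_gcd_eq_one.1 hee))
  have hFe : Fbin a b c u v = (e1*e2) * ((d:ℤ)*d')^2 := by rw [hFw, he1, he2]; ring
  have ht0 : t ≠ 0 := by rintro rfl; apply hF0; simp at hF; exact hF
  have hdr : (0:ℤ) < (d:ℤ) := by exact_mod_cast hd
  have hdr' : (0:ℤ) < (d':ℤ) := by exact_mod_cast hd'
  obtain ⟨n, -, hn⟩ := sqfree_int (F := D) hsq (t := (d*d')/t) (by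
    rw [div_pow, mul_div_assoc', eq_div_iff (by positivity), ← hF, hFe]; push_cast; ring)
  have hn0 : n ≠ 0 := by rintro rfl; simp at hn; exact hD hn
  have hle : |e1*e2| ≤ |D| := by
    have hab := abs_mul (e1*e2) (n^2)
    rw [← hn] at hab
    have : 1 ≤ |n^2| := Int.one_le_abs (pow_ne_zero _ hn0)
    nlinarith [abs_nonneg (e1*e2)]
  have he0 : e1*e2 ≠ 0 := hsq.ne_zero
  have hu : IsUnit ((v : ℤ) : ZMod (d^2)) := by
    have h3 : IsCoprime ((d:ℤ)^2) v := hdv.pow_left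
    obtain ⟨s, t, hst⟩ := h3
    have := congrArg (fun z : ℤ => (z : ZMod (d^2))) hst
    push_cast at this
    have h0 : ((d:ZMod (d^2)))^2 = 0 := by
      have := ZMod.natCast_self (d^2)
      push_cast at this; exact this
    rw [h0, mul_zero, zero_add] at this
    exact IsUnit.of_mul_eq_one_right _ this
  obtain ⟨z, hz⟩ := hu
  have hz1 : ((z⁻¹ : (ZMod (d^2))ˣ) : ZMod (d^2)) * (v : ZMod (d^2)) = 1 := by rw [← hz]; simp
  refine ⟨d, d', (u : ZMod (d^2)) * ((z⁻¹ : (ZMod (d^2))ˣ) : ZMod (d^2)), hd, hd', Nat.isCoprime_iff_coprime.1 hdd, ?_, ⟨?_, ?_⟩, ?_, ?_⟩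
  · set y := ((z⁻¹ : (ZMod (d^2))ˣ) : ZMod (d^2))
    have hw2 : ((w : ℤ) : ZMod (d^2)) = 0 := by
      rw [ZMod.intCast_zmod_eq_zero_iff_dvd, he2]
      push_cast; exact Dvd.intro_left _ rfl
    rw [hw] at hw2
    push_cast at hw2
    change (u*y)^3 + (a : ZMod (d^2))*(u*y)^2 + (b : ZMod (d^2))*(u*y) + (c : ZMod (d^2)) = 0
    set U : ZMod (d^2) := (u : ZMod (d^2))
    set V : ZMod (d^2) := (v : ZMod (d^2))
    set A : ZMod (d^2) := (a : ZMod (d^2))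
    set B : ZMod (d^2) := (b : ZMod (d^2))
    set C : ZMod (d^2) := (c : ZMod (d^2))
    linear_combination y^3 * hw2 - (A*U^2*y^2 + B*U*y*(y*V+1) + C*(y^2*V^2+y*V+1)) * hz1
  · change (u : ZMod (d^2)) = _ * (v : ZMod (d^2))
    rw [mul_assoc, hz1, mul_one]
  · change (d':ℤ)^2 ∣ v
    rw [he1]; exact Dvd.intro_left _ rfl
  · rw [hFe, abs_mul, abs_of_nonneg (by positivity : (0:ℤ) ≤ ((d:ℤ)*d')^2)]
    gcongr
  · rw [hFe, abs_mul, abs_of_nonneg (by positivity : (0:ℤ) ≤ ((d:ℤ)*d')^2)]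
    have := Int.one_le_abs he0
    nlinarith [sq_nonneg ((d:ℤ)*d')]

theorem short_eq {a b c : ℤ} {ω : (d d' : ℕ) → ZMod (d^2) → ℤ × ℤ} (hω : IsShortestChoice a b c ω)
    {u v : ℤ} (hcop : IsCoprime u v) {d d' : ℕ} {α : ZMod (d^2)} (hd : 0 < d) (hd' : 0 < d') (hc : Nat.Coprime d d')
    (hα : α ∈ OmegaSet a b c d) (hL : (u,v) ∈ latL d d' α) (hs : u^2 + v^2 < ((d:ℤ)*d')^2) :
    ω d d' α = (u, v) ∨ ω d d' α = (-u, -v) := by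
  obtain ⟨⟨h1, h2⟩, h0, hmin⟩ := hω d d' hd hd' hc α hα
  have hne : (u,v) ≠ (0:ℤ×ℤ) := by
    intro h
    obtain ⟨rfl, rfl⟩ := Prod.ext_iff.1 h
    obtain ⟨x, y, h⟩ := hcop
    simp at h
  have hm := hmin _ hL hne
  obtain ⟨k1, k2⟩ := hL
  simp only at k1 k2 hm
  clear hmin
  generalize ω d d' α = z at *
  obtain ⟨p, q⟩ := z
  simp only at h1 h2 hm
  have hdet1 : (d:ℤ)^2 ∣ u*q - v*p := by
    have : ((u*q - v*p : ℤ) : ZMod (d^2)) = 0 := by push_cast; rw [k1, h1]; ring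
    rw [ZMod.intCast_zmod_eq_zero_iff_dvd] at this
    exact_mod_cast this
  have hdet2 : (d':ℤ)^2 ∣ u*q - v*p := dvd_sub (h2.mul_left _) (k2.mul_right _)
  have hdet : ((d:ℤ)*d')^2 ∣ u*q - v*p := by
    rw [mul_pow]
    exact (Nat.isCoprime_iff_coprime.2 hc).pow.mul_dvd hdet1 hdet2
  have hz : u*q - v*p = 0 := by
    by_contra hne
    have hle := Int.le_of_dvd (abs_pos.2 hne) ((dvd_abs _ _).2 hdet)
    have : |u*q - v*p| ≤ u^2+v^2 := by
      rw [abs_le]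
      constructor
      · nlinarith [sq_nonneg (u+q), sq_nonneg (v-p)]
      · nlinarith [sq_nonneg (u-q), sq_nonneg (v+p)]
    linarith
  obtain ⟨x, y, hxy⟩ := hcop
  set k := x*p + y*q
  have hp : p = k * u := by simp only [k]; linear_combination -p*hxy - y * hz
  have hq : q = k * v := by simp only [k]; linear_combination -q*hxy + x * hz
  have hk0 : k ≠ 0 := by
    intro hk
    rw [hk] at hp hq
    apply h0
    rw [hp, hq]; simp
  have huv : 0 < u^2 + v^2 := by
    rcases eq_or_ne u 0 with rfl | hu
    · rcases eq_or_ne v 0 with rfl | hv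
      · simp at hne
      · positivity
    · positivity
  have hk1 : k^2 ≤ 1 := by
    rw [hp, hq] at hm
    have : k^2 * (u^2+v^2) ≤ 1 * (u^2+v^2) := by linarith
    exact le_of_mul_le_mul_right this huv
  have hk2 : |k| ≤ 1 := (sq_le_one_iff_abs_le_one k).1 hk1
  rw [abs_le] at hk2
  have : k = 1 ∨ k = -1 := by omega
  rcases this with h | h
  · left; rw [hp, hq, h]; simp
  · right; rw [hp, hq, h]; simp


theorem idx_good {a b c : ℤ} {ω : (d d' : ℕ) → ZMod (d^2) → ℤ × ℤ} (hω : IsShortestChoice a b c ω) {j k : ℝ} (hj : 0 < j) (hk : 1 ≤ k)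
    {D : ℤ} (hD : D ≠ 0) {c1 : ℝ} (hc1 : 0 < c1) : ∃ c2 C3 C4 : ℝ, 0 < c2 ∧ 0 ≤ C3 ∧ ∀ Q : (twist a b c D).Point, GoodP c1 Q → C4 < nh Q →
      ∃ x ∈ QIdx a b c ω, (ω x.1 x.2.1 x.2.2 = ((xx Q).num, ((xx Q).den:ℤ)) ∨ ω x.1 x.2.1 x.2.2 = (-(xx Q).num, -((xx Q).den:ℤ))) ∧
        c2 * (max 1 (2 * nh Q + C3))^(-j) ≤ QTerm j k ω x := by
  set A := 1 + |(a:ℝ)| + |(b:ℝ)| + |(c:ℝ)|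
  have hA : 1 ≤ A := by simp only [A]; linarith [abs_nonneg (a:ℝ), abs_nonneg (b:ℝ), abs_nonneg (c:ℝ)]
  have hDp : (0:ℝ) < |(D:ℝ)| := by positivity
  set κ := Real.sqrt (|(D:ℝ)|/c1)
  have hκ : 0 < κ := Real.sqrt_pos.2 (by positivity)
  have hκ2 : κ^2 = |(D:ℝ)|/c1 := Real.sq_sqrt (by positivity)
  refine ⟨(2*κ)^(-(2*k)), Real.log A, 2*κ^2, by positivity, Real.log_nonneg hA, fun Q hQ hC4 => ?_⟩
  obtain ⟨X, Y, h, rfl, hY, hg⟩ := hQ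
  have hDq : (D:ℚ) ≠ 0 := by exact_mod_cast hD
  have hF := Fbin_of_pt hD h
  rw [← xx_some h] at hF
  have hb := nh_bounds (.some X Y h : (twist a b c D).Point)
  set q := xx (.some X Y h : (twist a b c D).Point)
  set nn := nh (.some X Y h : (twist a b c D).Point)
  set E := Real.exp nn
  have hE : 2*κ^2 < E := by linarith [Real.add_one_le_exp nn]
  have hnn : 0 ≤ nn := nh_nonneg _
  have hE1 : 1 ≤ E := Real.one_le_exp hnn
  have hF0 : Fbin a b c q.num q.den ≠ 0 := by
    intro h0
    rw [h0] at hg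
    have : 0 < c1 * E^4 := by positivity
    simp at hg; linarith
  have hcop : IsCoprime q.num (q.den:ℤ) := by
    rw [Int.isCoprime_iff_gcd_eq_one]; exact q.reduced
  obtain ⟨d, d', α, hd, hd', hc, hα, hL, hle1, hle2⟩ := idx_exists hcop hD hF hF0
  have hle1 : |(Fbin a b c q.num q.den : ℝ)| ≤ |(D:ℝ)| * ((d:ℝ)*d')^2 := by exact_mod_cast hle1
  have hle2 : ((d:ℝ)*d')^2 ≤ |(Fbin a b c q.num q.den : ℝ)| := by exact_mod_cast hle2
  set u := q.num
  set v : ℤ := (q.den : ℤ)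
  have hub : |(u:ℝ)| ≤ E := hb.1
  have hvb : |(v:ℝ)| ≤ E := by simpa [v] using hb.2
  have hFA := abs_Fbin_le a b c u v hub hvb
  set τ := (d:ℝ)*d' with hτ
  have hτ1 : 1 ≤ τ := by
    have : 1 ≤ d * d' := Nat.mul_pos hd hd'
    simp only [τ]; exact_mod_cast this
  have hEτ : E^2 ≤ κ * τ := by
    refine (abs_le_of_sq_le_sq (a := E^2) (b := κ * τ) ?_ (by positivity)) |> (le_abs_self _).trans
    rw [mul_pow, hκ2, div_mul_eq_mul_div, le_div_iff₀ hc1]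
    nlinarith
  have hτκ : 2 * κ < τ := by
    by_contra hcon
    push Not at hcon
    have : E ≤ E^2 := by nlinarith
    nlinarith
  have huv : (u:ℝ)^2 + (v:ℝ)^2 ≤ 2*κ*τ := by
    have h1 : (u:ℝ)^2 ≤ E^2 := sq_le_sq' (by linarith [(abs_le.1 hub).1]) (abs_le.1 hub).2
    have h2 : (v:ℝ)^2 ≤ E^2 := sq_le_sq' (by linarith [(abs_le.1 hvb).1]) (abs_le.1 hvb).2
    linarith
  have hlt : u^2 + v^2 < ((d:ℤ)*d')^2 := by
    have : (u:ℝ)^2 + (v:ℝ)^2 < ((d:ℝ)*d')^2 := by rw [← hτ]; nlinarith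
    exact_mod_cast this
  have hor := short_eq hω hcop hd hd' hc hα hL hlt
  have hpsi : ω d d' α ∈ Psi a b c := by
    rcases hor with h | h
    · rw [h]; exact ⟨Int.isCoprime_iff_gcd_eq_one.1 hcop, hF0⟩
    · rw [h]
      refine ⟨by simpa using Int.isCoprime_iff_gcd_eq_one.1 hcop, ?_⟩
      have : Fbin a b c (-u) (-v) = Fbin a b c u v := by rw [Fbin, Fbin]; ring
      simp only [this]; exact hF0
  refine ⟨⟨d, d', α⟩, ⟨hd, hd', hc, hα, hpsi⟩, hor, ?_⟩
  rw [QTerm]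
  simp only
  have hn : ((ω d d' α).1:ℝ)^2 + ((ω d d' α).2:ℝ)^2 = (u:ℝ)^2 + (v:ℝ)^2 := by
    rcases hor with h | h
    · rw [h]
    · rw [h]; push_cast; ring
  rw [hn, ← hτ]
  have hvp : (0:ℝ) < (v:ℝ)^2 := by
    have : 0 < v := by simp only [v]; exact_mod_cast q.den_pos
    have : (0:ℝ) < v := by exact_mod_cast this
    positivity
  have huvp : 0 < (u:ℝ)^2 + (v:ℝ)^2 := by positivity
  have e1 : Real.sqrt ((u:ℝ)^2 + (v:ℝ)^2) ^ (-(4*k)) = ((u:ℝ)^2 + (v:ℝ)^2)^(-(2*k)) := by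
    rw [Real.sqrt_eq_rpow, ← Real.rpow_mul huvp.le]; congr 1; ring
  have e2 : (2*κ*τ)^(-(2*k)) ≤ ((u:ℝ)^2 + (v:ℝ)^2)^(-(2*k)) :=
    Real.rpow_le_rpow_of_nonpos huvp huv (by linarith)
  rw [Real.mul_rpow (by positivity) (by positivity)] at e2
  have e3 : τ^(2*k) * τ^(-(2*k)) = 1 := by rw [← Real.rpow_add (by positivity)]; simp
  have hlog : Real.log τ ≤ 2 * nn + Real.log A := by
    have h1 : τ ≤ A * E^2 := by
      refine (abs_le_of_sq_le_sq (a := τ) (b := A * E^2) ?_ (by positivity)) |> (le_abs_self _).trans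
      have : A * E^4 ≤ A^2 * E^4 := by gcongr; nlinarith
      calc τ^2 ≤ A * E^4 := hle2.trans hFA
        _ ≤ A^2 * E^4 := this
        _ = _ := by ring
    have h2 := Real.log_le_log (by positivity) h1
    rw [Real.log_mul (by positivity : A ≠ 0) (by positivity : E^2 ≠ 0), Real.log_pow, Real.log_exp] at h2
    push_cast at h2
    linarith
  have e4 : (max 1 (2 * nn + Real.log A))^(-j) ≤ (max 1 (Real.log τ))^(-j) := by
    refine Real.rpow_le_rpow_of_nonpos (by positivity) ?_ (by linarith)
    exact max_le_max le_rfl hlog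
  rw [e1]
  calc (2*κ)^(-(2*k)) * (max 1 (2 * nn + Real.log A))^(-j) ≤ (2*κ)^(-(2*k)) * (max 1 (Real.log τ))^(-j) := by gcongr
    _ = τ^(2*k) * (max 1 (Real.log τ))^(-j) * ((2*κ)^(-(2*k)) * τ^(-(2*k))) := by linear_combination -(2*κ)^(-(2*k)) * (max 1 (Real.log τ))^(-j) * e3
    _ ≤ _ := by gcongr

theorem pm_of_xx {a b c D : ℤ} (hD : D ≠ 0) {P Q : (twist a b c D).Point} (hP : P ≠ 0) (hQ : Q ≠ 0) (h : xx P = xx Q) : P = Q ∨ P = -Q := by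
  have hDq : (D:ℚ) ≠ 0 := by exact_mod_cast hD
  obtain ⟨X, Y, h1, rfl⟩ := (tw_cases P).resolve_left hP
  obtain ⟨X', Y', h2, rfl⟩ := (tw_cases Q).resolve_left hQ
  rw [xx_some, xx_some] at h
  have hX : X = X' := by field_simp at h; exact h
  subst hX
  have e : Y^2 = Y'^2 := by rw [tw_eq h1, tw_eq h2]
  obtain ⟨h', e'⟩ := tw_neg h2
  rcases sq_eq_sq_iff_eq_or_eq_neg.1 e with h | h
  · left; subst h; rfl
  · right; subst h; rw [e']


theorem rank_of_conv {a b c : ℤ} (hf : DistinctRoots a b c) {ω : (d d' : ℕ) → ZMod (d^2) → ℤ × ℤ} (hω : IsShortestChoice a b c ω)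
    {j k : ℝ} (hj : 0 < j) (hk : 1 ≤ k) (hQ : QConv a b c j k ω) {ρ : ℕ} (hρ : 0 < ρ) (hρj : 2 * j ≤ ρ) {D : ℤ} (hD : D ≠ 0)
    (P : Fin ρ → (twist a b c D).Point) (hP : LinearIndependent ℤ P) : False := by
  classical
  obtain ⟨C, hC, hH⟩ := exists_H hf
  obtain ⟨H, hH, hHn⟩ := hH D hD
  let L : (Fin ρ → ℤ) → (twist a b c D).Point := fun z => ∑ i, z i • P i
  have hL0 : ∀ z, L z = 0 → z = 0 := by
    intro z hz
    funext i
    exact Fintype.linearIndependent_iff.1 hP z hz i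
  have hLadd : ∀ z w, L (z + w) = L z + L w := by
    intro z w
    simp only [L, Pi.add_apply, add_zsmul, Finset.sum_add_distrib]
  have hLsub : ∀ z w, L (z - w) = L z - L w := by
    intro z w
    simp only [L, Pi.sub_apply, sub_smul, Finset.sum_sub_distrib]
  let i0 : Fin ρ := ⟨0, hρ⟩
  have hLs : ∀ m : ℤ, L (Pi.single i0 m) = m • P i0 := by
    intro m
    simp only [L]
    rw [Finset.sum_eq_single i0]
    · simp
    · intro i _ hi; rw [Pi.single_eq_of_ne hi, zero_zsmul]
    · simp
  have hRR : P i0 + P i0 ≠ 0 := by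
    intro h
    have := hL0 (Pi.single i0 2) (by rw [hLs, two_zsmul, h])
    have := congrFun this i0
    simp at this
  obtain ⟨c1, hc1, hgood⟩ := good_pt hf hD hRR
  obtain ⟨c2, C3, C4, hc2, hC3, hidx⟩ := idx_good hω hj hk hD hc1 (k := k)
  have hz : ∀ n : Fin ρ → ℕ, ∃ z : Fin ρ → ℤ, (∀ i, 0 ≤ z i ∧ z i ≤ 2 * n i + 1) ∧
      (∀ i, (n i : ℤ) = if i = i0 then z i / 2 else z i) ∧ GoodP c1 (L z) := by
    intro n
    set z0 : Fin ρ → ℤ := fun i => if i = i0 then 2 * n i else n i with hz0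
    rcases hgood (L z0) with h | h
    · refine ⟨z0, fun i => ?_, fun i => ?_, h⟩
      · simp only [hz0]; split_ifs <;> constructor <;> omega
      · simp only [hz0]; split_ifs <;> omega
    · refine ⟨z0 + Pi.single i0 1, fun i => ?_, fun i => ?_, ?_⟩
      · simp only [hz0, Pi.add_apply, Pi.single_apply]; split_ifs <;> constructor <;> omega
      · simp only [hz0, Pi.add_apply, Pi.single_apply]; split_ifs <;> omega
      · rw [hLadd, hLs, one_zsmul]; exact h
  choose z hz1 hz2 hz3 using hz
  have hzinj : ∀ n m, z n = z m → n = m := by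
    intro n m h
    funext i
    have h1 := hz2 n i
    have h2 := hz2 m i
    rw [h] at h1
    exact_mod_cast h1.trans h2.symm
  have hpm : ∀ n m, L (z n) = L (z m) ∨ L (z n) = - L (z m) → n = m := by
    intro n m h
    apply hzinj
    rcases h with h | h
    · have := hL0 (z n - z m) (by rw [hLsub, h, sub_self])
      exact sub_eq_zero.1 this
    · have := hL0 (z n + z m) (by rw [hLadd, h, neg_add_cancel])
      funext i
      have h1 := congrFun this i
      simp only [Pi.add_apply, Pi.zero_apply] at h1
      have := hz1 n i
      have := hz1 m i
      omega
  obtain ⟨K, hK⟩ := northcott_tw a b c C4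
  have hbad : {n | nh (L (z n)) ≤ C4}.Finite := by
    by_contra hinf
    obtain ⟨t, ht, hcard⟩ := Set.Infinite.exists_subset_card_eq hinf (K+1)
    have := hK D hD (t.image (fun n => L (z n))) (by
      intro p hp
      obtain ⟨n, hn, rfl⟩ := Finset.mem_image.1 hp
      exact ht hn)
    rw [Finset.card_image_of_injective _ (fun n m h => hpm n m (Or.inl h))] at this
    omega
  let T : Set (Fin ρ → ℕ) := {n | C4 < nh (L (z n))}
  have hφ : ∀ n : T, ∃ x : QIdx a b c ω, (xx (L (z n.1)) = ((ω x.1.1 x.1.2.1 x.1.2.2).1 : ℚ) / (ω x.1.1 x.1.2.1 x.1.2.2).2) ∧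
      c2 * (max 1 (2 * nh (L (z n.1)) + C3))^(-j) ≤ QTerm j k ω x.1 := by
    intro n
    obtain ⟨x, hx, hx1, hx2⟩ := hidx (L (z n.1)) (hz3 n.1) n.2
    refine ⟨⟨x, hx⟩, ?_, hx2⟩
    rcases hx1 with h | h
    · rw [h]; simp only; rw [Int.cast_natCast, Rat.num_div_den]
    · rw [h]; simp only; push_cast; rw [neg_div_neg_eq, Rat.num_div_den]
  choose φ hφ1 hφ2 using hφ
  have hne : ∀ n, L (z n) ≠ 0 := by
    intro n
    obtain ⟨X, Y, h, e, -⟩ := hz3 n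
    rw [e]; simp
  have hφinj : Function.Injective φ := by
    intro n m h
    apply Subtype.ext
    apply hpm
    apply pm_of_xx hD (hne _) (hne _)
    rw [hφ1, hφ1, h]
  let g : (Fin ρ → ℕ) → ℝ := fun n => c2 * (max 1 (2 * nh (L (z n)) + C3))^(-j)
  have hs1 : Summable (fun n : T => g n.1) := by
    refine Summable.of_nonneg_of_le (fun n => ?_) hφ2 (hQ.comp_injective hφinj)
    positivity
  have hs2 : Summable (T.indicator g) := summable_subtype_iff_indicator.1 hs1
  set B : ℝ := 2^ρ * ∑ i, 4 * H (P i) with hB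
  have hB0 : 0 ≤ B := by
    have : ∀ i, 0 ≤ H (P i) := fun i => hH.nn _
    have : 0 ≤ ∑ i, 4 * H (P i) := Finset.sum_nonneg (fun i _ => by linarith [this i])
    positivity
  set B' : ℝ := 1 + 2*B + 2*C + C3
  have hB' : 0 < B' := by positivity
  refine not_summable_box hρ (T.indicator g) (c2 * B'^(-j)) (by positivity) hbad.toFinset ?_ hs2
  intro N hN n hn hnb
  have hnT : n ∈ T := by
    have : ¬ (nh (L (z n)) ≤ C4) := by simpa using hnb
    exact lt_of_not_ge this
  rw [Set.indicator_of_mem hnT]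
  have hN1 : (1:ℝ) ≤ N := by exact_mod_cast hN
  have hHL : H (L (z n)) ≤ B * N^2 := by
    refine (hH.sum_le _).trans ?_
    rw [hB, mul_assoc, Finset.sum_mul]
    gcongr with i _
    rw [hH.zsmul]
    have h1 := hz1 n i
    have h2 : z n i ≤ 2 * N := by have := hn i; omega
    have h3 : ((z n i : ℤ):ℝ) ≤ 2 * N := by exact_mod_cast h2
    have h4 : (0:ℝ) ≤ ((z n i : ℤ):ℝ) := by exact_mod_cast h1.1
    have h5 := hH.nn (P i)
    have h6 : ((z n i : ℤ):ℝ)^2 ≤ 4 * N^2 := by nlinarith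
    nlinarith
  have hnhL : nh (L (z n)) ≤ B * N^2 + C := by linarith [(abs_le.1 (hHn (L (z n)))).1]
  have hN2 : (1:ℝ) ≤ (N:ℝ)^2 := one_le_pow₀ hN1
  have hmax : max 1 (2 * nh (L (z n)) + C3) ≤ B' * N^2 := by
    apply max_le
    · simp only [B']; nlinarith
    · simp only [B']; nlinarith
  have h7 : (B' * N^2)^(-j) ≤ (max 1 (2 * nh (L (z n)) + C3))^(-j) :=
    Real.rpow_le_rpow_of_nonpos (by positivity) hmax (by linarith)
  have h8 : ((N:ℝ)^ρ)⁻¹ ≤ ((N:ℝ)^2)^(-j) := by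
    rw [← Real.rpow_natCast (N:ℝ) ρ, ← Real.rpow_neg (by positivity), ← Real.rpow_natCast (N:ℝ) 2, ← Real.rpow_mul (by positivity)]
    apply Real.rpow_le_rpow_of_exponent_le hN1
    push_cast; linarith
  rw [Real.mul_rpow hB'.le (by positivity)] at h7
  calc c2 * B'^(-j) * ((N:ℝ)^ρ)⁻¹ ≤ c2 * B'^(-j) * ((N:ℝ)^2)^(-j) := by gcongr
    _ = c2 * (B'^(-j) * ((N:ℝ)^2)^(-j)) := by ring
    _ ≤ _ := by simp only [g]; gcongr


theorem pt_pair {a b c : ℤ} (hf : DistinctRoots a b c) {x1 x2 y : ℚ}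
    (h : (x1^3+a*x1^2+b*x1+c) * (x2^3+a*x2^2+b*x2+c) = y^2) (hy : y ≠ 0) :
    ∃ D : ℤ, Squarefree D ∧ (x1.num, (x1.den:ℤ)) ∈ PsiD a b c D ∧
      ∃ P Q : (twist a b c D).Point, P ≠ 0 ∧ Q ≠ 0 ∧ xx P = x1 ∧ xx Q = x2 := by
  have hd : (x1.den:ℤ) ≠ 0 := by exact_mod_cast x1.den_nz
  have hdq : (x1.den:ℚ) ≠ 0 := by exact_mod_cast x1.den_nz
  have hF := Fbin_cast a b c x1.num x1.den hd
  have e1 : (x1.num:ℚ) / ((x1.den:ℤ):ℚ) = x1 := Rat.num_div_den _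
  rw [e1] at hF
  have hne : (x1^3+a*x1^2+b*x1+c) * (x2^3+a*x2^2+b*x2+c) ≠ 0 := by rw [h]; positivity
  have h1 := left_ne_zero_of_mul hne
  have h2 := right_ne_zero_of_mul hne
  have hF0 : Fbin a b c x1.num x1.den ≠ 0 := by
    intro h0
    rw [h0] at hF
    have := mul_ne_zero (pow_ne_zero 4 (show ((x1.den:ℤ):ℚ) ≠ 0 by exact_mod_cast hd)) h1
    exact this (by rw [← hF]; simp)
  obtain ⟨D, s, hsq, hs, hm⟩ := sqdec _ hF0
  have hD : D ≠ 0 := hsq.ne_zero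
  have hDq : (D:ℚ) ≠ 0 := by exact_mod_cast hD
  have hsq' : (s:ℚ) ≠ 0 := by positivity
  refine ⟨D, hsq, ⟨⟨?_, hF0⟩, s, hm⟩, ?_⟩
  · have := x1.reduced
    simpa [Int.gcd, Nat.Coprime] using this
  rw [hm] at hF
  push_cast at hF
  have f1 : x1^3+a*x1^2+b*x1+c = D * (s / x1.den^2)^2 := by
    field_simp; linarith
  have f2 : x2^3+a*x2^2+b*x2+c = D * (y / (D * (s / x1.den^2)))^2 := by
    rw [f1] at h
    have : x2^3+a*x2^2+b*x2+c = y^2 / (D * (s / x1.den^2)^2) := by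
      rw [eq_div_iff (by positivity)]; linarith
    rw [this]; field_simp
  set t1 := (s:ℚ) / x1.den^2
  set t2 := (y / (D * t1))
  have n1 : (twist a b c D).Nonsingular (D * x1) (D^2 * t1) := tw_ns hf hD (by
    linear_combination (-(D:ℚ)^3) * f1)
  have n2 : (twist a b c D).Nonsingular (D * x2) (D^2 * t2) := tw_ns hf hD (by
    linear_combination (-(D:ℚ)^3) * f2)
  refine ⟨.some _ _ n1, .some _ _ n2, by simp, by simp, ?_, ?_⟩
  · rw [xx_some]; field_simp
  · rw [xx_some]; field_simp

/-- counting: D is unbounded along a sequence of controlled height -/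
theorem D_unbdd {a b c : ℤ} (hf : DistinctRoots a b c)
    (hr : ∀ D : ℤ, D ≠ 0 → ¬ ∃ P : Fin (1+1) → (twist a b c D).Point, LinearIndependent ℤ P)
    (x : ℕ → ℚ) {α K : ℝ} (hα : 0 < α) (hK : ∀ i, |Height.logHeight₁ (x i) - α * i| ≤ K) (B : ℝ) (I : ℕ) :
    ∃ i ≥ I, ∀ D : ℤ, Squarefree D → ((x i).num, ((x i).den:ℤ)) ∈ PsiD a b c D → B < Real.log |(D:ℝ)| := by
  classical
  by_contra hcon
  push Not at hcon
  choose! D hD1 hD2 hD3 using hcon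
  obtain ⟨C1, c1, hC1, hc1, hc1', hcnt⟩ := count_D hf hr
  have hK0 : 0 ≤ K := (abs_nonneg _).trans (hK 0)
  obtain ⟨m, hm⟩ := exists_nat_gt (2*K/α)
  have hm' : 2 * K < α * m := by rwa [div_lt_iff₀' hα] at hm
  have hm0 : 0 < m := by
    rcases Nat.eq_zero_or_pos m with h | h
    · subst h; simp at hm'; linarith
    · exact h
  let w : ℕ → ℕ := fun i => I + m * i
  let p : ℕ → ℤ × ℤ := fun i => ((x (w i)).num, ((x (w i)).den:ℤ))
  have hp : Function.Injective p := by
    intro i k hik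
    have hx : x (w i) = x (w k) := by
      simp only [p, Prod.mk.injEq] at hik
      exact Rat.ext hik.1 (by exact_mod_cast hik.2)
    have key : ∀ i k : ℕ, x (w i) = x (w k) → ¬ i < k := by
      intro i k hx hlt
      have a1 := abs_le.1 (hK (w i))
      have a2 := abs_le.1 (hK (w k))
      rw [hx] at a1
      have : (i:ℝ) + 1 ≤ k := by exact_mod_cast hlt
      have e : ∀ i, ((w i : ℕ):ℝ) = I + m * i := fun i => by simp [w]
      rw [e] at a1 a2
      have : α * m * (i+1) ≤ α * m * k := by gcongr
      nlinarith
    rcases lt_trichotomy i k with h | h | h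
    · exact absurd h (key _ _ hx)
    · exact h
    · exact absurd h (key _ _ hx.symm)
  obtain ⟨M, hM⟩ := exists_nat_gt (Real.exp B)
  have hDM : ∀ i, D (w i) ∈ Finset.Icc (-(M:ℤ)) M := by
    intro i
    have h0 := hD1 (w i) (by simp [w])
    have h := hD3 (w i) (by simp [w])
    have hpos : 0 < |(D (w i):ℝ)| := by
      have : (D (w i):ℝ) ≠ 0 := by exact_mod_cast h0.ne_zero
      positivity
    rw [Real.log_le_iff_le_exp hpos] at h
    have : |(D (w i):ℝ)| ≤ (M:ℝ) := by linarith
    have h2 : |D (w i)| ≤ (M:ℤ) := by exact_mod_cast this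
    rw [Finset.mem_Icc]; exact abs_le.1 h2
  have hbound : ∀ N : ℕ, 0 < N → (N:ℝ) ≤ (2*M+1) * (C1 * ((1 + K + α * (I + m)) * N)^((1:ℝ)/2)) := by
    intro N hN
    have hN1 : (1:ℝ) ≤ N := by exact_mod_cast hN
    have hcard := Finset.card_eq_sum_card_fiberwise (f := fun i => D (w i)) (s := Finset.range N) (t := Finset.Icc (-(M:ℤ)) M) (fun i _ => by exact_mod_cast hDM i)
    rw [Finset.card_range] at hcard
    have hcard' : (N:ℝ) = ∑ d ∈ Finset.Icc (-(M:ℤ)) M, (({i ∈ Finset.range N | D (w i) = d}.card : ℕ):ℝ) := by exact_mod_cast hcard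
    refine hcard'.le.trans ?_
    have hb : ∀ d ∈ Finset.Icc (-(M:ℤ)) M, (({i ∈ Finset.range N | D (w i) = d}.card : ℕ):ℝ) ≤ C1 * ((1 + K + α * (I + m)) * N)^((1:ℝ)/2) := by
      intro d _
      rcases Finset.eq_empty_or_nonempty {i ∈ Finset.range N | D (w i) = d} with h0 | ⟨i0, h0⟩
      · rw [h0]; simp; positivity
      rw [Finset.mem_filter] at h0
      have hsq : Squarefree d := by rw [← h0.2]; exact hD1 _ (by simp [w])
      rw [← Finset.card_image_of_injective _ hp]
      have := (hcnt d hsq (Finset.image p {i ∈ Finset.range N | D (w i) = d}) (by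
        intro q hq
        obtain ⟨i, hi, rfl⟩ := Finset.mem_image.1 hq
        rw [Finset.mem_filter] at hi
        rw [← hi.2]
        exact hD2 _ (by simp [w]))).2 ((1 + K + α * (I + m)) * N) (by nlinarith [mul_nonneg hα.le (show (0:ℝ) ≤ I + m by positivity)]) (by
        intro q hq
        obtain ⟨i, hi, rfl⟩ := Finset.mem_image.1 hq
        rw [Finset.mem_filter, Finset.mem_range] at hi
        have hps := hD2 (w i) (by simp [w])
        rw [ht_eq hps.1.1 (psi_v_ne hps.1)]
        have e1 : (((x (w i)).num:ℚ)) / (((x (w i)).den:ℤ):ℚ) = x (w i) := Rat.num_div_den _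
        simp only [p]
        rw [e1]
        have a1 := abs_le.1 (hK (w i))
        have e : ((w i : ℕ):ℝ) = I + m * i := by simp [w]
        rw [e] at a1
        have hi' : (i:ℝ) ≤ N := by exact_mod_cast hi.1.le
        have z1 : α * m * i ≤ α * m * N := by gcongr
        have z2 : α * I * 1 ≤ α * I * N := by gcongr
        have z3 : K * 1 ≤ K * N := by gcongr
        have z4 : 0 ≤ α * I * N := by positivity
        have z5 : 0 ≤ α * m * N := by positivity
        have z6 : 0 ≤ K * N := by positivity
        have z : max 1 (Height.logHeight₁ (x (w i))) ≤ (1 + K + α * (I + m)) * N := by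
          apply max_le
          · nlinarith
          · nlinarith
        have z7 : (0:ℝ) ≤ (1 + K + α * (I + m)) * N := by positivity
        nlinarith [le_max_left 1 (Real.log |(d:ℝ)|)])
      simpa using this
    refine (Finset.sum_le_card_nsmul _ _ _ hb).trans ?_
    rw [nsmul_eq_mul, Int.card_Icc]
    have : (((M:ℤ) + 1 - -(M:ℤ)).toNat : ℝ) = 2 * M + 1 := by
      have : ((M:ℤ) + 1 - -(M:ℤ)).toNat = 2 * M + 1 := by omega
      rw [this]; push_cast; ring
    rw [this]
  set E := (2*(M:ℝ)+1) * C1 with hE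
  set G := 1 + K + α * (I + m) with hG
  have hG0 : 0 ≤ G := by positivity
  obtain ⟨N, hN⟩ := exists_nat_gt (max 1 (E^2 * G))
  have hN0 : (1:ℝ) < N := (le_max_left _ _).trans_lt hN
  have hN1 := (le_max_right _ _).trans_lt hN
  have h := hbound N (by have : (0:ℝ) < N := by linarith
                         exact_mod_cast this)
  rw [← Real.sqrt_eq_rpow, ← mul_assoc, ← hE] at h
  have : (N:ℝ)^2 ≤ E^2 * (G * N) := by
    calc (N:ℝ)^2 ≤ (E * Real.sqrt (G * N))^2 := by gcongr
      _ = _ := by rw [mul_pow, Real.sq_sqrt (by positivity)]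
  nlinarith


theorem rank_one_rel {a b c D : ℤ} (hr : ¬ ∃ P : Fin (1+1) → (twist a b c D).Point, LinearIndependent ℤ P)
    (P Q : (twist a b c D).Point) : ∃ (R : (twist a b c D).Point) (m n : ℤ),
      IsOfFinAddOrder (P - m • R) ∧ IsOfFinAddOrder (Q - n • R) := by
  classical
  obtain ⟨s, hs, e, he⟩ := exists_gens hr {P, Q}
  obtain ⟨z, hz⟩ := he P (by simp)
  obtain ⟨z', hz'⟩ := he Q (by simp)
  interval_cases s
  · refine ⟨0, 0, 0, ?_, ?_⟩
    · simpa using hz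
    · simpa using hz'
  · refine ⟨e 0, z 0, z' 0, ?_, ?_⟩
    · simpa using hz
    · simpa using hz'

theorem sq_sub_ge {m n : ℤ} (h : m^2 ≠ n^2) : |(m:ℝ)| ≤ |(m:ℝ)^2 - n^2| := by
  have : |m| ≤ |m^2 - n^2| := by
    have h1 : m - n ≠ 0 := fun h0 => h (by rw [sub_eq_zero.1 h0])
    have h2 : m + n ≠ 0 := fun h0 => h (by rw [eq_neg_of_add_eq_zero_left h0]; ring)
    have e : m^2 - n^2 = (m-n)*(m+n) := by ring
    rw [e, abs_mul]
    have a1 : 1 ≤ |m-n| := Int.one_le_abs h1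
    have a2 : 1 ≤ |m+n| := Int.one_le_abs h2
    have a3 : 2 * |m| ≤ |m-n| + |m+n| := by
      have := abs_add_le (m-n) (m+n)
      have e : m - n + (m+n) = 2 * m := by ring
      rw [e, abs_mul] at this
      simpa using this
    nlinarith
  exact_mod_cast this

theorem xx_dbl {a b c D : ℤ} (hD : D ≠ 0) (P : (twist a b c D).Point) (hP : P ≠ 0)
    (hf : xx P^3 + a * xx P^2 + b * xx P + c ≠ 0) :
    xx (P+P) * (4 * (xx P^3 + a * xx P^2 + b * xx P + c)) = xx P^4 - 2*b*xx P^2 - 8*c*xx P + b^2 - 4*a*c := by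
  have hDq : (D:ℚ) ≠ 0 := by exact_mod_cast hD
  obtain ⟨X, Y, h, rfl⟩ := (tw_cases P).resolve_left hP
  have he := tw_eq h
  set q := xx (.some X Y h : (twist a b c D).Point) with hq
  have hX : X = D * q := by rw [hq, xx_some]; field_simp
  have hfe : Y^2 = D^3 * (q^3 + a*q^2+b*q+c) := by rw [he, hX]; ring
  have hY : Y ≠ 0 := by
    rintro rfl
    have := mul_ne_zero (pow_ne_zero 3 hDq) hf
    exact this (by rw [← hfe]; simp)
  obtain ⟨Y', h', e⟩ := tw_dbl h hY
  rw [e, xx_some]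
  have : (q^3 + a*q^2+b*q+c) = Y^2 / D^3 := by rw [hfe]; field_simp
  have h1 : q^4 - 2*b*q^2 - 8*c*q + b^2 - 4*a*c = (3*q^2+2*a*q+b)^2 - (8*q+4*a)*(q^3 + a*q^2+b*q+c) := by ring
  rw [h1, this, hX]
  field_simp
  ring

theorem xx_neg {a b c D : ℤ} (P : (twist a b c D).Point) : xx (-P) = xx P := by
  rcases tw_cases P with rfl | ⟨X, Y, h, rfl⟩
  · simp
  · obtain ⟨h', e⟩ := tw_neg h
    rw [e, xx_some, xx_some]

/-- equal-height alternative -/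
theorem altA {a b c : ℤ} (hf : DistinctRoots a b c)
    (hr : ∀ D : ℤ, D ≠ 0 → ¬ ∃ P : Fin (1+1) → (twist a b c D).Point, LinearIndependent ℤ P) (K : ℝ) :
    ∃ B : ℝ, ∀ x1 x2 y : ℚ, (x1^3+a*x1^2+b*x1+c) * (x2^3+a*x2^2+b*x2+c) = y^2 → y ≠ 0 →
      |Height.logHeight₁ x1 - Height.logHeight₁ x2| ≤ K → B ≤ Height.logHeight₁ x1 →
      (∀ D : ℤ, Squarefree D → (x1.num, (x1.den:ℤ)) ∈ PsiD a b c D → B < Real.log |(D:ℝ)|) →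
      (x1^4 - 2*b*x1^2 - 8*c*x1 + b^2 - 4*a*c) * (x2^3+a*x2^2+b*x2+c) =
      (x2^4 - 2*b*x2^2 - 8*c*x2 + b^2 - 4*a*c) * (x1^3+a*x1^2+b*x1+c) := by
  obtain ⟨C, c0, _, hC, hc0, hH⟩ := heights hf
  obtain ⟨C', hC', hlog⟩ := log_D_le (a := a) (b := b) (c := c)
  refine ⟨max (|K| + 2*C + (|K|+2*C)^2/c0 + C + 1) (4 * C + C'), fun x1 x2 y h hy hKK hB hDD => ?_⟩
  have hB1 := (le_max_left _ _).trans hB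
  obtain ⟨D, hsq, hps, P, Q, hP0, hQ0, hP, hQ⟩ := pt_pair hf h hy
  have hD : D ≠ 0 := hsq.ne_zero
  have hDl := (le_max_right _ _).trans_lt (hDD D hsq hps)
  obtain ⟨H, hq, hn, hc, _⟩ := hH D hD
  have hc := hc hsq
  obtain ⟨R, m, n, hm, hn'⟩ := rank_one_rel (hr D hD) P Q
  have e1 : H P = m^2 * H R := by rw [hq.of_sub_tors hm, hq.zsmul]
  have e2 : H Q = n^2 * H R := by rw [hq.of_sub_tors hn', hq.zsmul]
  have b1 := abs_le.1 (hn P)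
  have b2 := abs_le.1 (hn Q)
  have b3 := abs_le.1 hKK
  have n1 : nh P = Height.logHeight₁ x1 := by rw [nh, hP]
  have n2 : nh Q = Height.logHeight₁ x2 := by rw [nh, hQ]
  rw [n1] at b1
  rw [n2] at b2
  have hK2 : 0 ≤ |K| + 2*C := by positivity
  have hKc : 0 ≤ (|K| + 2*C)^2/c0 := by positivity
  have hKa := le_abs_self K
  have hHP : (|K|+2*C)^2/c0 < H P := by linarith
  have hR : c0 ≤ H R := by
    by_contra hlt
    push Not at hlt
    have := hc R (by nlinarith [le_max_left 1 (Real.log |(D:ℝ)|)])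
    rw [hq.tors this] at e1
    linarith
  have hR0 : 0 < H R := by linarith
  have hdiff : |(m:ℝ)^2 - n^2| * H R ≤ |K| + 2*C := by
    rw [← abs_of_pos hR0, ← abs_mul, sub_mul, ← e1, ← e2, abs_le]
    constructor <;> linarith
  have hmn : m^2 = n^2 := by
    by_contra hne
    have h1 := sq_sub_ge hne
    have h2 : |(m:ℝ)| * H R ≤ |K| + 2*C := le_trans (by gcongr) hdiff
    have h3 : (|(m:ℝ)| * H R)^2 ≤ (|K| + 2*C)^2 := by gcongr
    rw [mul_pow, sq_abs] at h3
    rw [e1, div_lt_iff₀ hc0] at hHP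
    nlinarith [mul_nonneg (sq_nonneg (m:ℝ)) hR0.le]
  have tor : ∀ T : (twist a b c D).Point, IsOfFinAddOrder T → T + T = 0 := by
    intro T hT
    rcases tw_cases T with rfl | ⟨X, Y, hXY, rfl⟩
    · simp
    by_cases hY : Y = 0
    · subst hY; exact tw_dbl0 hXY
    have h1 := hlog D hsq hXY hY
    have h2 := hn (.some X Y hXY)
    rw [hq.tors hT] at h2
    have := (abs_le.1 h2).1
    linarith
  have hPQ : xx (P+P) = xx (Q+Q) := by
    rcases sq_eq_sq_iff_eq_or_eq_neg.1 hmn with h | h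
    · have := tor (P - Q) (by
        have := hm.add hn'.neg
        rw [h] at this
        have e : P - n • R + -(Q - n • R) = P - Q := by abel
        rwa [e] at this)
      have e : P + P = Q + Q := by
        rw [← sub_eq_zero, ← this]; abel
      rw [e]
    · have := tor (P + Q) (by
        have := hm.add hn'
        rw [h, neg_zsmul] at this
        have e : P - -(n • R) + (Q - n • R) = P + Q := by abel
        rwa [e] at this)
      have e : P + P = -(Q + Q) := by
        rw [eq_neg_iff_add_eq_zero, ← this]; abel
      rw [e, xx_neg]
  have hne : (x1^3+a*x1^2+b*x1+c) * (x2^3+a*x2^2+b*x2+c) ≠ 0 := by rw [h]; positivity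
  have h1 := left_ne_zero_of_mul hne
  have h2 := right_ne_zero_of_mul hne
  have d1 := xx_dbl hD P hP0 (by rw [hP]; exact h1)
  have d2 := xx_dbl hD Q hQ0 (by rw [hQ]; exact h2)
  rw [hP] at d1
  rw [hQ] at d2
  rw [← d1, ← d2, hPQ]; ring

/-- unequal heights -/
theorem altB {a b c : ℤ} (hf : DistinctRoots a b c)
    (hr : ∀ D : ℤ, D ≠ 0 → ¬ ∃ P : Fin (1+1) → (twist a b c D).Point, LinearIndependent ℤ P) (K : ℝ) :
    ∃ B : ℝ, ∀ x1 x2 y : ℚ, (x1^3+a*x1^2+b*x1+c) * (x2^3+a*x2^2+b*x2+c) = y^2 → y ≠ 0 →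
      |16 * Height.logHeight₁ x1 - 13 * Height.logHeight₁ x2| ≤ K → B ≤ Height.logHeight₁ x1 →
      (∀ D : ℤ, Squarefree D → (x1.num, (x1.den:ℤ)) ∈ PsiD a b c D → B < Real.log |(D:ℝ)|) → False := by
  obtain ⟨C, c0, _, hC, hc0, hH⟩ := heights hf
  refine ⟨max (C+1) ((|K| + 29 * C)/c0), fun x1 x2 y h hy hKK hB hDD => ?_⟩
  have hB1 := (le_max_left _ _).trans hB
  obtain ⟨D, hsq, hps, P, Q, hP0, hQ0, hP, hQ⟩ := pt_pair hf h hy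
  have hD : D ≠ 0 := hsq.ne_zero
  have hDl := (le_max_right _ _).trans_lt (hDD D hsq hps)
  obtain ⟨H, hq, hn, hc, _⟩ := hH D hD
  have hc := hc hsq
  obtain ⟨R, m, n, hm, hn'⟩ := rank_one_rel (hr D hD) P Q
  have e1 : H P = m^2 * H R := by rw [hq.of_sub_tors hm, hq.zsmul]
  have e2 : H Q = n^2 * H R := by rw [hq.of_sub_tors hn', hq.zsmul]
  have b1 := abs_le.1 (hn P)
  have b2 := abs_le.1 (hn Q)
  have b3 := abs_le.1 hKK
  have n1 : nh P = Height.logHeight₁ x1 := by rw [nh, hP]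
  have n2 : nh Q = Height.logHeight₁ x2 := by rw [nh, hQ]
  rw [n1] at b1
  rw [n2] at b2
  have hKa := le_abs_self K
  have hHP : 0 < H P := by linarith
  have hR : c0 * max 1 (Real.log |(D:ℝ)|) ≤ H R := by
    by_contra hlt
    push Not at hlt
    have := hc R hlt
    rw [hq.tors this] at e1
    linarith
  have hR1 : |K| + 29 * C < H R := by
    rw [div_lt_iff₀' hc0] at hDl
    nlinarith [le_max_right 1 (Real.log |(D:ℝ)|)]
  have hR0 : 0 < H R := by linarith [abs_nonneg K]
  have hdiff : |16 * (m:ℝ)^2 - 13 * n^2| * H R ≤ |K| + 29*C := by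
    rw [← abs_of_pos hR0, ← abs_mul, sub_mul, mul_assoc, ← e1, mul_assoc, ← e2, abs_le]
    constructor <;> linarith
  have hz : 16 * m^2 - 13 * n^2 = 0 := by
    by_contra hne
    have h1 : 1 ≤ |16 * m^2 - 13 * n^2| := Int.one_le_abs hne
    have h2 : (1:ℝ) ≤ |16 * (m:ℝ)^2 - 13 * n^2| := by exact_mod_cast h1
    nlinarith
  have hm0 : m ≠ 0 := by
    rintro rfl
    rw [e1] at hHP; simp at hHP
  have hn0 : n ≠ 0 := by
    rintro rfl
    apply hm0; simpa using hz
  have hsq13 : IsSquare ((13:ℕ):ℚ) := ⟨4 * m / n, by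
    have hnq : (n:ℚ) ≠ 0 := by exact_mod_cast hn0
    have : (16 * m^2 - 13 * n^2 : ℚ) = 0 := by exact_mod_cast hz
    push_cast
    field_simp
    linarith⟩
  rw [Rat.isSquare_natCast_iff] at hsq13
  obtain ⟨r, hr⟩ := hsq13
  have : r < 4 := by nlinarith
  interval_cases r <;> omega


open Polynomial in
theorem poly_upper (A : ℤ[X]) {δ : ℕ} (hA : A.natDegree ≤ δ) :
    ∃ C : ℝ, 0 < C ∧ ∃ Q : ℕ, ∀ q : ℕ, Q ≤ q → |((A.eval (q:ℤ) : ℤ):ℝ)| ≤ C * (q:ℝ)^δ := by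
  have h := Polynomial.isBigO_atTop_of_degree_le (A.map (Int.castRingHom ℝ)) (X^δ : ℝ[X]) (by
    rw [degree_X_pow]
    exact (degree_map_le).trans (natDegree_le_iff_degree_le.1 hA))
  obtain ⟨C, hC, h⟩ := h.exists_pos
  refine ⟨C, hC, ?_⟩
  have h2 := (tendsto_natCast_atTop_atTop (R := ℝ)).eventually h.bound
  obtain ⟨Q, hQ⟩ := Filter.eventually_atTop.1 h2
  refine ⟨Q, fun q hq => ?_⟩
  have := hQ q hq
  rw [eval_pow, eval_X, Real.norm_eq_abs, Real.norm_eq_abs, abs_of_nonneg (by positivity : (0:ℝ) ≤ (q:ℝ)^δ)] at this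
  rw [← Int.cast_natCast (R := ℝ) q, eval_intCast_map] at this
  simpa using this

open Polynomial in
theorem poly_lower (A : ℤ[X]) {δ : ℕ} (h0 : A ≠ 0) (hA : A.natDegree = δ) :
    ∃ C : ℝ, 0 < C ∧ ∃ Q : ℕ, ∀ q : ℕ, Q ≤ q → (q:ℝ)^δ ≤ C * |((A.eval (q:ℤ) : ℤ):ℝ)| := by
  have h := Polynomial.isBigO_atTop_of_degree_le (X^δ : ℝ[X]) (A.map (Int.castRingHom ℝ)) (by
    rw [degree_X_pow, degree_map_eq_of_injective (RingHom.injective_int _), degree_eq_natDegree h0, hA])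
  obtain ⟨C, hC, h⟩ := h.exists_pos
  refine ⟨C, hC, ?_⟩
  have h2 := (tendsto_natCast_atTop_atTop (R := ℝ)).eventually h.bound
  obtain ⟨Q, hQ⟩ := Filter.eventually_atTop.1 h2
  refine ⟨Q, fun q hq => ?_⟩
  have := hQ q hq
  rw [eval_pow, eval_X, Real.norm_eq_abs, Real.norm_eq_abs, abs_of_nonneg (by positivity : (0:ℝ) ≤ (q:ℝ)^δ)] at this
  rw [← Int.cast_natCast (R := ℝ) q, eval_intCast_map] at this
  simpa using this

theorem lh_div {A B u v r : ℤ} (hB : B ≠ 0) (hr : r ≠ 0) (h : u * A + v * B = r) :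
    Height.logHeight₁ ((A:ℚ)/B) ≤ Real.log (max |(A:ℝ)| |(B:ℝ)|) ∧
    Real.log (max |(A:ℝ)| |(B:ℝ)|) ≤ Height.logHeight₁ ((A:ℚ)/B) + Real.log |(r:ℝ)| := by
  obtain ⟨g, h1, h2⟩ := Rat.exists_eq_mul_div_num_and_eq_mul_div_den A hB
  rw [Rat.logHeight₁_eq_log_max]
  set x := (A:ℚ)/B
  have hg : g ∣ r := by
    rw [← h, h1, h2]
    exact ⟨u * x.num + v * x.den, by ring⟩
  have hg0 : g ≠ 0 := by
    rintro rfl; exact hB (by rw [h2]; simp)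
  have hgr : |(g:ℝ)| ≤ |(r:ℝ)| := by
    have : |g| ≤ |r| := Int.le_of_dvd (abs_pos.2 hr) ((abs_dvd_abs g r).2 hg)
    exact_mod_cast this
  have hg1 : (1:ℝ) ≤ |(g:ℝ)| := by
    have : 1 ≤ |g| := Int.one_le_abs hg0
    exact_mod_cast this
  have hM : (1:ℝ) ≤ (max x.num.natAbs x.den : ℕ) := by
    have : 1 ≤ max x.num.natAbs x.den := le_max_of_le_right x.den_pos
    exact_mod_cast this
  have e : max |(A:ℝ)| |(B:ℝ)| = |(g:ℝ)| * (max x.num.natAbs x.den : ℕ) := by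
    have hA' : |(A:ℝ)| = |(g:ℝ)| * (x.num.natAbs:ℕ) := by
      conv_lhs => rw [h1]
      rw [Int.cast_mul, abs_mul, Nat.cast_natAbs]; simp
    have hB' : |(B:ℝ)| = |(g:ℝ)| * (x.den:ℕ) := by
      conv_lhs => rw [h2]
      rw [Int.cast_mul, abs_mul]; simp
    rw [hA', hB', Nat.cast_max, mul_max_of_nonneg _ _ (abs_nonneg _)]
  rw [e, Real.log_mul (by positivity) (by positivity)]
  have := Real.log_nonneg hg1
  have := Real.log_le_log (by positivity) hgr
  constructor <;> linarith

open Polynomial in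
theorem poly_ht (A B : ℤ[X]) (r : ℤ) (hr : r ≠ 0) (h : ∀ q : ℕ, ∃ u v : ℤ, u * A.eval (q:ℤ) + v * B.eval (q:ℤ) = r)
    {δ : ℕ} (hA : A.natDegree ≤ δ) (hB : B.natDegree ≤ δ) (hd : A.natDegree = δ ∨ B.natDegree = δ) (hA0 : A ≠ 0) (hB0 : B ≠ 0) :
    ∃ (K : ℝ) (Q : ℕ), ∀ q : ℕ, Q ≤ q → B.eval (q:ℤ) ≠ 0 ∧
      |Height.logHeight₁ (((A.eval (q:ℤ) : ℤ):ℚ)/((B.eval (q:ℤ) : ℤ):ℚ)) - δ * Real.log q| ≤ K := by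
  obtain ⟨C1, hC1, Q1, h1⟩ := poly_upper A hA
  obtain ⟨C2, hC2, Q2, h2⟩ := poly_upper B hB
  obtain ⟨C4, hC4, Q4, h4⟩ := poly_lower B hB0 rfl
  obtain ⟨C3, hC3, Q3, h3⟩ : ∃ C : ℝ, 0 < C ∧ ∃ Q : ℕ, ∀ q : ℕ, Q ≤ q → (q:ℝ)^δ ≤ C * max |((A.eval (q:ℤ) : ℤ):ℝ)| |((B.eval (q:ℤ) : ℤ):ℝ)| := by
    rcases hd with hd | hd
    · obtain ⟨C, hC, Q, h⟩ := poly_lower A hA0 hd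
      exact ⟨C, hC, Q, fun q hq => (h q hq).trans (by gcongr; exact le_max_left _ _)⟩
    · obtain ⟨C, hC, Q, h⟩ := poly_lower B hB0 hd
      exact ⟨C, hC, Q, fun q hq => (h q hq).trans (by gcongr; exact le_max_right _ _)⟩
  refine ⟨|Real.log (max C1 C2)| + |Real.log C3| + |Real.log (abs (r:ℝ))|, 1 + Q1 + Q2 + Q3 + Q4, fun q hq => ?_⟩
  have hq0 : (0:ℝ) < q := by
    have : 0 < q := by omega
    exact_mod_cast this
  have hBq : B.eval (q:ℤ) ≠ 0 := by
    intro h0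
    have := h4 q (by omega)
    rw [h0] at this
    have hp : 0 < (q:ℝ)^B.natDegree := by positivity
    simp at this
    linarith
  refine ⟨hBq, ?_⟩
  obtain ⟨u, v, huv⟩ := h q
  obtain ⟨l1, l2⟩ := lh_div hBq hr huv
  set M := max |((A.eval (q:ℤ) : ℤ):ℝ)| |((B.eval (q:ℤ) : ℤ):ℝ)| with hM
  have hM0 : 0 < M := lt_max_of_lt_right (by
    have : ((B.eval (q:ℤ) : ℤ):ℝ) ≠ 0 := by exact_mod_cast hBq
    positivity)
  have u1 : M ≤ max C1 C2 * (q:ℝ)^δ := max_le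
    ((h1 q (by omega)).trans (by gcongr; exact le_max_left _ _))
    ((h2 q (by omega)).trans (by gcongr; exact le_max_right _ _))
  have u2 := h3 q (by omega)
  have hC12 : 0 < max C1 C2 := lt_max_of_lt_left hC1
  have v1 := Real.log_le_log hM0 u1
  rw [Real.log_mul hC12.ne' (by positivity), Real.log_pow] at v1
  have v2 := Real.log_le_log (by positivity) u2
  rw [Real.log_mul hC3.ne' hM0.ne', Real.log_pow] at v2
  have w1 := le_abs_self (Real.log (max C1 C2))
  have w2 := le_abs_self (Real.log C3)
  have w3 := le_abs_self (Real.log (abs (r:ℝ)))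
  have z1 := abs_nonneg (Real.log (max C1 C2))
  have z2 := abs_nonneg (Real.log C3)
  have z3 := abs_nonneg (Real.log (abs (r:ℝ)))
  rw [abs_le]
  constructor <;> linarith

open Polynomial in
theorem poly_ne (W : ℤ[X]) (h : W.eval 0 ≠ 0) {z : ℤ} (hz : |W.eval 0| < |z|) : W.eval z ≠ 0 := by
  intro h0
  have := Polynomial.sub_dvd_eval_sub z 0 W
  rw [h0, sub_zero, zero_sub, dvd_neg] at this
  have := Int.le_of_dvd (abs_pos.2 h) ((abs_dvd_abs _ _).2 this)
  linarith


theorem lh_shift (a : ℤ) : ∃ K : ℝ, ∀ X : ℚ, |Height.logHeight₁ ((X - a)/3) - Height.logHeight₁ X| ≤ K := by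
  set T : ℝ := (Height.totalWeight ℚ : ℝ) * Real.log 2
  have hl : 0 ≤ T := mul_nonneg (by positivity) (Real.log_nonneg (by norm_num))
  refine ⟨T + Height.logHeight₁ (a:ℚ) + Height.logHeight₁ (3:ℚ) , fun X => ?_⟩
  have h1 : Height.logHeight₁ ((X - a)/3) ≤ Height.logHeight₁ (X - a) + Height.logHeight₁ (3:ℚ) := by
    have := Height.logHeight₁_mul_le (X - a) (3⁻¹:ℚ)
    rwa [Height.logHeight₁_inv, ← div_eq_mul_inv] at this
  have h2 := Height.logHeight₁_sub_le X (a:ℚ)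
  have h3 := Height.logHeight₁_add_le (3 * ((X-a)/3)) (a:ℚ)
  have h4 := Height.logHeight₁_mul_le (3:ℚ) ((X-a)/3)
  have e : 3 * ((X-a)/3) + a = X := by ring
  rw [e] at h3
  rw [abs_le]
  constructor <;> linarith

/-- sequence version -/
theorem seq_ht {X : ℕ → ℚ} {δ Q : ℕ} {K : ℝ} (h : ∀ q, Q ≤ q → |Height.logHeight₁ (X q) - δ * Real.log q| ≤ K) (a : ℤ) :
    ∃ K' : ℝ, ∀ i : ℕ, |Height.logHeight₁ ((X (2^(i+Q)) - a)/3) - (δ * Real.log 2) * i| ≤ K' := by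
  obtain ⟨K1, h1⟩ := lh_shift a
  refine ⟨K1 + K + δ * Real.log 2 * Q, fun i => ?_⟩
  have hQ : Q ≤ 2^(i+Q) := (by omega : Q ≤ i + Q).trans (Nat.lt_two_pow_self).le
  have b1 := abs_le.1 (h1 (X (2^(i+Q))))
  have b2 := abs_le.1 (h _ hQ)
  push_cast at b2
  rw [Real.log_pow] at b2
  push_cast at b2
  have : 0 ≤ δ * Real.log 2 * Q := mul_nonneg (mul_nonneg (by positivity) (Real.log_nonneg (by norm_num))) (by positivity)
  rw [abs_le]
  constructor <;> nlinarith

theorem famA {a b c bt ct : ℤ} (hbt : bt = 9*b-3*a^2) (hct : ct = 27*c-9*a*b+2*a^3) (hf : DistinctRoots a b c)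
    (hr : ∀ D : ℤ, D ≠ 0 → ¬ ∃ P : Fin (1+1) → (twist a b c D).Point, LinearIndependent ℤ P)
    (X1 X2 Y : ℕ → ℚ) {δ : ℕ} (hδ : 0 < δ) {K1 K2 : ℝ} {Q1 Q2 Q : ℕ}
    (h1 : ∀ q, Q1 ≤ q → |Height.logHeight₁ (X1 q) - δ * Real.log q| ≤ K1)
    (h2 : ∀ q, Q2 ≤ q → |Height.logHeight₁ (X2 q) - δ * Real.log q| ≤ K2)
    (hY : ∀ q, Q ≤ q → ((X1 q)^3 + bt * X1 q + ct) * ((X2 q)^3 + bt * X2 q + ct) = (Y q)^2 ∧ Y q ≠ 0) :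
    ∃ q, Q ≤ q ∧ ((X1 q)^4 - 2*bt*(X1 q)^2 - 8*ct*X1 q + bt^2) * ((X2 q)^3 + bt * X2 q + ct)
      = ((X2 q)^4 - 2*bt*(X2 q)^2 - 8*ct*X2 q + bt^2) * ((X1 q)^3 + bt * X1 q + ct) := by
  have h1' : ∀ q, Q1 + Q2 + Q ≤ q → |Height.logHeight₁ (X1 q) - δ * Real.log q| ≤ K1 := fun q hq => h1 q (by omega)
  have h2' : ∀ q, Q1 + Q2 + Q ≤ q → |Height.logHeight₁ (X2 q) - δ * Real.log q| ≤ K2 := fun q hq => h2 q (by omega)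
  obtain ⟨L1, g1⟩ := seq_ht h1' a
  obtain ⟨L2, g2⟩ := seq_ht h2' a
  obtain ⟨B, hB⟩ := altA hf hr (L1 + L2)
  have hα : 0 < δ * Real.log 2 := mul_pos (by exact_mod_cast hδ) (Real.log_pos (by norm_num))
  obtain ⟨I, hI⟩ := exists_nat_gt ((B + L1) / (δ * Real.log 2))
  rw [div_lt_iff₀' hα] at hI
  obtain ⟨i, hi, hD⟩ := D_unbdd hf hr _ hα g1 B I
  set q := 2^(i + (Q1+Q2+Q)) with hq
  have hQ : Q ≤ q := (by omega : Q ≤ i + (Q1 + Q2 + Q)).trans (Nat.lt_two_pow_self).le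
  refine ⟨q, hQ, ?_⟩
  obtain ⟨y1, y2⟩ := hY q hQ
  have b1 := abs_le.1 (g1 i)
  have b2 := abs_le.1 (g2 i)
  have hiI : δ * Real.log 2 * I ≤ δ * Real.log 2 * i := by
    have : (I:ℝ) ≤ i := by exact_mod_cast hi
    gcongr
  have e : ∀ X : ℚ, ((X-a)/3)^3 + a*((X-a)/3)^2+b*((X-a)/3)+c = (X^3 + bt*X+ct)/27 := by
    intro X; rw [hbt, hct]; push_cast; ring
  have e' : ∀ X : ℚ, X^4 - 2*bt*X^2 - 8*ct*X + bt^2 = 81 * (((X-a)/3)^4 - 2*b*((X-a)/3)^2 - 8*c*((X-a)/3) + b^2 - 4*a*c) + 108*a*(((X-a)/3)^3 + a*((X-a)/3)^2+b*((X-a)/3)+c) := by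
    intro X; rw [hbt, hct]; push_cast; ring
  have e'' : ∀ X : ℚ, X^3 + bt*X+ct = 27 * (((X-a)/3)^3 + a*((X-a)/3)^2+b*((X-a)/3)+c) := by
    intro X; rw [e]; ring
  have := hB ((X1 q - a)/3) ((X2 q - a)/3) (Y q / 27) (by rw [e, e, div_pow, ← y1]; ring) (by positivity)
    (by rw [abs_le]; constructor <;> linarith) (by linarith) hD
  rw [e' (X1 q), e' (X2 q), e'' (X1 q), e'' (X2 q)]
  linear_combination 81 * 27 * this

theorem famB {a b c bt ct : ℤ} (hbt : bt = 9*b-3*a^2) (hct : ct = 27*c-9*a*b+2*a^3) (hf : DistinctRoots a b c)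
    (hr : ∀ D : ℤ, D ≠ 0 → ¬ ∃ P : Fin (1+1) → (twist a b c D).Point, LinearIndependent ℤ P)
    (X1 X2 Y : ℕ → ℚ) {K1 K2 : ℝ} {Q1 Q2 Q : ℕ}
    (h1 : ∀ q, Q1 ≤ q → |Height.logHeight₁ (X1 q) - (13:ℕ) * Real.log q| ≤ K1)
    (h2 : ∀ q, Q2 ≤ q → |Height.logHeight₁ (X2 q) - (16:ℕ) * Real.log q| ≤ K2)
    (hY : ∀ q, Q ≤ q → ((X1 q)^3 + bt * X1 q + ct) * ((X2 q)^3 + bt * X2 q + ct) = (Y q)^2 ∧ Y q ≠ 0) : False := by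
  have h1' : ∀ q, Q1 + Q2 + Q ≤ q → |Height.logHeight₁ (X1 q) - (13:ℕ) * Real.log q| ≤ K1 := fun q hq => h1 q (by omega)
  have h2' : ∀ q, Q1 + Q2 + Q ≤ q → |Height.logHeight₁ (X2 q) - (16:ℕ) * Real.log q| ≤ K2 := fun q hq => h2 q (by omega)
  obtain ⟨L1, g1⟩ := seq_ht h1' a
  obtain ⟨L2, g2⟩ := seq_ht h2' a
  obtain ⟨B, hB⟩ := altB hf hr (16*L1 + 13*L2)
  have hα : 0 < (13:ℕ) * Real.log 2 := mul_pos (by norm_num) (Real.log_pos (by norm_num))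
  obtain ⟨I, hI⟩ := exists_nat_gt ((B + L1) / ((13:ℕ) * Real.log 2))
  rw [div_lt_iff₀' hα] at hI
  obtain ⟨i, hi, hD⟩ := D_unbdd hf hr _ hα g1 B I
  set q := 2^(i + (Q1+Q2+Q)) with hq
  have hQ : Q ≤ q := (by omega : Q ≤ i + (Q1 + Q2 + Q)).trans (Nat.lt_two_pow_self).le
  obtain ⟨y1, y2⟩ := hY q hQ
  have b1 := abs_le.1 (g1 i)
  have b2 := abs_le.1 (g2 i)
  have hiI : (13:ℕ) * Real.log 2 * I ≤ (13:ℕ) * Real.log 2 * i := by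
    have : (I:ℝ) ≤ i := by exact_mod_cast hi
    gcongr
  have e : ∀ X : ℚ, ((X-a)/3)^3 + a*((X-a)/3)^2+b*((X-a)/3)+c = (X^3 + bt*X+ct)/27 := by
    intro X; rw [hbt, hct]; push_cast; ring
  push_cast at b1 b2 hiI hI
  exact hB ((X1 q - a)/3) ((X2 q - a)/3) (Y q / 27) (by rw [e, e, div_pow, ← y1]; ring) (by positivity)
    (by rw [abs_le]; constructor <;> linarith) (by linarith) hD

section S8e

open Polynomial

theorem alg1 {b c T : ℚ} (hb : b ≠ 0) (hT : T ≠ 0) (hT1 : T + 1 ≠ 0) (hT2 : T - 1 ≠ 0)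
    (hW1 : (-c*(T^2+T+1))^3 + b*(-c*(T^2+T+1))*(b*(T*(T+1)))^2 + c*(b*(T*(T+1)))^3 ≠ 0)
    (hW2 : c^4*(T^2+T+1)^4 + T*(2*b^3*c^2*(T^2+T+1)^2*(T+1)^2 - 8*b^3*c^2*(T^2+T+1)*(T+1)^4 - b^6*(T^2+T+1)*(T+1)^4) ≠ 0)
    {X1 X2 : ℚ} (h1 : X1 = -c*(T^2+T+1)/(b*(T*(T+1)))) (h2 : X2 = -c*(T^2+T+1)/(b*(T+1))) :
    X2^3 + b*X2 + c = T^3 * (X1^3 + b*X1 + c) ∧ X1^3 + b*X1 + c ≠ 0 ∧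
    (X1^4 - 2*b*X1^2 - 8*c*X1 + b^2) * (X2^3 + b * X2 + c) ≠ (X2^4 - 2*b*X2^2 - 8*c*X2 + b^2) * (X1^3 + b * X1 + c) := by
  have e2 : X2 = T * X1 := by rw [h1, h2]; field_simp
  have e1 : X1 * (b*(T*(T+1))) = -c*(T^2+T+1) := by rw [h1]; field_simp
  have hn : b*(T*(T+1)) ≠ 0 := by positivity
  have hF : X2^3 + b*X2 + c = T^3 * (X1^3 + b*X1 + c) := by
    have : T * (1 - T) * (X1 * (b*(T+1)) * T) = T*(1-T) * (-c*(T^2+T+1)) := by rw [← e1]; ring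
    have h3 : T * ((T-1)*(X1 * (b*(T*(T+1))) + c*(T^2+T+1))) = 0 := by rw [e1]; ring
    rw [e2]
    have h4 : (T-1)*(X1 * (b*(T*(T+1))) + c*(T^2+T+1)) = 0 := (mul_eq_zero.1 h3).resolve_left hT
    linear_combination (-1) * h4
  have hF1 : X1^3 + b*X1 + c ≠ 0 := by
    intro h0
    apply hW1
    rw [← e1]
    linear_combination (b*(T*(T+1)))^3 * h0
  refine ⟨hF, hF1, fun h => ?_⟩
  rw [hF] at h
  have h3 : T^3 * (X1^4 - 2*b*X1^2 - 8*c*X1 + b^2) = (X2^4 - 2*b*X2^2 - 8*c*X2 + b^2) := by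
    apply mul_right_cancel₀ hF1; linear_combination h
  rw [e2] at h3
  have h4 : T^3*X1^4 + 2*b*T^2*X1^2 + 8*c*T*(T+1)*X1 - b^2*(T^2+T+1) = 0 := by
    apply mul_left_cancel₀ hT2; linear_combination (-1) * h3
  apply hW2
  apply mul_left_cancel₀ (pow_ne_zero 3 hT)
  have h5 : (-c*(T^2+T+1))^2 = (X1 * (b*(T*(T+1))))^2 := by rw [e1]
  have h6 : (-c*(T^2+T+1))^4 = (X1 * (b*(T*(T+1))))^4 := by rw [e1]
  linear_combination (b*(T*(T+1)))^4 * h4 + T^3*h6 + 2*T^4*(T+1)^2*b^3*h5 - 8*c*(T*(T+1))*(b*(T*(T+1)))^3 * e1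

theorem case1 {a b c bt ct : ℤ} (hbt : bt = 9*b-3*a^2) (hct : ct = 27*c-9*a*b+2*a^3) (hf : DistinctRoots a b c)
    (hr : ∀ D : ℤ, D ≠ 0 → ¬ ∃ P : Fin (1+1) → (twist a b c D).Point, LinearIndependent ℤ P)
    (hb : bt ≠ 0) (hc : ct ≠ 0) : False := by
  set A : ℤ[X] := C (-ct) * (X^4 + X^2 + 1) with hA
  set B1 : ℤ[X] := C bt * (X^4+X^2) with hB1
  set B2 : ℤ[X] := C bt * (X^2+1) with hB2
  have dA : A.natDegree = 4 := by
    rw [hA, natDegree_C_mul (neg_ne_zero.2 hc)]; compute_degree!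
  have dB1 : B1.natDegree = 4 := by
    rw [hB1, natDegree_C_mul hb]; compute_degree!
  have dB2 : B2.natDegree = 2 := by
    rw [hB2, natDegree_C_mul hb]; compute_degree!
  have nz : ∀ p : ℤ[X], 0 < p.natDegree → p ≠ 0 := fun p hp h => by rw [h] at hp; simp at hp
  obtain ⟨K1, Q1, h1⟩ := poly_ht A B1 (bt*ct) (mul_ne_zero hb hc) (δ := 4) (fun q => ⟨-bt, -ct, by
    simp [hA, hB1]; ring⟩) (by omega) (by omega) (by omega) (nz _ (by omega)) (nz _ (by omega))
  obtain ⟨K2, Q2, h2⟩ := poly_ht A B2 (bt*ct) (mul_ne_zero hb hc) (δ := 4) (fun q => ⟨-bt, -ct*q^2, by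
    simp [hA, hB2]; ring⟩) (by omega) (by omega) (by omega) (nz _ (by omega)) (nz _ (by omega))
  set W1 : ℤ[X] := (-C ct*(X^2+X+1))^3 + C bt*(-C ct*(X^2+X+1))*(C bt*(X*(X+1)))^2 + C ct*(C bt*(X*(X+1)))^3 with hW1
  set W2 : ℤ[X] := C ct^4*(X^2+X+1)^4 + X*(2*C bt^3*C ct^2*(X^2+X+1)^2*(X+1)^2 - 8*C bt^3*C ct^2*(X^2+X+1)*(X+1)^4 - C bt^6*(X^2+X+1)*(X+1)^4) with hW2
  have w1 : W1.eval 0 ≠ 0 := by simp [hW1, hc]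
  have w2 : W2.eval 0 ≠ 0 := by simp [hW2, hc]
  set Q := 2 + (W1.eval 0).natAbs + (W2.eval 0).natAbs with hQ
  have main : ∀ q : ℕ, Q ≤ q → _ := fun q hq => by
    have hq2 : 2 ≤ q := by omega
    have hqq : (q:ℤ) ≤ |(q:ℤ)^2| := by rw [abs_of_nonneg (by positivity)]; nlinarith
    have n1 := poly_ne W1 w1 (z := (q:ℤ)^2) (by rw [Int.abs_eq_natAbs (W1.eval 0)]; omega)
    have n2 := poly_ne W2 w2 (z := (q:ℤ)^2) (by rw [Int.abs_eq_natAbs (W2.eval 0)]; omega)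
    have n1' : ((W1.eval ((q:ℤ)^2) : ℤ):ℚ) ≠ 0 := by exact_mod_cast n1
    have n2' : ((W2.eval ((q:ℤ)^2) : ℤ):ℚ) ≠ 0 := by exact_mod_cast n2
    simp only [hW1, hW2, eval_add, eval_sub, eval_mul, eval_pow, eval_X, eval_C, eval_neg, eval_one, eval_ofNat] at n1' n2'
    push_cast at n1' n2'
    have hq2' : (2:ℚ) ≤ q := by exact_mod_cast hq2
    exact alg1 (b := bt) (c := ct) (T := (q:ℚ)^2) (by exact_mod_cast hb) (by positivity) (by positivity) (by nlinarith) n1' n2'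
      (X1 := ((A.eval (q:ℤ) : ℤ):ℚ)/((B1.eval (q:ℤ) : ℤ):ℚ)) (X2 := ((A.eval (q:ℤ) : ℤ):ℚ)/((B2.eval (q:ℤ) : ℤ):ℚ))
      (by simp [hA, hB1]; ring) (by simp [hA, hB2]; ring)
  obtain ⟨q, hq, he⟩ := famA hbt hct hf hr (fun q => ((A.eval (q:ℤ) : ℤ):ℚ)/((B1.eval (q:ℤ) : ℤ):ℚ))
    (fun q => ((A.eval (q:ℤ) : ℤ):ℚ)/((B2.eval (q:ℤ) : ℤ):ℚ))
    (fun q => (q:ℚ)^3 * ((((A.eval (q:ℤ) : ℤ):ℚ)/((B1.eval (q:ℤ) : ℤ):ℚ))^3 + bt * (((A.eval (q:ℤ) : ℤ):ℚ)/((B1.eval (q:ℤ) : ℤ):ℚ)) + ct))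
    (by norm_num : 0 < 4) (fun q hq => (h1 q hq).2) (fun q hq => (h2 q hq).2) (Q := Q) (fun q hq => by
      obtain ⟨m1, m2, _⟩ := main q hq
      have : (q:ℚ) ≠ 0 := by
        have : q ≠ 0 := by omega
        exact_mod_cast this
      refine ⟨?_, mul_ne_zero (pow_ne_zero 3 this) m2⟩
      rw [m1]; ring)
  exact (main q hq).2.2 he

end S8e

section S8f

open Polynomial

theorem alg3 {b q r t s R : ℚ} (hb : b ≠ 0) (hq : q ≠ 0) (hs : s ≠ 0) (hR : R ≠ 0)
    (key : r*t*((b*q^2)*r^2+s^2)*(t^2+(b*q^2)*s^2) = R^2)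
    (hW : ((b*q^2)*r^2-s^2)^2*t*(t^2+(b*q^2)*s^2) - (t^2-(b*q^2)*s^2)^2*r*((b*q^2)*r^2+s^2) ≠ 0)
    {X1 X2 : ℚ} (h1 : X1 = b*q*r/s) (h2 : X2 = t/(q*s)) :
    (X1^3 + b*X1 + 0) * (X2^3 + b*X2 + 0) = (b*R/(q*s^3))^2 ∧ b*R/(q*s^3) ≠ 0 ∧
    (X1^4 - 2*b*X1^2 - 8*0*X1 + b^2) * (X2^3 + b * X2 + 0) ≠ (X2^4 - 2*b*X2^2 - 8*0*X2 + b^2) * (X1^3 + b * X1 + 0) := by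
  have f1 : X1^3 + b*X1 + 0 = b^2*q*r*((b*q^2)*r^2+s^2)/s^3 := by rw [h1]; field_simp; ring
  have f2 : X2^3 + b*X2 + 0 = t*(t^2+(b*q^2)*s^2)/(q^3*s^3) := by rw [h2]; field_simp; ring
  have g1 : X1^4 - 2*b*X1^2 - 8*0*X1 + b^2 = b^2*((b*q^2)*r^2-s^2)^2/s^4 := by rw [h1]; field_simp; ring
  have g2 : X2^4 - 2*b*X2^2 - 8*0*X2 + b^2 = (t^2-(b*q^2)*s^2)^2/(q^4*s^4) := by rw [h2]; field_simp; ring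
  refine ⟨?_, by positivity, fun h => hW ?_⟩
  · rw [f1, f2, div_pow, mul_pow, ← key]; field_simp
  · rw [f1, f2, g1, g2] at h
    have e1 : b^2*((b*q^2)*r^2-s^2)^2/s^4 * (t*(t^2+(b*q^2)*s^2)/(q^3*s^3)) = b^2/(q^3*s^7) * (((b*q^2)*r^2-s^2)^2*t*(t^2+(b*q^2)*s^2)) := by
      field_simp
    have e2 : (t^2-(b*q^2)*s^2)^2/(q^4*s^4) * (b^2*q*r*((b*q^2)*r^2+s^2)/s^3) = b^2/(q^3*s^7) * ((t^2-(b*q^2)*s^2)^2*r*((b*q^2)*r^2+s^2)) := by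
      field_simp
    rw [e1, e2] at h
    have := mul_left_cancel₀ (by positivity) h
    rw [this]; ring

theorem alg2 {c q a d a2 d2 R : ℚ} (hd : d ≠ 0) (hd2 : d2 ≠ 0)
    (key : ((c^2*q^3)*a^3+d^3)*((c^2*q^3)*a2^3+d2^3)*d*d2 = R^2)
    {X1 X2 : ℚ} (h1 : X1 = c*q*a/d) (h2 : X2 = c*q*a2/d2) :
    (X1^3 + 0*X1 + c) * (X2^3 + 0*X2 + c) = (c*R/(d*d2)^2)^2 := by
  have f1 : X1^3 + 0*X1 + c = c*((c^2*q^3)*a^3+d^3)/d^3 := by rw [h1]; field_simp; ring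
  have f2 : X2^3 + 0*X2 + c = c*((c^2*q^3)*a2^3+d2^3)/d2^3 := by rw [h2]; field_simp; ring
  rw [f1, f2, div_pow, mul_pow, ← key]; field_simp

theorem deg_comp (p : ℤ[X]) {e : ℤ} (he : e ≠ 0) (m : ℕ) : (p.comp (C e * X^m)).natDegree = p.natDegree * m := by
  rw [natDegree_comp, natDegree_C_mul_X_pow _ _ he]

theorem nz_of_deg (p : ℤ[X]) (hp : 0 < p.natDegree) : p ≠ 0 := fun h => by rw [h] at hp; simp at hp

theorem case3 {a b c bt ct : ℤ} (hbt : bt = 9*b-3*a^2) (hct : ct = 27*c-9*a*b+2*a^3) (hf : DistinctRoots a b c)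
    (hr : ∀ D : ℤ, D ≠ 0 → ¬ ∃ P : Fin (1+1) → (twist a b c D).Point, LinearIndependent ℤ P)
    (hb : bt ≠ 0) (hc : ct = 0) : False := by
  set r : ℤ[X] := C (-2) * (X^3 + 10*X^2 + X + 4) with hrd
  set s : ℤ[X] := X^3 - 17*X^2 - 17*X + 1 with hs
  set t : ℤ[X] := C (-2) * (4*X^3 + X^2 + 10*X + 1) with ht
  have dr : r.natDegree = 3 := by rw [hrd, natDegree_C_mul (by norm_num)]; compute_degree!
  have ds : s.natDegree = 3 := by rw [hs]; compute_degree!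
  have dt : t.natDegree = 3 := by rw [ht, natDegree_C_mul (by norm_num)]; compute_degree!
  set A1 : ℤ[X] := C bt * r.comp (C bt * X^2) * X with hA1
  set B1 : ℤ[X] := s.comp (C bt * X^2) with hB1
  set A2 : ℤ[X] := t.comp (C bt * X^2) with hA2
  set B2 : ℤ[X] := s.comp (C bt * X^2) * X with hB2
  have dB1 : B1.natDegree = 6 := by rw [hB1, deg_comp _ hb, ds]
  have dA2 : A2.natDegree = 6 := by rw [hA2, deg_comp _ hb, dt]
  have dA1 : A1.natDegree = 7 := by
    have : (C bt * r.comp (C bt * X^2)).natDegree = 6 := by rw [natDegree_C_mul hb, deg_comp _ hb, dr]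
    rw [hA1, natDegree_mul_X (nz_of_deg _ (by omega)), this]
  have dB2 : B2.natDegree = 7 := by
    have e : B2 = B1 * X := rfl
    rw [e, natDegree_mul_X (nz_of_deg B1 (by omega)), dB1]
  obtain ⟨K1, Q1, h1⟩ := poly_ht A1 B1 6144 (by norm_num) (δ := 7) (fun q => by
    have hz : ∀ Z : ℤ, (-727*Z^2 + 12332*Z + 12803) * (Z * (Z^3 + 10*Z^2 + Z + 4)) + (727*Z^3 + 7297*Z^2 + 1012*Z + 3072) * (Z^3 - 17*Z^2 - 17*Z + 1) = 3072 := fun Z => by ring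
    refine ⟨-q * (-727*(bt*q^2)^2 + 12332*(bt*q^2) + 12803), 2*(727*(bt*q^2)^3 + 7297*(bt*q^2)^2 + 1012*(bt*q^2) + 3072), ?_⟩
    simp [hA1, hB1, hrd, hs]
    linear_combination 2 * hz (bt*q^2)) (by omega) (by omega) (by omega) (nz_of_deg _ (by omega)) (nz_of_deg _ (by omega))
  obtain ⟨K2, Q2, h2⟩ := poly_ht A2 B2 6144 (by norm_num) (δ := 7) (fun q => by
    have hz : ∀ Z : ℤ, (1215*Z^3 - 20772*Z^2 - 18659*Z + 3072) * (4*Z^3 + Z^2 + 10*Z + 1) + (-4860*Z^2 - 747*Z - 12061) * (Z * (Z^3 - 17*Z^2 - 17*Z + 1)) = 3072 := fun Z => by ring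
    refine ⟨-(1215*(bt*q^2)^3 - 20772*(bt*q^2)^2 - 18659*(bt*q^2) + 3072), 2*bt*q*(-4860*(bt*q^2)^2 - 747*(bt*q^2) - 12061), ?_⟩
    simp [hA2, hB2, ht, hs]
    linear_combination 2 * hz (bt*q^2)) (by omega) (by omega) (by omega) (nz_of_deg _ (by omega)) (nz_of_deg _ (by omega))
  set R : ℤ[X] := 8*X^10 + 242*X^9 + 2376*X^8 + 8408*X^7 + 10544*X^6 + 22380*X^5 + 10544*X^4 + 8408*X^3 + 2376*X^2 + 242*X + 8 with hR
  set W : ℤ[X] := (X*r^2-s^2)^2*t*(t^2+X*s^2) - (t^2-X*s^2)^2*r*(X*r^2+s^2) with hW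
  have w1 : R.eval 0 = 8 := by simp [hR]
  have w2 : W.eval 0 = 120 := by simp [hW, hrd, hs, ht]
  have key : ∀ Z : ℤ, r.eval Z*t.eval Z*(Z*(r.eval Z)^2+(s.eval Z)^2)*((t.eval Z)^2+Z*(s.eval Z)^2) = (R.eval Z)^2 := by
    intro Z
    simp only [hrd, hs, ht, hR, eval_add, eval_sub, eval_mul, eval_pow, eval_X, eval_C, eval_neg, eval_one, eval_ofNat]
    ring
  have main : ∀ q : ℕ, 121 + Q1 ≤ q → _ := fun q hq => by
    have hqq : (121:ℤ) ≤ |bt * (q:ℤ)^2| := by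
      rw [abs_mul, abs_of_nonneg (by positivity : (0:ℤ) ≤ (q:ℤ)^2)]
      have : 1 ≤ |bt| := Int.one_le_abs hb
      have : (121:ℤ) ≤ q := by omega
      nlinarith
    have n1 := poly_ne R (by rw [w1]; norm_num) (z := bt * (q:ℤ)^2) (by rw [w1]; exact lt_of_lt_of_le (by norm_num) hqq)
    have n2 := poly_ne W (by rw [w2]; norm_num) (z := bt * (q:ℤ)^2) (by rw [w2]; exact lt_of_lt_of_le (by norm_num) hqq)
    have n3 := (h1 q (by omega)).1
    have n1' : ((R.eval (bt*(q:ℤ)^2) : ℤ):ℚ) ≠ 0 := by exact_mod_cast n1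
    have n2' : ((W.eval (bt*(q:ℤ)^2) : ℤ):ℚ) ≠ 0 := by exact_mod_cast n2
    have e3 : B1.eval (q:ℤ) = s.eval (bt*(q:ℤ)^2) := by simp [hB1]
    have n3' : ((s.eval (bt*(q:ℤ)^2) : ℤ):ℚ) ≠ 0 := by rw [e3] at n3; exact_mod_cast n3
    have hq0 : (q:ℚ) ≠ 0 := by
      have : q ≠ 0 := by omega
      exact_mod_cast this
    have k := key (bt*(q:ℤ)^2)
    have k' := congrArg (fun z : ℤ => (z:ℚ)) k
    simp only [hW, eval_add, eval_sub, eval_mul, eval_pow, eval_X] at n2'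
    push_cast at n2' k'
    exact alg3 (b := bt) (q := q) (r := ((r.eval (bt*(q:ℤ)^2) : ℤ):ℚ)) (t := ((t.eval (bt*(q:ℤ)^2) : ℤ):ℚ)) (s := ((s.eval (bt*(q:ℤ)^2) : ℤ):ℚ)) (R := ((R.eval (bt*(q:ℤ)^2) : ℤ):ℚ))
      (by exact_mod_cast hb) hq0 n3' n1' k' n2'
      (X1 := ((A1.eval (q:ℤ) : ℤ):ℚ)/((B1.eval (q:ℤ) : ℤ):ℚ)) (X2 := ((A2.eval (q:ℤ) : ℤ):ℚ)/((B2.eval (q:ℤ) : ℤ):ℚ))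
      (by rw [e3]; congr 1; simp only [hA1, eval_comp, eval_mul, eval_X, eval_C, eval_pow]; push_cast; ring)
      (by
        have : B2.eval (q:ℤ) = q * s.eval (bt*(q:ℤ)^2) := by
          simp only [hB2, eval_comp, eval_mul, eval_X, eval_C, eval_pow]; ring
        rw [this]; push_cast; congr 1
        simp only [hA2, eval_comp, eval_mul, eval_X, eval_C, eval_pow])
  have hc' : (ct:ℚ) = 0 := by exact_mod_cast hc
  obtain ⟨q, hq, he⟩ := famA hbt hct hf hr _ _ _
    (by norm_num : 0 < 7) (fun q hq => (h1 q hq).2) (fun q hq => (h2 q hq).2) (Q := 121 + Q1) (fun q hq => by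
      have := main q hq
      rw [hc']
      exact ⟨this.1, this.2.1⟩)
  rw [hc'] at he
  exact (main q hq).2.2 he

theorem case2 {a b c bt ct : ℤ} (hbt : bt = 9*b-3*a^2) (hct : ct = 27*c-9*a*b+2*a^3) (hf : DistinctRoots a b c)
    (hr : ∀ D : ℤ, D ≠ 0 → ¬ ∃ P : Fin (1+1) → (twist a b c D).Point, LinearIndependent ℤ P)
    (hb : bt = 0) (hc : ct ≠ 0) : False := by
  set r : ℤ[X] := -X^4 + 86*X^3 + 48*X^2 + 320*X + 1088 with hrd
  set s : ℤ[X] := 2*X^4 + 17*X^3 + 552*X^2 - 640*X - 448 with hs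
  set r2 : ℤ[X] := -X^5 - 95*X^4 + 224*X^3 + 5120*X^2 - 3200*X + 5120 with hr2
  set s2 : ℤ[X] := 8*X^5 + 76*X^4 + 2276*X^3 - 352*X^2 - 4352*X - 1792 with hs2
  have dr : r.natDegree = 4 := by rw [hrd]; compute_degree!
  have ds : s.natDegree = 4 := by rw [hs]; compute_degree!
  have dr2 : r2.natDegree = 5 := by rw [hr2]; compute_degree!
  have ds2 : s2.natDegree = 5 := by rw [hs2]; compute_degree!
  have hc2 : ct^2 ≠ 0 := pow_ne_zero 2 hc
  set A1 : ℤ[X] := C ct * r.comp (C (ct^2) * X^3) * X with hA1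
  set B1 : ℤ[X] := s.comp (C (ct^2) * X^3) with hB1
  set A2 : ℤ[X] := C ct * r2.comp (C (ct^2) * X^3) * X with hA2
  set B2 : ℤ[X] := s2.comp (C (ct^2) * X^3) with hB2
  have dB1 : B1.natDegree = 12 := by rw [hB1, deg_comp _ hc2, ds]
  have dB2 : B2.natDegree = 15 := by rw [hB2, deg_comp _ hc2, ds2]
  have dA1 : A1.natDegree = 13 := by
    have : (C ct * r.comp (C (ct^2) * X^3)).natDegree = 12 := by rw [natDegree_C_mul hc, deg_comp _ hc2, dr]
    rw [hA1, natDegree_mul_X (nz_of_deg _ (by omega)), this]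
  have dA2 : A2.natDegree = 16 := by
    have : (C ct * r2.comp (C (ct^2) * X^3)).natDegree = 15 := by rw [natDegree_C_mul hc, deg_comp _ hc2, dr2]
    rw [hA2, natDegree_mul_X (nz_of_deg _ (by omega)), this]
  obtain ⟨K1, Q1, h1⟩ := poly_ht A1 B1 1693052928 (by norm_num) (δ := 13) (fun q => by
    have hz : ∀ Z : ℤ, (7110*Z^3 + 58643*Z^2 + 1950712*Z - 2736640) * (Z * (-Z^4 + 86*Z^3 + 48*Z^2 + 320*Z + 1088)) + (3555*Z^4 - 306626*Z^3 - 91792*Z^2 - 1247360*Z - 3779136) * (2*Z^4 + 17*Z^3 + 552*Z^2 - 640*Z - 448) = 1693052928 := fun Z => by ring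
    refine ⟨ct*q^2 * (7110*(ct^2*q^3)^3 + 58643*(ct^2*q^3)^2 + 1950712*(ct^2*q^3) - 2736640), 3555*(ct^2*q^3)^4 - 306626*(ct^2*q^3)^3 - 91792*(ct^2*q^3)^2 - 1247360*(ct^2*q^3) - 3779136, ?_⟩
    rw [← hz (ct^2*q^3)]
    simp only [hA1, hB1, hrd, hs, eval_comp, eval_add, eval_sub, eval_mul, eval_pow, eval_X, eval_C, eval_neg, eval_ofNat]
    generalize hZ : ct^2*(q:ℤ)^3 = Z
    rw [← sub_eq_zero]
    have : ∀ x : ℤ, ct * (q:ℤ)^2 * x * (ct * (-Z ^ 4 + 86 * Z ^ 3 + 48 * Z ^ 2 + 320 * Z + 1088) * q) = x * (Z * (-Z ^ 4 + 86 * Z ^ 3 + 48 * Z ^ 2 + 320 * Z + 1088)) := fun x => by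
      rw [← hZ]; ring
    rw [this]; ring) (by omega) (by omega) (by omega) (nz_of_deg _ (by omega)) (nz_of_deg _ (by omega))
  obtain ⟨K2, Q2, h2⟩ := poly_ht A2 B2 548549148672 (by norm_num) (δ := 16) (fun q => by
    have hz : ∀ Z : ℤ, (374440*Z^4 + 3464164*Z^3 + 105685296*Z^2 - 42429260*Z - 186828608) * (Z * (-Z^5 - 95*Z^4 + 224*Z^3 + 5120*Z^2 - 3200*Z + 5120)) + (46805*Z^5 + 4434848*Z^4 - 11583789*Z^3 - 236537800*Z^2 + 209614016*Z - 306110016) * (8*Z^5 + 76*Z^4 + 2276*Z^3 - 352*Z^2 - 4352*Z - 1792) = 548549148672 := fun Z => by ring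
    refine ⟨ct*q^2 * (374440*(ct^2*q^3)^4 + 3464164*(ct^2*q^3)^3 + 105685296*(ct^2*q^3)^2 - 42429260*(ct^2*q^3) - 186828608), 46805*(ct^2*q^3)^5 + 4434848*(ct^2*q^3)^4 - 11583789*(ct^2*q^3)^3 - 236537800*(ct^2*q^3)^2 + 209614016*(ct^2*q^3) - 306110016, ?_⟩
    rw [← hz (ct^2*q^3)]
    simp only [hA2, hB2, hr2, hs2, eval_comp, eval_add, eval_sub, eval_mul, eval_pow, eval_X, eval_C, eval_neg, eval_ofNat]
    generalize hZ : ct^2*(q:ℤ)^3 = Z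
    rw [← sub_eq_zero]
    have : ∀ x : ℤ, ct * (q:ℤ)^2 * x * (ct * (-Z ^ 5 - 95 * Z ^ 4 + 224 * Z ^ 3 + 5120 * Z ^ 2 - 3200 * Z + 5120) * q) = x * (Z * (-Z ^ 5 - 95 * Z ^ 4 + 224 * Z ^ 3 + 5120 * Z ^ 2 - 3200 * Z + 5120)) := fun x => by
      rw [← hZ]; ring
    rw [this]; ring) (by omega) (by omega) (by omega) (nz_of_deg _ (by omega)) (nz_of_deg _ (by omega))
  set R : ℤ[X] := 4*X^19 - 950*X^18 + 58788*X^17 - 438168*X^16 - 42005568*X^15 - 781123266*X^14 - 16490994024*X^13 - 20588294640*X^12 - 242100255744*X^11 - 820240150528*X^10 - 1647762042880*X^9 + 13307810660352*X^8 - 29933165936640*X^7 - 4634614824960*X^6 + 30500733321216*X^5 + 18016779632640*X^4 + 32164892639232*X^3 - 2826927341568*X^2 - 7160113135616*X + 644513529856 with hR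
  have w1 : R.eval 0 = 644513529856 := by simp [hR]
  have key : ∀ Z : ℤ, (Z*(r.eval Z)^3+(s.eval Z)^3)*(Z*(r2.eval Z)^3+(s2.eval Z)^3)*s.eval Z * s2.eval Z = (R.eval Z)^2 := by
    intro Z
    simp only [hrd, hs, hr2, hs2, hR, eval_add, eval_sub, eval_mul, eval_pow, eval_X, eval_C, eval_neg, eval_one, eval_ofNat]
    ring
  have hb' : (bt:ℚ) = 0 := by exact_mod_cast hb
  refine famB hbt hct hf hr (fun q => ((A1.eval (q:ℤ) : ℤ):ℚ)/((B1.eval (q:ℤ) : ℤ):ℚ)) (fun q => ((A2.eval (q:ℤ) : ℤ):ℚ)/((B2.eval (q:ℤ) : ℤ):ℚ))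
    (fun q => (ct:ℚ) * ((R.eval (ct^2*(q:ℤ)^3) : ℤ):ℚ) / (((s.eval (ct^2*(q:ℤ)^3) : ℤ):ℚ) * ((s2.eval (ct^2*(q:ℤ)^3) : ℤ):ℚ))^2)
    (fun q hq => (h1 q hq).2) (fun q hq => (h2 q hq).2) (Q := 644513529857 + Q1 + Q2) (fun q hq => ?_)
  have hqq : (644513529857:ℤ) ≤ |ct^2 * (q:ℤ)^3| := by
    have h1 : (644513529857:ℤ) ≤ q := by omega
    have h2 : 1 ≤ ct^2 := by have := sq_nonneg ct; omega
    rw [abs_of_nonneg (by positivity)]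
    have h3 : (q:ℤ) ≤ (q:ℤ)^3 := le_self_pow₀ (by omega) (by norm_num)
    nlinarith
  have n1 := poly_ne R (by rw [w1]; norm_num) (z := ct^2 * (q:ℤ)^3) (by rw [w1]; exact lt_of_lt_of_le (by norm_num) hqq)
  have n3 := (h1 q (by omega)).1
  have n4 := (h2 q (by omega)).1
  have n1' : ((R.eval (ct^2*(q:ℤ)^3) : ℤ):ℚ) ≠ 0 := by exact_mod_cast n1
  have e3 : B1.eval (q:ℤ) = s.eval (ct^2*(q:ℤ)^3) := by simp only [hB1, eval_comp, eval_mul, eval_X, eval_C, eval_pow]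
  have e4 : B2.eval (q:ℤ) = s2.eval (ct^2*(q:ℤ)^3) := by simp only [hB2, eval_comp, eval_mul, eval_X, eval_C, eval_pow]
  rw [e3] at n3
  rw [e4] at n4
  have n3' : ((s.eval (ct^2*(q:ℤ)^3) : ℤ):ℚ) ≠ 0 := by exact_mod_cast n3
  have n4' : ((s2.eval (ct^2*(q:ℤ)^3) : ℤ):ℚ) ≠ 0 := by exact_mod_cast n4
  have hcq : (ct:ℚ) ≠ 0 := by exact_mod_cast hc
  have k := key (ct^2*(q:ℤ)^3)
  have k' := congrArg (fun z : ℤ => (z:ℚ)) k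
  push_cast at k'
  rw [hb']
  refine ⟨alg2 (q := q) n3' n4' k' ?_ ?_, ?_⟩
  · rw [e3]; congr 1; simp only [hA1, eval_comp, eval_mul, eval_X, eval_C, eval_pow]; push_cast; ring
  · rw [e4]; congr 1; simp only [hA2, eval_comp, eval_mul, eval_X, eval_C, eval_pow]; push_cast; ring
  · exact div_ne_zero (mul_ne_zero hcq n1') (pow_ne_zero 2 (mul_ne_zero n3' n4'))

theorem exists_rank2 {a b c : ℤ} (hf : DistinctRoots a b c) :
    ∃ D : ℤ, D ≠ 0 ∧ ∃ P : Fin 2 → (twist a b c D).Point, LinearIndependent ℤ P := by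
  by_contra hcon
  have hr : ∀ D : ℤ, D ≠ 0 → ¬ ∃ P : Fin (1+1) → (twist a b c D).Point, LinearIndependent ℤ P :=
    fun D hD hP => hcon ⟨D, hD, hP⟩
  by_cases hb : 9*b-3*a^2 = 0
  · by_cases hc : 27*c-9*a*b+2*a^3 = 0
    · have hd := disc_ne hf
      apply hd
      have h1 : 4*(9*b-3*a^2)^3 + 27 * (27*c-9*a*b+2*a^3)^2 = -729 * (a^2*b^2 - 4*b^3 - 4*a^3*c - 27*c^2 + 18*a*b*c) := by ring
      rw [hb, hc] at h1
      linarith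
    · exact case2 rfl rfl hf hr hb hc
  · by_cases hc : 27*c-9*a*b+2*a^3 = 0
    · exact case3 rfl rfl hf hr hb hc
    · exact case1 rfl rfl hf hr hb hc

end S8f

/-- **Corollary 14.** For `j > 0`, the following are equivalent:
(a) `rank E^{(D)}(ℚ) < 2j` for all nonzero `D`;
(b) `Q_E(j,k)` converges for some `k ≥ 1`;
(c) `Q_E(j,k)` converges for every `k ≥ 1`. -/
theorem rank_tfae_Q (a b c : ℤ) (hf : DistinctRoots a b c)
    (ω : (d d' : ℕ) → ZMod (d^2) → ℤ × ℤ) (hω : IsShortestChoice a b c ω)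
    (j : ℝ) (hj : 0 < j) :
    List.TFAE
      [RankBound a b c j,
       ∃ k : ℝ, 1 ≤ k ∧ QConv a b c j k ω,
       ∀ k : ℝ, 1 ≤ k → QConv a b c j k ω] := by
  have h13 : RankBound a b c j → ∀ k : ℝ, 1 ≤ k → QConv a b c j k ω := by
    intro h k hk
    have hj1 : 1 < j := by
      by_contra hc
      have hle : ⌈2*j⌉₊ ≤ 2 := Nat.ceil_le.2 (by push_cast; linarith)
      obtain ⟨D, hD, P, hP⟩ := exists_rank2 hf
      exact h D hD ⟨fun i => P (Fin.castLE hle i), hP.comp _ (Fin.castLE_injective hle)⟩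
    obtain ⟨r, hr⟩ : ∃ r, ⌈2*j⌉₊ = r + 1 :=
      Nat.exists_eq_succ_of_ne_zero (Nat.ceil_pos.2 (by linarith)).ne'
    have hlt : (r:ℝ) < 2*j := Nat.lt_ceil.1 (by omega)
    unfold RankBound at h
    rw [hr] at h
    exact conv_of_rank hf hω h (by linarith) hj1 hk
  have h32 : (∀ k : ℝ, 1 ≤ k → QConv a b c j k ω) → ∃ k : ℝ, 1 ≤ k ∧ QConv a b c j k ω :=
    fun h => ⟨1, le_rfl, h 1 le_rfl⟩
  have h21 : (∃ k : ℝ, 1 ≤ k ∧ QConv a b c j k ω) → RankBound a b c j := by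
    rintro ⟨k, hk, hQ⟩ D hD ⟨P, hP⟩
    exact rank_of_conv hf hω hj hk hQ (Nat.ceil_pos.2 (by linarith)) (Nat.le_ceil _) hD P hP
  tfae_have 1 → 3 := h13
  tfae_have 3 → 2 := h32
  tfae_have 2 → 1 := h21
  tfae_finish
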